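/- arXiv:1108.3181 — 5 statements merged into one kernel-verified Lean document; each statement's English description precedes it below -/
import Mathlib

section
/- Let λ > 0, h > 0 and set r^h := e^{−λh} ∈ (0,1). For 0 < a < ā define K^h(a|ā) := a·log a + (ā−a)·log(ā−a) − a·log r^h − (ā−a)·log(1−r^h). Fix a⁰ > 0 and define the sequence a^{h,0} := a⁰ and, for k ≥ 1, a^{h,k} := the unique minimiser of a ↦ K^h(a|a^{h,k−1}) over (0, a^{h,k−1}). Then a^{h,k} = a⁰·e^{−λkh} for every k ≥ 0, and consequently for every t ≥ 0 the value a^{h,⌊t/h⌋} converges, as h → 0⁺, to a⁰·e^{−λt}, the solution of ∂_t u = −λu with u(0) = a⁰. -/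
open Filter Topology Set

/-!
With `r = e^{-λh}`, `K^h(x|A)` equals `A log A` plus the relative entropy of the masses `(x, A - x)`
with respect to `(rA, (1 - r)A)`. That entropy is nonnegative and vanishes only at `x = rA`, so each
minimisation step multiplies the mass by `r`.
-/

open InformationTheory

/-- The functional `x ↦ K(x|A)`: the cost, up to an additive constant depending on `A`, that out of
a mass `A` of particles surviving independently with probability `r`, the mass `x` survives. It is
parametrised by `r` in place of `λ` and `h`, and is meaningful for `0 < r < 1` and `0 ≤ x ≤ A`. -/
noncomputable def survivalCost (r A x : ℝ) : ℝ :=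
  x * Real.log x + (A - x) * Real.log (A - x) - x * Real.log r - (A - x) * Real.log (1 - r)

lemma isMinOn_of_forall_ne_lt {α β : Type*} [Preorder β] {f : α → β} {s : Set α} {x : α}
    (h : ∀ y ∈ s, y ≠ x → f x < f y) : IsMinOn f s x := by
  refine isMinOn_iff.2 fun y hy => ?_
  obtain rfl | hne := eq_or_ne y x
  exacts [le_rfl, (h y hy hne).le]

lemma mul_klFun_div {q : ℝ} (hq : q ≠ 0) (x : ℝ) :
    q * klFun (x / q) = x * Real.log x - x * Real.log q - x + q := by
  rcases eq_or_ne x 0 with rfl | hx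
  · simp [klFun_zero]
  · rw [klFun_apply, Real.log_div hx hq]
    field_simp
    ring

lemma mul_klFun_div_nonneg {q x : ℝ} (hq : 0 ≤ q) (hx : 0 ≤ x) : 0 ≤ q * klFun (x / q) :=
  mul_nonneg hq (klFun_nonneg (div_nonneg hx hq))

lemma mul_klFun_div_eq_zero_iff {q x : ℝ} (hq : 0 < q) (hx : 0 ≤ x) :
    q * klFun (x / q) = 0 ↔ x = q := by
  rw [mul_eq_zero_iff_left hq.ne', klFun_eq_zero_iff (div_nonneg hx hq.le),
    div_eq_one_iff_eq hq.ne']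

namespace survivalCost

variable {r A x : ℝ}

lemma eq_mul_log_add_klFun (hr0 : r ≠ 0) (hr1 : r ≠ 1) (hA : A ≠ 0) (x : ℝ) :
    survivalCost r A x = A * Real.log A +
      (r * A * klFun (x / (r * A)) + (1 - r) * A * klFun ((A - x) / ((1 - r) * A))) := by
  have hs : 1 - r ≠ 0 := sub_ne_zero.2 hr1.symm
  rw [survivalCost, mul_klFun_div (mul_ne_zero hr0 hA), mul_klFun_div (mul_ne_zero hs hA),
    Real.log_mul hr0 hA, Real.log_mul hs hA]
  ring

lemma mul_log_le (hr : r ∈ Ioo 0 1) (hA : 0 < A) (hx : x ∈ Icc 0 A) :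
    A * Real.log A ≤ survivalCost r A x := by
  rw [eq_mul_log_add_klFun hr.1.ne' hr.2.ne hA.ne']
  exact le_add_of_nonneg_right <| add_nonneg
    (mul_klFun_div_nonneg (mul_pos hr.1 hA).le hx.1)
    (mul_klFun_div_nonneg (mul_pos (sub_pos.2 hr.2) hA).le (sub_nonneg.2 hx.2))

lemma eq_mul_log_iff (hr : r ∈ Ioo 0 1) (hA : 0 < A) (hx : x ∈ Icc 0 A) :
    survivalCost r A x = A * Real.log A ↔ x = r * A := by
  have hrA : 0 < r * A := mul_pos hr.1 hA
  have hsA : 0 < (1 - r) * A := mul_pos (sub_pos.2 hr.2) hA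
  have hAx : 0 ≤ A - x := sub_nonneg.2 hx.2
  rw [eq_mul_log_add_klFun hr.1.ne' hr.2.ne hA.ne', add_eq_left,
    add_eq_zero_iff_of_nonneg (mul_klFun_div_nonneg hrA.le hx.1)
      (mul_klFun_div_nonneg hsA.le hAx),
    mul_klFun_div_eq_zero_iff hrA hx.1, mul_klFun_div_eq_zero_iff hsA hAx, and_iff_left_of_imp]
  rintro rfl
  ring

lemma isMinOn_Ioo_iff (hr : r ∈ Ioo 0 1) (hx : x ∈ Ioo 0 A) :
    IsMinOn (survivalCost r A) (Ioo 0 A) x ↔ x = r * A := by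
  have hA : 0 < A := hx.1.trans hx.2
  have hrA : r * A ∈ Ioo 0 A := ⟨mul_pos hr.1 hA, mul_lt_of_lt_one_left hA hr.2⟩
  have hval : survivalCost r A (r * A) = A * Real.log A :=
    (eq_mul_log_iff hr hA (Ioo_subset_Icc_self hrA)).2 rfl
  have hbound {y : ℝ} (hy : y ∈ Ioo 0 A) : A * Real.log A ≤ survivalCost r A y :=
    mul_log_le hr hA (Ioo_subset_Icc_self hy)
  constructor
  · intro hmin
    exact (eq_mul_log_iff hr hA (Ioo_subset_Icc_self hx)).1
      (le_antisymm ((hmin hrA).trans_eq hval) (hbound hx))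
  · rintro rfl y hy
    exact hval.trans_le (hbound hy)

lemma eq_pow_mul_of_forall_isMinOn (hr : r ∈ Ioo 0 1) {u : ℕ → ℝ}
    (hmem : ∀ k, u (k + 1) ∈ Ioo 0 (u k))
    (hmin : ∀ k, IsMinOn (survivalCost r (u k)) (Ioo 0 (u k)) (u (k + 1))) (k : ℕ) :
    u k = r ^ k * u 0 := by
  induction k with
  | zero => simp
  | succ k ih => rw [(isMinOn_Ioo_iff hr (hmem k)).1 (hmin k), ih, pow_succ', mul_assoc]

end survivalCost

lemma tendsto_nat_floor_div_mul_nhdsGT_zero {R : Type*} [TopologicalSpace R] [Field R]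
    [LinearOrder R] [IsStrictOrderedRing R] [OrderTopology R] [FloorRing R] {t : R}
    (ht : 0 ≤ t) : Tendsto (fun h : R => (⌊t / h⌋₊ : R) * h) (𝓝[>] 0) (𝓝 t) := by
  simpa only [Function.comp_def, div_inv_eq_mul, ← div_eq_mul_inv] using
    (tendsto_nat_floor_mul_div_atTop ht).comp tendsto_inv_nhdsGT_zero

/-- For `λ, h > 0` and `r^h = e^{-λh}`, the iterative minimisation of
`K^h(a|ā) = a log a + (ā−a) log(ā−a) − a log r^h − (ā−a) log(1−r^h)` over `(0, ā)`
produces `a^{h,k} = a⁰ e^{-λkh}`, and the interpolant `a^{h,⌊t/h⌋}` converges to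
`a⁰ e^{-λt}` as `h → 0⁺`. -/
theorem stmt0 (lam a0 : ℝ) (hlam : 0 < lam) (ha0 : 0 < a0)
    (K : ℝ → ℝ → ℝ → ℝ)
    (hK : ∀ h abar a, K h abar a =
      a * Real.log a + (abar - a) * Real.log (abar - a)
        - a * Real.log (Real.exp (-(lam * h)))
        - (abar - a) * Real.log (1 - Real.exp (-(lam * h))))
    (a : ℝ → ℕ → ℝ)
    (ha0' : ∀ h, a h 0 = a0)
    (hmin : ∀ h, 0 < h → ∀ k : ℕ,
      a h (k + 1) ∈ Set.Ioo (0 : ℝ) (a h k) ∧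
      ∀ b ∈ Set.Ioo (0 : ℝ) (a h k), b ≠ a h (k + 1) →
        K h (a h k) (a h (k + 1)) < K h (a h k) b) :
    (∀ h, 0 < h → ∀ k : ℕ, a h k = a0 * Real.exp (-(lam * k * h))) ∧
    (∀ t : ℝ, 0 ≤ t →
      Tendsto (fun h : ℝ => a h ⌊t / h⌋₊) (𝓝[>] (0 : ℝ))
        (𝓝 (a0 * Real.exp (-(lam * t))))) := by
  have hexact : ∀ h, 0 < h → ∀ k : ℕ, a h k = a0 * Real.exp (-(lam * k * h)) := by
    intro h hh k
    have hr : Real.exp (-(lam * h)) ∈ Ioo 0 1 :=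
      ⟨Real.exp_pos _, Real.exp_lt_one_iff.2 (neg_lt_zero.2 (mul_pos hlam hh))⟩
    have hKcost (A : ℝ) : K h A = survivalCost (Real.exp (-(lam * h))) A := funext (hK h A)
    have hisMin (j : ℕ) :
        IsMinOn (survivalCost (Real.exp (-(lam * h))) (a h j)) (Ioo 0 (a h j)) (a h (j + 1)) := by
      rw [← hKcost]
      exact isMinOn_of_forall_ne_lt (hmin h hh j).2
    rw [survivalCost.eq_pow_mul_of_forall_isMinOn hr (fun j => (hmin h hh j).1) hisMin k, ha0',
      ← Real.exp_nat_mul, mul_comm]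
    ring_nf
  refine ⟨hexact, fun t ht => ?_⟩
  have hlim : Tendsto (fun h : ℝ => a0 * Real.exp (-(lam * (⌊t / h⌋₊ * h)))) (𝓝[>] 0)
      (𝓝 (a0 * Real.exp (-(lam * t)))) :=
    ((tendsto_nat_floor_div_mul_nhdsGT_zero ht).const_mul lam).neg.rexp.const_mul a0
  refine hlim.congr' ?_
  filter_upwards [self_mem_nhdsWithin] with h hh
  rw [hexact h hh, mul_assoc]
end

section
/- Let (ρ^h) be a sequence in P₂^S(ℝ^d) and ρ ∈ P₂^S(ℝ^d) such that d(ρ^h, ρ) → 0 in the Wasserstein distance and S(ρ^h) → S(ρ). Then ρ^h and ρ are absolutely continuous with respect to Lebesgue measure and can be identified with their densities in L¹(ℝ^d), and there is a subsequence along which ρ^h → ρ strongly in L¹(ℝ^d) and ρ^h·log ρ^h → ρ·log ρ strongly in L¹(ℝ^d). -/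
open MeasureTheory Filter Topology Set
open scoped ENNReal NNReal Classical

noncomputable section

abbrev Eu (d : ℕ) := EuclideanSpace ℝ (Fin d)

/-- The Lebesgue density of a measure on `ℝ^d`. -/
noncomputable def dens {d : ℕ} (ρ : Measure (Eu d)) (x : Eu d) : ℝ :=
  (ρ.rnDeriv volume x).toReal

/-- The (negative Gibbs–Boltzmann) entropy `S(ρ) = ∫ f log f` if `ρ` has Lebesgue
density `f` (with integrable `f log f`), and `+∞` otherwise. -/
noncomputable def entS {d : ℕ} (ρ : Measure (Eu d)) : EReal :=
  if ρ ≪ volume ∧ Integrable (fun x => dens ρ x * Real.log (dens ρ x)) volume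
  then (((∫ x, dens ρ x * Real.log (dens ρ x)) : ℝ) : EReal) else ⊤

/-- Transport plans between two measures of equal mass. -/
def couplings {d : ℕ} (μ ν : Measure (Eu d)) : Set (Measure (Eu d × Eu d)) :=
  {q | q.map Prod.fst = μ ∧ q.map Prod.snd = ν}

/-- The squared Wasserstein distance. -/
noncomputable def Wsq {d : ℕ} (μ ν : Measure (Eu d)) : ℝ≥0∞ :=
  ⨅ q ∈ couplings μ ν, ∫⁻ p : Eu d × Eu d, edist p.1 p.2 ^ 2 ∂q

/-- `P₂^S(ℝ^d)`: probability measures with finite second moment and finite entropy. -/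
def memP2S {d : ℕ} (ρ : Measure (Eu d)) : Prop :=
  IsProbabilityMeasure ρ ∧ (∫⁻ x, (‖x‖₊ : ℝ≥0∞) ^ 2 ∂ρ) < ⊤ ∧ entS ρ ≠ ⊤

/-! The Gaussian weight `γ = exp (-‖x‖ ^ 2) dx` is finite, and for `u = dρ/dγ` one has
`∫ u log u dγ = S(ρ) + ∫ ‖x‖ ^ 2 dρ`. Wasserstein convergence gives weak convergence together with
convergence of second moments, so the entropies relative to `γ` converge as well.

For `t` bounded and continuous, the Fenchel–Young gap `∫ (u log u - u - u t + exp t) dγ` is the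
relative entropy plus a weakly continuous functional of `u`, hence passes to the limit. It
dominates `∫ (√u - exp (t / 2)) ^ 2 dγ`, and for the limit density it is arbitrarily small when `t`
approximates `log u`. Therefore the square roots of the densities converge in `L²(γ)`, the
densities converge in measure, and Scheffé's lemma, applied to `u`, `u log u` and `u ‖x‖ ^ 2`,
upgrades the convergence of the integrals to convergence in `L¹(γ)`. -/

lemma eLpNorm_two_eq_ofReal_sqrt_integral {α E : Type*} [MeasurableSpace α] {μ : Measure α}
    [NormedAddCommGroup E] {f : α → E} (hf : MemLp f 2 μ) :
    eLpNorm f 2 μ = ENNReal.ofReal √(∫ x, ‖f x‖ ^ 2 ∂μ) := by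
  rw [hf.eLpNorm_eq_integral_rpow_norm two_ne_zero ENNReal.ofNat_ne_top, Real.sqrt_eq_rpow]
  simp

section Scheffe

variable {α ι : Type*} [MeasurableSpace α] {μ : Measure α} {l : Filter ι} {f : ι → α → ℝ}
  {f₀ : α → ℝ}

lemma tendsto_integral_abs_sub_of_add {g : ι → α → ℝ} {g₀ : α → ℝ}
    (hf : ∀ i, Integrable (f i) μ) (hf₀ : Integrable f₀ μ) (hg : ∀ i, Integrable (g i) μ)
    (hg₀ : Integrable g₀ μ)
    (hadd : Tendsto (fun i => ∫ x, |(f i x + g i x) - (f₀ x + g₀ x)| ∂μ) l (𝓝 0))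
    (hsub : Tendsto (fun i => ∫ x, |g i x - g₀ x| ∂μ) l (𝓝 0)) :
    Tendsto (fun i => ∫ x, |f i x - f₀ x| ∂μ) l (𝓝 0) := by
  refine squeeze_zero (fun i => integral_nonneg fun x => abs_nonneg _) (fun i => ?_)
    (by simpa only [add_zero] using hadd.add hsub)
  have haddint : Integrable (fun x => |(f i x + g i x) - (f₀ x + g₀ x)|) μ :=
    (((hf i).add (hg i)).sub (hf₀.add hg₀)).abs
  have hsubint : Integrable (fun x => |g i x - g₀ x|) μ := ((hg i).sub hg₀).abs
  rw [← integral_add haddint hsubint]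
  refine integral_mono ((hf i).sub hf₀).abs (haddint.add hsubint) fun x => ?_
  calc |f i x - f₀ x| = |(f i x + g i x) - (f₀ x + g₀ x) - (g i x - g₀ x)| := by congr 1; ring
    _ ≤ |(f i x + g i x) - (f₀ x + g₀ x)| + |g i x - g₀ x| := abs_sub _ _

variable [l.IsCountablyGenerated] {g : α → ℝ}

lemma tendsto_integral_abs_sub_of_ae (hf : ∀ i, Integrable (f i) μ) (hf₀ : Integrable f₀ μ)
    (hg : Integrable g μ) (hgf : ∀ i, ∀ᵐ x ∂μ, g x ≤ f i x)
    (hlim : ∀ᵐ x ∂μ, Tendsto (fun i => f i x) l (𝓝 (f₀ x)))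
    (hint : Tendsto (fun i => ∫ x, f i x ∂μ) l (𝓝 (∫ x, f₀ x ∂μ))) :
    Tendsto (fun i => ∫ x, |f i x - f₀ x| ∂μ) l (𝓝 0) := by
  have hpos : ∀ i, Integrable (fun x => max (f₀ x - f i x) 0) μ := fun i =>
    (hf₀.sub (hf i)).pos_part
  have hsplit : ∀ i, ∫ x, |f i x - f₀ x| ∂μ =
      (∫ x, f i x ∂μ) - (∫ x, f₀ x ∂μ) + 2 * ∫ x, max (f₀ x - f i x) 0 ∂μ := fun i => by
    rw [← integral_sub (hf i) hf₀, ← integral_const_mul,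
      ← integral_add (f := fun x => f i x - f₀ x) ((hf i).sub hf₀) ((hpos i).const_mul 2)]
    congr with x
    rcases le_total (f₀ x) (f i x) with h | h
    · rw [abs_of_nonneg (by linarith), max_eq_right (by linarith)]; ring
    · rw [abs_of_nonpos (by linarith), max_eq_left (by linarith)]; ring
  have hposlim : Tendsto (fun i => ∫ x, max (f₀ x - f i x) 0 ∂μ) l (𝓝 (∫ _, (0 : ℝ) ∂μ)) := by
    refine tendsto_integral_filter_of_dominated_convergence (fun x => |f₀ x - g x|)
      (.of_forall fun i => (hpos i).aestronglyMeasurable) (.of_forall fun i => ?_)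
      (hf₀.sub hg).abs ?_
    · filter_upwards [hgf i] with x hx
      rw [Real.norm_of_nonneg (le_max_right _ _)]
      exact max_le ((sub_le_sub_left hx _).trans (le_abs_self _)) (abs_nonneg _)
    · filter_upwards [hlim] with x hx
      simpa using (hx.const_sub (f₀ x)).max (tendsto_const_nhds (x := (0 : ℝ)))
  simp_rw [hsplit]
  simpa using (hint.sub_const (∫ x, f₀ x ∂μ)).add (hposlim.const_mul 2)

theorem tendsto_integral_abs_sub_of_tendstoInMeasure (hf : ∀ i, Integrable (f i) μ)
    (hf₀ : Integrable f₀ μ) (hg : Integrable g μ) (hgf : ∀ i, ∀ᵐ x ∂μ, g x ≤ f i x)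
    (hlim : TendstoInMeasure μ f l f₀)
    (hint : Tendsto (fun i => ∫ x, f i x ∂μ) l (𝓝 (∫ x, f₀ x ∂μ))) :
    Tendsto (fun i => ∫ x, |f i x - f₀ x| ∂μ) l (𝓝 0) := by
  refine tendsto_of_subseq_tendsto fun ns hns => ?_
  obtain ⟨ms, hms, hae⟩ := (hlim.comp hns).exists_seq_tendsto_ae
  exact ⟨ms, tendsto_integral_abs_sub_of_ae (fun n => hf (ns (ms n))) hf₀ hg
    (fun n => hgf (ns (ms n))) hae (hint.comp (hns.comp hms.tendsto_atTop))⟩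

lemma tendstoInMeasure_comp {E F : Type*} [PseudoEMetricSpace E] [PseudoEMetricSpace F]
    [IsFiniteMeasure μ] {u : ι → α → E} {u₀ : α → E} {Φ : α → E → F}
    (hΦ : ∀ x, Continuous (Φ x)) (hmeas : ∀ i, AEStronglyMeasurable (fun x => Φ x (u i x)) μ)
    (hu : TendstoInMeasure μ u l u₀) :
    TendstoInMeasure μ (fun i x => Φ x (u i x)) l (fun x => Φ x (u₀ x)) := by
  intro ε hε
  refine tendsto_of_subseq_tendsto fun ns hns => ?_
  obtain ⟨ms, -, hae⟩ := (hu.comp hns).exists_seq_tendsto_ae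
  have hΦae : ∀ᵐ x ∂μ, Tendsto (fun n => Φ x (u (ns (ms n)) x)) atTop (𝓝 (Φ x (u₀ x))) :=
    hae.mono fun x hx => ((hΦ x).tendsto _).comp hx
  exact ⟨ms, tendstoInMeasure_of_tendsto_ae (fun n => hmeas (ns (ms n))) hΦae ε hε⟩

lemma tendsto_integral_abs_comp_sub [IsFiniteMeasure μ] {u : ι → α → ℝ} {u₀ : α → ℝ}
    {Φ : α → ℝ → ℝ} (hΦ : ∀ x, Continuous (Φ x)) (hu : TendstoInMeasure μ u l u₀)
    (hf : ∀ i, Integrable (fun x => Φ x (u i x)) μ) (hf₀ : Integrable (fun x => Φ x (u₀ x)) μ)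
    {c : ℝ} (hc : ∀ i x, c ≤ Φ x (u i x))
    (hint : Tendsto (fun i => ∫ x, Φ x (u i x) ∂μ) l (𝓝 (∫ x, Φ x (u₀ x) ∂μ))) :
    Tendsto (fun i => ∫ x, |Φ x (u i x) - Φ x (u₀ x)| ∂μ) l (𝓝 0) :=
  tendsto_integral_abs_sub_of_tendstoInMeasure hf hf₀ (integrable_const c)
    (fun i => .of_forall (hc i))
    (tendstoInMeasure_comp hΦ (fun i => (hf i).aestronglyMeasurable) hu) hint

end Scheffe

section YoungGap

open Real

/-- The gap in the Fenchel–Young inequality `a * t ≤ (a * log a - a) + exp t`, that is, the Bregman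
divergence of `a ↦ a * log a` between `a` and `exp t`. It quantifies the strict convexity of the
entropy. -/
def youngGap (a t : ℝ) : ℝ := a * log a - a - a * t + exp t

lemma sq_sqrt_sub_exp_half_le_youngGap {a : ℝ} (ha : 0 ≤ a) (t : ℝ) :
    (√a - exp (t / 2)) ^ 2 ≤ youngGap a t := by
  have hexp : exp (t / 2) ^ 2 = exp t := by rw [← exp_nat_mul]; congr 1; push_cast; ring
  rcases ha.eq_or_lt with rfl | ha
  · simp [youngGap, hexp]
  · have hlog : log (exp (t / 2) / √a) = t / 2 - log a / 2 := by
      rw [log_div (exp_pos _).ne' (sqrt_pos.2 ha).ne', log_exp, log_sqrt ha.le]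
    have hle : a * (t / 2 - log a / 2) ≤ √a * exp (t / 2) - a :=
      calc a * (t / 2 - log a / 2) ≤ a * (exp (t / 2) / √a - 1) := by
            rw [← hlog]; gcongr; exact log_le_sub_one_of_pos (by positivity)
        _ = √a * exp (t / 2) - a := by
            field_simp; linear_combination -exp (t / 2) * mul_self_sqrt ha.le
    rw [sub_sq, sq_sqrt ha.le, hexp, youngGap]
    linarith

lemma youngGap_nonneg {a : ℝ} (ha : 0 ≤ a) (t : ℝ) : 0 ≤ youngGap a t :=
  (sq_nonneg _).trans (sq_sqrt_sub_exp_half_le_youngGap ha t)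

lemma neg_one_le_mul_log {a : ℝ} (ha : 0 ≤ a) : -1 ≤ a * log a := by
  have hgap := youngGap_nonneg ha 0
  simp only [youngGap, mul_zero, sub_zero, exp_zero] at hgap
  linarith

lemma sq_sqrt_sub_sqrt_le_youngGap {a b : ℝ} (ha : 0 ≤ a) (hb : 0 ≤ b) (t : ℝ) :
    (√a - √b) ^ 2 ≤ 2 * youngGap a t + 2 * youngGap b t := by
  nlinarith [sq_nonneg (√a - exp (t / 2) + (√b - exp (t / 2))),
    sq_sqrt_sub_exp_half_le_youngGap ha t, sq_sqrt_sub_exp_half_le_youngGap hb t]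

lemma continuous_youngGap (a : ℝ) : Continuous (youngGap a) := by unfold youngGap; fun_prop

lemma abs_youngGap_le {a t M : ℝ} (ht : |t| ≤ M) :
    |youngGap a t| ≤ |a * log a| + |a| + M * |a| + exp M := by
  have hat : |a * t| ≤ M * |a| := by rw [abs_mul, mul_comm]; gcongr
  have hexp : |exp t| ≤ exp M := by rw [abs_exp]; gcongr; exact (le_abs_self t).trans ht
  have h₁ := abs_add_le (a * log a - a - a * t) (exp t)
  have h₂ := abs_sub (a * log a - a) (a * t)
  have h₃ := abs_sub (a * log a) a
  unfold youngGap
  linarith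

/-- The logarithm truncated to `[-M, M]`; unlike `Real.log` it is continuous, with value `-M`
at `0`. -/
def truncLog (M a : ℝ) : ℝ := log (max (exp (-M)) (min (exp M) a))

lemma continuous_truncLog (M : ℝ) : Continuous (truncLog M) :=
  Continuous.log (by fun_prop) fun _ => ((exp_pos _).trans_le (le_max_left _ _)).ne'

lemma exp_truncLog (M a : ℝ) : exp (truncLog M a) = max (exp (-M)) (min (exp M) a) :=
  exp_log ((exp_pos _).trans_le (le_max_left _ _))

lemma abs_truncLog_le {M : ℝ} (hM : 0 ≤ M) (a : ℝ) : |truncLog M a| ≤ M := by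
  rw [abs_le, ← exp_le_exp, ← exp_le_exp (y := M), exp_truncLog]
  exact ⟨le_max_left _ _, max_le (exp_le_exp.2 (by linarith)) (min_le_left _ _)⟩

lemma youngGap_truncLog_le {M : ℝ} (hM : 0 ≤ M) (a : ℝ) :
    youngGap a (truncLog M a) ≤ a * log a - a + 1 := by
  set t := truncLog M a
  have hexp : exp t = max (exp (-M)) (min (exp M) a) := exp_truncLog M a
  -- Truncation moves `a` towards `1`, so `a - exp t` and `t` have the same sign.
  have hsign : exp t * t ≤ a * t := by
    rcases le_total (exp t) a with h | h
    · rcases le_total (exp M) a with hMa | hMa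
      · have : M ≤ t := exp_le_exp.1 (by rw [hexp]; exact le_max_of_le_right (le_min le_rfl hMa))
        exact mul_le_mul_of_nonneg_right h (hM.trans this)
      · rw [h.antisymm (by rw [hexp, min_eq_right hMa]; exact le_max_right _ _)]
    · rcases le_total a (exp (-M)) with hMa | hMa
      · have : t ≤ -M :=
          exp_le_exp.1 (by rw [hexp]; exact max_le le_rfl ((min_le_right _ _).trans hMa))
        exact mul_le_mul_of_nonpos_right h (by linarith)
      · rw [h.antisymm (by rw [hexp]; exact max_le hMa (min_le_right _ _))]
  have hconv : exp t - exp t * t ≤ 1 := by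
    have := mul_le_mul_of_nonneg_left (add_one_le_exp (-t)) (exp_pos t).le
    rw [← exp_add, add_neg_cancel, exp_zero] at this
    linarith
  unfold youngGap
  linarith

lemma tendsto_youngGap_truncLog {a : ℝ} (ha : 0 ≤ a) :
    Tendsto (fun M => youngGap a (truncLog M a)) atTop (𝓝 0) := by
  rcases ha.eq_or_lt with rfl | ha
  · have : ∀ M, youngGap 0 (truncLog M 0) = exp (-M) := fun M => by
      simp [youngGap, exp_truncLog, (exp_pos _).le]
    simpa only [this] using tendsto_exp_neg_atTop_nhds_zero
  · refine tendsto_const_nhds.congr' ?_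
    filter_upwards [eventually_ge_atTop |log a|] with M hM
    have hM := abs_le.1 hM
    have : truncLog M a = log a := by
      rw [truncLog, min_eq_right ((log_le_iff_le_exp ha).1 hM.2),
        max_eq_right ((le_log_iff_exp_le ha).1 hM.1)]
    rw [this, youngGap, exp_log ha]; ring

end YoungGap

section EntropyConvergence

open BoundedContinuousFunction

lemma exists_seq_boundedContinuous_tendsto_ae {X E : Type*} [TopologicalSpace X] [NormalSpace X]
    [MeasurableSpace X] [BorelSpace X] [NormedAddCommGroup E] [NormedSpace ℝ E] {μ : Measure X}
    [μ.WeaklyRegular] {f : X → E} (hf : Integrable f μ) :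
    ∃ φ : ℕ → X →ᵇ E, ∀ᵐ x ∂μ, Tendsto (fun n => φ n x) atTop (𝓝 (f x)) := by
  have happrox : ∀ n : ℕ, ∃ φ : X →ᵇ E,
      eLpNorm (f - ⇑φ) 1 μ ≤ ((n : ℝ≥0∞) + 1)⁻¹ ∧ MemLp φ 1 μ := fun n =>
    (memLp_one_iff_integrable.2 hf).exists_boundedContinuous_eLpNorm_sub_le ENNReal.one_ne_top
      (by simp)
  choose φ hφ hφint using happrox
  have hlim : Tendsto (fun n => eLpNorm (⇑(φ n) - f) 1 μ) atTop (𝓝 0) := by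
    refine tendsto_of_tendsto_of_tendsto_of_le_of_le tendsto_const_nhds ?_ (fun _ => zero_le)
      (fun n => (eLpNorm_sub_comm _ _ _ _).trans_le (hφ n))
    exact_mod_cast ENNReal.tendsto_inv_nat_nhds_zero.comp (tendsto_add_atTop_nat 1)
  obtain ⟨ns, -, hae⟩ := (tendstoInMeasure_of_tendsto_eLpNorm one_ne_zero
    (fun n => (hφint n).1) hf.1 hlim).exists_seq_tendsto_ae
  exact ⟨fun n => φ (ns n), hae⟩

variable {X : Type*} [MeasurableSpace X] {γ : Measure X} [IsFiniteMeasure γ]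

lemma integrable_youngGap {u t : X → ℝ} (hu : Integrable u γ)
    (hulog : Integrable (fun x => u x * Real.log (u x)) γ) (ht : AEStronglyMeasurable t γ) {M : ℝ}
    (htM : ∀ x, |t x| ≤ M) : Integrable (fun x => youngGap (u x) (t x)) γ := by
  refine .mono' (g := fun x => |u x * Real.log (u x)| + |u x| + M * |u x| + Real.exp M)
    (((hulog.abs.add hu.abs).add (hu.abs.const_mul M)).add (integrable_const _)) ?_
    (.of_forall fun x => abs_youngGap_le (htM x))
  exact ((hulog.1.sub hu.1).sub (hu.1.mul ht)).add
    (Real.continuous_exp.comp_aestronglyMeasurable ht)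

lemma tendsto_integral_youngGap_truncLog {u : X → ℝ} (hu₀ : ∀ x, 0 ≤ u x) (hu : Integrable u γ)
    (hulog : Integrable (fun x => u x * Real.log (u x)) γ) :
    Tendsto (fun M => ∫ x, youngGap (u x) (truncLog M (u x)) ∂γ) atTop (𝓝 0) := by
  have hmeas : ∀ M, AEStronglyMeasurable (fun x => truncLog M (u x)) γ := fun M =>
    (continuous_truncLog M).comp_aestronglyMeasurable hu.1
  rw [← integral_zero X ℝ (μ := γ)]
  refine tendsto_integral_filter_of_dominated_convergence
    (fun x => u x * Real.log (u x) - u x + 1) ?_ ?_ ((hulog.sub hu).add (integrable_const 1))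
    (.of_forall fun x => tendsto_youngGap_truncLog (hu₀ x))
  · filter_upwards [eventually_ge_atTop 0] with M hM
    exact (integrable_youngGap hu hulog (hmeas M) fun x => abs_truncLog_le hM _).1
  · filter_upwards [eventually_ge_atTop 0] with M hM
    filter_upwards with x
    rw [Real.norm_of_nonneg (youngGap_nonneg (hu₀ x) _)]
    exact youngGap_truncLog_le hM _

variable [TopologicalSpace X]

lemma integral_youngGap [OpensMeasurableSpace X] {u : X → ℝ} (hu : Integrable u γ)
    (hulog : Integrable (fun x => u x * Real.log (u x)) γ) (t : X →ᵇ ℝ) :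
    ∫ x, youngGap (u x) (t x) ∂γ = (∫ x, u x * Real.log (u x) ∂γ) - (∫ x, u x ∂γ)
      - (∫ x, u x * t x ∂γ) + ∫ x, Real.exp (t x) ∂γ := by
  have hut : Integrable (fun x => u x * t x) γ :=
    hu.mul_bdd t.continuous.aestronglyMeasurable (.of_forall t.norm_coe_le_norm)
  have hexp : Integrable (fun x => Real.exp (t x)) γ := by
    refine .of_bound (by fun_prop) (Real.exp ‖t‖) (.of_forall fun x => ?_)
    rw [Real.norm_of_nonneg (Real.exp_pos _).le]
    exact Real.exp_le_exp.2 ((le_abs_self _).trans (t.norm_coe_le_norm x))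
  have hsub : Integrable (fun x => u x * Real.log (u x) - u x) γ := hulog.sub hu
  have hsub' : Integrable (fun x => u x * Real.log (u x) - u x - u x * t x) γ := hsub.sub hut
  unfold youngGap
  rw [integral_add hsub' hexp, integral_sub hsub hut, integral_sub hulog hu]

lemma exists_boundedContinuous_integral_youngGap_lt [NormalSpace X] [BorelSpace X]
    [γ.WeaklyRegular] {u : X → ℝ} (hu₀ : ∀ x, 0 ≤ u x) (hu : Integrable u γ)
    (hulog : Integrable (fun x => u x * Real.log (u x)) γ) {ε : ℝ} (hε : 0 < ε) :
    ∃ t : X →ᵇ ℝ, ∫ x, youngGap (u x) (t x) ∂γ < ε := by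
  obtain ⟨M, hMε, hM⟩ := (((tendsto_integral_youngGap_truncLog hu₀ hu hulog).eventually_lt_const
    hε).and (eventually_ge_atTop 0)).exists
  obtain ⟨φ, hφ⟩ := exists_seq_boundedContinuous_tendsto_ae hu
  let t : ℕ → X →ᵇ ℝ := fun n => .ofNormedAddCommGroup (fun x => truncLog M (φ n x))
    ((continuous_truncLog M).comp (φ n).continuous) M fun x => abs_truncLog_le hM _
  have ht : ∀ n x, |t n x| ≤ M := fun n x => abs_truncLog_le hM _
  have hlim : Tendsto (fun n => ∫ x, youngGap (u x) (t n x) ∂γ) atTop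
      (𝓝 (∫ x, youngGap (u x) (truncLog M (u x)) ∂γ)) := by
    refine tendsto_integral_of_dominated_convergence
      (fun x => |u x * Real.log (u x)| + |u x| + M * |u x| + Real.exp M)
      (fun n => (integrable_youngGap hu hulog (t n).continuous.aestronglyMeasurable (ht n)).1)
      (((hulog.abs.add hu.abs).add (hu.abs.const_mul M)).add (integrable_const _))
      (fun n => .of_forall fun x => abs_youngGap_le (ht n x)) ?_
    filter_upwards [hφ] with x hx
    exact ((continuous_youngGap _).tendsto _).comp (((continuous_truncLog M).tendsto _).comp hx)
  obtain ⟨n, hn⟩ := (hlim.eventually_lt_const hMε).exists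
  exact ⟨t n, hn⟩

variable [NormalSpace X] [BorelSpace X] [γ.WeaklyRegular] {ι : Type*} {l : Filter ι}
  {u : ι → X → ℝ} {u₀ : X → ℝ}

lemma tendsto_integral_sq_sqrt_sub_sqrt_of_tendsto_integral_mul_log
    (hpos : ∀ i x, 0 ≤ u i x) (hpos₀ : ∀ x, 0 ≤ u₀ x) (hint : ∀ i, Integrable (u i) γ)
    (hint₀ : Integrable u₀ γ)
    (hlog : ∀ i, Integrable (fun x => u i x * Real.log (u i x)) γ)
    (hlog₀ : Integrable (fun x => u₀ x * Real.log (u₀ x)) γ)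
    (hweak : ∀ t : X →ᵇ ℝ,
      Tendsto (fun i => ∫ x, u i x * t x ∂γ) l (𝓝 (∫ x, u₀ x * t x ∂γ)))
    (hent : Tendsto (fun i => ∫ x, u i x * Real.log (u i x) ∂γ) l
      (𝓝 (∫ x, u₀ x * Real.log (u₀ x) ∂γ))) :
    Tendsto (fun i => ∫ x, (√(u i x) - √(u₀ x)) ^ 2 ∂γ) l (𝓝 0) := by
  have hmass : Tendsto (fun i => ∫ x, u i x ∂γ) l (𝓝 (∫ x, u₀ x ∂γ)) := by
    simpa using hweak (const X 1)
  have hgap : ∀ t : X →ᵇ ℝ, Tendsto (fun i => ∫ x, youngGap (u i x) (t x) ∂γ) l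
      (𝓝 (∫ x, youngGap (u₀ x) (t x) ∂γ)) := fun t => by
    simp_rw [integral_youngGap hint₀ hlog₀, integral_youngGap (hint _) (hlog _)]
    exact ((hent.sub hmass).sub (hweak t)).add_const _
  have hgapint : ∀ {v : X → ℝ}, Integrable v γ → Integrable (fun x => v x * Real.log (v x)) γ →
      ∀ t : X →ᵇ ℝ, Integrable (fun x => youngGap (v x) (t x)) γ := fun hv hvlog t =>
    integrable_youngGap hv hvlog t.continuous.aestronglyMeasurable t.norm_coe_le_norm
  refine tendsto_order.2 ⟨fun a ha => .of_forall fun i =>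
    ha.trans_le (integral_nonneg fun x => sq_nonneg _), fun ε hε => ?_⟩
  obtain ⟨t, ht⟩ := exists_boundedContinuous_integral_youngGap_lt hpos₀ hint₀ hlog₀
    (show 0 < ε / 4 by positivity)
  filter_upwards [(hgap t).eventually_lt_const ht] with i hi
  calc ∫ x, (√(u i x) - √(u₀ x)) ^ 2 ∂γ
      ≤ ∫ x, (2 * youngGap (u i x) (t x) + 2 * youngGap (u₀ x) (t x)) ∂γ :=
        integral_mono_of_nonneg (.of_forall fun x => sq_nonneg _)
          (((hgapint (hint i) (hlog i) t).const_mul 2).add ((hgapint hint₀ hlog₀ t).const_mul 2))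
          (.of_forall fun x => sq_sqrt_sub_sqrt_le_youngGap (hpos i x) (hpos₀ x) (t x))
    _ = 2 * ∫ x, youngGap (u i x) (t x) ∂γ + 2 * ∫ x, youngGap (u₀ x) (t x) ∂γ := by
        rw [integral_add ((hgapint (hint i) (hlog i) t).const_mul 2)
          ((hgapint hint₀ hlog₀ t).const_mul 2), integral_const_mul, integral_const_mul]
    _ < ε := by linarith

theorem tendstoInMeasure_of_tendsto_integral_mul_log [l.IsCountablyGenerated]
    (hpos : ∀ i x, 0 ≤ u i x) (hpos₀ : ∀ x, 0 ≤ u₀ x) (hint : ∀ i, Integrable (u i) γ)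
    (hint₀ : Integrable u₀ γ)
    (hlog : ∀ i, Integrable (fun x => u i x * Real.log (u i x)) γ)
    (hlog₀ : Integrable (fun x => u₀ x * Real.log (u₀ x)) γ)
    (hweak : ∀ t : X →ᵇ ℝ,
      Tendsto (fun i => ∫ x, u i x * t x ∂γ) l (𝓝 (∫ x, u₀ x * t x ∂γ)))
    (hent : Tendsto (fun i => ∫ x, u i x * Real.log (u i x) ∂γ) l
      (𝓝 (∫ x, u₀ x * Real.log (u₀ x) ∂γ))) :
    TendstoInMeasure γ u l u₀ := by
  have hsqrt := tendsto_integral_sq_sqrt_sub_sqrt_of_tendsto_integral_mul_log hpos hpos₀ hint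
    hint₀ hlog hlog₀ hweak hent
  have hmeas : ∀ i, AEStronglyMeasurable (fun x => √(u i x)) γ := fun i =>
    Real.continuous_sqrt.comp_aestronglyMeasurable (hint i).1
  have hmeas₀ : AEStronglyMeasurable (fun x => √(u₀ x)) γ :=
    Real.continuous_sqrt.comp_aestronglyMeasurable hint₀.1
  have hL2 : ∀ {v : X → ℝ}, (∀ x, 0 ≤ v x) → Integrable v γ → MemLp (fun x => √(v x)) 2 γ :=
    fun hv₀ hv => (memLp_two_iff_integrable_sq
      (Real.continuous_sqrt.comp_aestronglyMeasurable hv.1)).2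
        (by simpa [Real.sq_sqrt, hv₀] using hv)
  have hsqrt_measure : TendstoInMeasure γ (fun i x => √(u i x)) l (fun x => √(u₀ x)) := by
    refine tendstoInMeasure_of_tendsto_eLpNorm two_ne_zero hmeas hmeas₀ ?_
    have heq : ∀ i, eLpNorm ((fun x => √(u i x)) - fun x => √(u₀ x)) 2 γ =
        ENNReal.ofReal (√(∫ x, (√(u i x) - √(u₀ x)) ^ 2 ∂γ)) := fun i => by
      simpa using eLpNorm_two_eq_ofReal_sqrt_integral
        ((hL2 (hpos i) (hint i)).sub (hL2 hpos₀ hint₀))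
    simp_rw [heq]
    simpa using ENNReal.tendsto_ofReal ((Real.continuous_sqrt.tendsto 0).comp hsqrt)
  simpa [Real.sq_sqrt, hpos, hpos₀] using tendstoInMeasure_comp (Φ := fun _ s => s ^ 2)
    (fun _ => continuous_pow 2) (fun i => (hmeas i).pow 2) hsqrt_measure

end EntropyConvergence

section Wasserstein

open BoundedContinuousFunction

section Coupling

variable {E : Type*} [NormedAddCommGroup E] [SecondCountableTopology E] [MeasurableSpace E]
  [BorelSpace E] (q : Measure (E × E))

lemma eLpNorm_id_map_fst_le :
    eLpNorm id 2 (q.map Prod.fst) ≤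
      eLpNorm id 2 (q.map Prod.snd) + eLpNorm (fun p => p.1 - p.2) 2 q := by
  rw [eLpNorm_map_measure (by fun_prop) (by fun_prop),
    eLpNorm_map_measure (by fun_prop) (by fun_prop)]
  calc eLpNorm (id ∘ Prod.fst) 2 q
      = eLpNorm (id ∘ Prod.snd + fun p : E × E => p.1 - p.2) 2 q := by congr 1; ext p; simp
    _ ≤ _ := eLpNorm_add_le (by fun_prop) (by fun_prop) one_le_two

lemma eLpNorm_id_map_snd_le :
    eLpNorm id 2 (q.map Prod.snd) ≤
      eLpNorm id 2 (q.map Prod.fst) + eLpNorm (fun p => p.1 - p.2) 2 q := by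
  rw [eLpNorm_map_measure (by fun_prop) (by fun_prop),
    eLpNorm_map_measure (by fun_prop) (by fun_prop)]
  calc eLpNorm (id ∘ Prod.snd) 2 q
      = eLpNorm (id ∘ Prod.fst - fun p : E × E => p.1 - p.2) 2 q := by congr 1; ext p; simp
    _ ≤ _ := eLpNorm_sub_le (by fun_prop) (by fun_prop) one_le_two

lemma edist_integral_map_fst_snd_le [IsProbabilityMeasure q] {φ : E →ᵇ ℝ} {K : ℝ≥0}
    (hφ : LipschitzWith K φ) :
    edist (∫ x, φ x ∂(q.map Prod.fst)) (∫ x, φ x ∂(q.map Prod.snd)) ≤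
      K * eLpNorm (fun p => p.1 - p.2) 2 q := by
  have hint : ∀ {π : E × E → E}, Measurable π → Integrable (fun p => φ (π p)) q := fun hπ =>
    .of_bound (φ.continuous.measurable.comp hπ).aestronglyMeasurable ‖φ‖
      (.of_forall fun p => φ.norm_coe_le_norm _)
  rw [integral_map (by fun_prop) (by fun_prop), integral_map (by fun_prop) (by fun_prop),
    edist_eq_enorm_sub, ← integral_sub (hint measurable_fst) (hint measurable_snd)]
  calc ‖∫ p, (φ p.1 - φ p.2) ∂q‖ₑ ≤ ∫⁻ p, ‖φ p.1 - φ p.2‖ₑ ∂q := enorm_integral_le_lintegral_enorm _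
    _ ≤ ∫⁻ p, K * ‖p.1 - p.2‖ₑ ∂q :=
        lintegral_mono fun p => by simpa only [edist_eq_enorm_sub] using hφ p.1 p.2
    _ = K * eLpNorm (fun p => p.1 - p.2) 1 q := by
        rw [lintegral_const_mul _ (by fun_prop), eLpNorm_one_eq_lintegral_enorm]
    _ ≤ K * eLpNorm (fun p => p.1 - p.2) 2 q := by
        gcongr; exact eLpNorm_le_eLpNorm_of_exponent_le one_le_two (by fun_prop)

end Coupling

variable {d : ℕ}

lemma Wsq_rpow_half_eq_iInf_eLpNorm (μ ν : Measure (Eu d)) :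
    Wsq μ ν ^ (1 / 2 : ℝ) = ⨅ q ∈ couplings μ ν, eLpNorm (fun p => p.1 - p.2) 2 q := by
  have hcost : ∀ q : Measure (Eu d × Eu d),
      eLpNorm (fun p => p.1 - p.2) 2 q = (∫⁻ p, edist p.1 p.2 ^ 2 ∂q) ^ (1 / 2 : ℝ) := fun q => by
    simpa [edist_eq_enorm_sub] using
      eLpNorm_nnreal_eq_lintegral (μ := q) (f := fun p : Eu d × Eu d => p.1 - p.2) two_ne_zero
  simp_rw [hcost]
  exact (ENNReal.orderIsoRpow (1 / 2) (by norm_num)).map_iInf₂ _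

lemma eLpNorm_id_le_add_Wsq_left (μ ν : Measure (Eu d)) :
    eLpNorm id 2 μ ≤ eLpNorm id 2 ν + Wsq μ ν ^ (1 / 2 : ℝ) := by
  rw [Wsq_rpow_half_eq_iInf_eLpNorm, ENNReal.add_iInf₂]
  refine le_iInf₂ ?_
  rintro q ⟨rfl, rfl⟩
  exact eLpNorm_id_map_fst_le q

lemma eLpNorm_id_le_add_Wsq_right (μ ν : Measure (Eu d)) :
    eLpNorm id 2 ν ≤ eLpNorm id 2 μ + Wsq μ ν ^ (1 / 2 : ℝ) := by
  rw [Wsq_rpow_half_eq_iInf_eLpNorm, ENNReal.add_iInf₂]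
  refine le_iInf₂ ?_
  rintro q ⟨rfl, rfl⟩
  exact eLpNorm_id_map_snd_le q

lemma edist_integral_le_mul_Wsq {μ ν : Measure (Eu d)} [IsProbabilityMeasure μ] {φ : Eu d →ᵇ ℝ}
    {K : ℝ≥0} (hK : K ≠ 0) (hφ : LipschitzWith K φ) :
    edist (∫ x, φ x ∂μ) (∫ x, φ x ∂ν) ≤ K * Wsq μ ν ^ (1 / 2 : ℝ) := by
  rw [Wsq_rpow_half_eq_iInf_eLpNorm]
  simp_rw [ENNReal.mul_iInf_of_ne (ENNReal.coe_ne_zero.2 hK) ENNReal.coe_ne_top]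
  refine le_iInf₂ ?_
  rintro q ⟨rfl, rfl⟩
  have := Measure.isProbabilityMeasure_of_map (μ := q) Prod.fst
  exact edist_integral_map_fst_snd_le q hφ

variable {ι : Type*} {l : Filter ι} {ρ : ι → Measure (Eu d)} {ρ₀ : Measure (Eu d)}

lemma tendsto_Wsq_rpow_half (hW : Tendsto (fun i => Wsq (ρ i) ρ₀) l (𝓝 0)) :
    Tendsto (fun i => Wsq (ρ i) ρ₀ ^ (1 / 2 : ℝ)) l (𝓝 0) := by
  simpa using hW.ennrpow_const (1 / 2)

lemma tendsto_integral_of_tendsto_Wsq [l.IsCountablyGenerated] [∀ i, IsProbabilityMeasure (ρ i)]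
    [IsProbabilityMeasure ρ₀] (hW : Tendsto (fun i => Wsq (ρ i) ρ₀) l (𝓝 0)) (φ : Eu d →ᵇ ℝ) :
    Tendsto (fun i => ∫ x, φ x ∂(ρ i)) l (𝓝 (∫ x, φ x ∂ρ₀)) := by
  suffices hweak : Tendsto (β := ProbabilityMeasure (Eu d)) (fun i => ⟨ρ i, inferInstance⟩) l
      (𝓝 ⟨ρ₀, inferInstance⟩) from
    ProbabilityMeasure.tendsto_iff_forall_integral_tendsto.1 hweak φ
  refine tendsto_iff_forall_lipschitz_integral_tendsto.2 fun ψ ⟨C, hC⟩ ⟨K, hK⟩ => ?_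
  let ψb : Eu d →ᵇ ℝ := .mkOfBound ⟨ψ, hK.continuous⟩ C hC
  have hψb : LipschitzWith (K + 1) ψb := hK.weaken (le_add_of_nonneg_right zero_le_one)
  have hbound : Tendsto (fun i => ((K + 1 : ℝ≥0) : ℝ≥0∞) * Wsq (ρ i) ρ₀ ^ (1 / 2 : ℝ)) l (𝓝 0) := by
    simpa only [mul_zero] using
      ENNReal.Tendsto.const_mul (tendsto_Wsq_rpow_half hW) (.inr ENNReal.coe_ne_top)
  exact tendsto_iff_edist_tendsto_0.2 (tendsto_of_tendsto_of_tendsto_of_le_of_le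
    tendsto_const_nhds hbound (fun _ => zero_le) fun i =>
      edist_integral_le_mul_Wsq (μ := ρ i) (by positivity) hψb)

lemma tendsto_integral_sq_norm_of_tendsto_Wsq (h2 : ∀ i, MemLp id 2 (ρ i)) (h2₀ : MemLp id 2 ρ₀)
    (hW : Tendsto (fun i => Wsq (ρ i) ρ₀) l (𝓝 0)) :
    Tendsto (fun i => ∫ x, ‖x‖ ^ 2 ∂(ρ i)) l (𝓝 (∫ x, ‖x‖ ^ 2 ∂ρ₀)) := by
  have hsq : ∀ {μ : Measure (Eu d)}, MemLp id 2 μ →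
      ∫ x, ‖x‖ ^ 2 ∂μ = (eLpNorm id 2 μ).toReal ^ 2 := fun hμ => by
    rw [eLpNorm_two_eq_ofReal_sqrt_integral hμ, ENNReal.toReal_ofReal (Real.sqrt_nonneg _),
      Real.sq_sqrt (integral_nonneg fun x => sq_nonneg _)]
    rfl
  have hdist := tendsto_Wsq_rpow_half hW
  have hnorm : Tendsto (fun i => eLpNorm id 2 (ρ i)) l (𝓝 (eLpNorm id 2 ρ₀)) := by
    refine tendsto_of_tendsto_of_tendsto_of_le_of_le
      (g := fun i => eLpNorm id 2 ρ₀ - Wsq (ρ i) ρ₀ ^ (1 / 2 : ℝ)) ?_ ?_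
      (fun i => tsub_le_iff_right.2 (eLpNorm_id_le_add_Wsq_right _ _))
      (fun i => eLpNorm_id_le_add_Wsq_left _ ρ₀)
    · simpa only [tsub_zero] using
        ENNReal.Tendsto.sub (tendsto_const_nhds (x := eLpNorm id 2 ρ₀)) hdist (.inl h2₀.2.ne)
    · simpa only [add_zero] using hdist.const_add (eLpNorm id 2 ρ₀)
  simp_rw [hsq h2₀, hsq (h2 _)]
  exact ((ENNReal.tendsto_toReal h2₀.2.ne).comp hnorm).pow 2

end Wasserstein

section GaussianReference

open Real

variable {d : ℕ}

/-- The unnormalised Gaussian measure `exp (-‖x‖ ^ 2) dx`, the finite reference measure with respect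
to which entropies and weak limits are compared. -/
def gaussianWeight (d : ℕ) : Measure (Eu d) :=
  volume.withDensity fun x => ENNReal.ofReal (exp (-‖x‖ ^ 2))

instance isFiniteMeasure_gaussianWeight : IsFiniteMeasure (gaussianWeight d) := by
  have hint : Integrable fun x : Eu d => exp (-‖x‖ ^ 2) := by
    refine (GaussianFourier.integrable_cexp_neg_mul_sq_norm_add (V := Eu d) (b := 1) (by simp) 0
      0).norm.congr (.of_forall fun x => ?_)
    simp [Complex.norm_exp, ← Complex.ofReal_pow]
  exact isFiniteMeasure_withDensity_ofReal hint.2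

lemma integral_gaussianWeight (f : Eu d → ℝ) :
    ∫ x, f x ∂(gaussianWeight d) = ∫ x, exp (-‖x‖ ^ 2) * f x := by
  rw [gaussianWeight, integral_withDensity_eq_integral_toReal_smul (by fun_prop) (by simp)]
  simp [(exp_pos _).le]

lemma integrable_gaussianWeight_iff {f : Eu d → ℝ} :
    Integrable f (gaussianWeight d) ↔ Integrable fun x => exp (-‖x‖ ^ 2) * f x := by
  rw [gaussianWeight, integrable_withDensity_iff_integrable_smul' (by fun_prop) (by simp)]
  simp [(exp_pos _).le]

lemma integral_abs_sub_gaussianWeight (f g : Eu d → ℝ) :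
    ∫ x, |f x - g x| ∂(gaussianWeight d) =
      ∫ x, |exp (-‖x‖ ^ 2) * f x - exp (-‖x‖ ^ 2) * g x| := by
  simp_rw [integral_gaussianWeight, ← mul_sub, abs_mul, abs_exp]

/-- The density of `ρ` with respect to `gaussianWeight d`, for `ρ` absolutely continuous. -/
def relDens (ρ : Measure (Eu d)) (x : Eu d) : ℝ := dens ρ x * exp (‖x‖ ^ 2)

lemma dens_nonneg (ρ : Measure (Eu d)) (x : Eu d) : 0 ≤ dens ρ x := ENNReal.toReal_nonneg

lemma relDens_nonneg (ρ : Measure (Eu d)) (x : Eu d) : 0 ≤ relDens ρ x :=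
  mul_nonneg (dens_nonneg ρ x) (exp_pos _).le

lemma exp_mul_relDens (ρ : Measure (Eu d)) (x : Eu d) :
    exp (-‖x‖ ^ 2) * relDens ρ x = dens ρ x := by
  rw [relDens, mul_left_comm, ← exp_add]
  simp

lemma exp_mul_relDens_mul_log (ρ : Measure (Eu d)) (x : Eu d) :
    exp (-‖x‖ ^ 2) * (relDens ρ x * log (relDens ρ x)) =
      dens ρ x * log (dens ρ x) + dens ρ x * ‖x‖ ^ 2 := by
  rw [← mul_assoc, exp_mul_relDens, relDens]
  rcases (dens_nonneg ρ x).eq_or_lt with h | h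
  · simp [← h]
  · rw [log_mul h.ne' (exp_pos _).ne', log_exp, mul_add]

namespace memP2S

variable {ρ : Measure (Eu d)}

lemma absolutelyContinuous_and_integrable_mul_log (h : memP2S ρ) :
    ρ ≪ volume ∧ Integrable fun x => dens ρ x * log (dens ρ x) := by
  by_contra hc
  exact h.2.2 (if_neg hc)

lemma absolutelyContinuous (h : memP2S ρ) : ρ ≪ volume :=
  h.absolutelyContinuous_and_integrable_mul_log.1

lemma integrable_dens_mul_log (h : memP2S ρ) : Integrable fun x => dens ρ x * log (dens ρ x) :=
  h.absolutelyContinuous_and_integrable_mul_log.2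

lemma entS_eq (h : memP2S ρ) :
    entS ρ = ((∫ x, dens ρ x * log (dens ρ x) : ℝ) : EReal) :=
  if_pos h.absolutelyContinuous_and_integrable_mul_log

lemma memLp_id (h : memP2S ρ) : MemLp id 2 ρ := by
  refine ⟨aestronglyMeasurable_id, ?_⟩
  rw [eLpNorm_lt_top_iff_lintegral_rpow_enorm_lt_top two_ne_zero ENNReal.ofNat_ne_top]
  simpa [enorm_eq_nnnorm] using h.2.1

lemma integrable_sq_norm (h : memP2S ρ) : Integrable (fun x => ‖x‖ ^ 2) ρ :=
  h.memLp_id.integrable_norm_pow two_ne_zero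

lemma integrable_dens_mul (h : memP2S ρ) {ψ : Eu d → ℝ} (hψ : Integrable ψ ρ) :
    Integrable fun x => dens ρ x * ψ x :=
  have := h.1
  (integrable_rnDeriv_smul_iff h.absolutelyContinuous).2 hψ

lemma integral_dens_mul (h : memP2S ρ) (ψ : Eu d → ℝ) :
    ∫ x, dens ρ x * ψ x = ∫ x, ψ x ∂ρ :=
  have := h.1
  integral_rnDeriv_smul h.absolutelyContinuous

lemma integrable_relDens_mul (h : memP2S ρ) {ψ : Eu d → ℝ} (hψ : Integrable ψ ρ) :
    Integrable (fun x => relDens ρ x * ψ x) (gaussianWeight d) := by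
  simpa only [integrable_gaussianWeight_iff, ← mul_assoc, exp_mul_relDens] using
    h.integrable_dens_mul hψ

lemma integral_relDens_mul (h : memP2S ρ) (ψ : Eu d → ℝ) :
    ∫ x, relDens ρ x * ψ x ∂(gaussianWeight d) = ∫ x, ψ x ∂ρ := by
  simpa only [integral_gaussianWeight, ← mul_assoc, exp_mul_relDens] using h.integral_dens_mul ψ

lemma integrable_relDens (h : memP2S ρ) : Integrable (relDens ρ) (gaussianWeight d) := by
  have := h.1
  simpa using h.integrable_relDens_mul (integrable_const (1 : ℝ))

lemma integrable_relDens_mul_log (h : memP2S ρ) :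
    Integrable (fun x => relDens ρ x * log (relDens ρ x)) (gaussianWeight d) := by
  simp only [integrable_gaussianWeight_iff, exp_mul_relDens_mul_log]
  exact h.integrable_dens_mul_log.add (h.integrable_dens_mul h.integrable_sq_norm)

lemma integral_relDens_mul_log (h : memP2S ρ) :
    ∫ x, relDens ρ x * log (relDens ρ x) ∂(gaussianWeight d) =
      (∫ x, dens ρ x * log (dens ρ x)) + ∫ x, ‖x‖ ^ 2 ∂ρ := by
  simp only [integral_gaussianWeight, exp_mul_relDens_mul_log]
  rw [integral_add h.integrable_dens_mul_log
    (h.integrable_dens_mul h.integrable_sq_norm), h.integral_dens_mul fun x => ‖x‖ ^ 2]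

end memP2S

variable {ι : Type*} {l : Filter ι} {ρ : ι → Measure (Eu d)} {ρ₀ : Measure (Eu d)}

lemma tendsto_integral_relDens_mul_log (hρ : ∀ i, memP2S (ρ i)) (hρ₀ : memP2S ρ₀)
    (hW : Tendsto (fun i => Wsq (ρ i) ρ₀) l (𝓝 0))
    (hS : Tendsto (fun i => entS (ρ i)) l (𝓝 (entS ρ₀))) :
    Tendsto (fun i => ∫ x, relDens (ρ i) x * log (relDens (ρ i) x) ∂(gaussianWeight d)) l
      (𝓝 (∫ x, relDens ρ₀ x * log (relDens ρ₀ x) ∂(gaussianWeight d))) := by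
  simp_rw [hρ₀.entS_eq, (hρ _).entS_eq, EReal.tendsto_coe] at hS
  simp_rw [hρ₀.integral_relDens_mul_log, (hρ _).integral_relDens_mul_log]
  exact hS.add
    (tendsto_integral_sq_norm_of_tendsto_Wsq (fun i => (hρ i).memLp_id) hρ₀.memLp_id hW)

variable [l.IsCountablyGenerated]

lemma tendstoInMeasure_relDens (hρ : ∀ i, memP2S (ρ i)) (hρ₀ : memP2S ρ₀)
    (hW : Tendsto (fun i => Wsq (ρ i) ρ₀) l (𝓝 0))
    (hS : Tendsto (fun i => entS (ρ i)) l (𝓝 (entS ρ₀))) :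
    TendstoInMeasure (gaussianWeight d) (fun i => relDens (ρ i)) l (relDens ρ₀) := by
  have := fun i => (hρ i).1
  have := hρ₀.1
  refine tendstoInMeasure_of_tendsto_integral_mul_log (fun i => relDens_nonneg (ρ i))
    (relDens_nonneg ρ₀) (fun i => (hρ i).integrable_relDens) hρ₀.integrable_relDens
    (fun i => (hρ i).integrable_relDens_mul_log) hρ₀.integrable_relDens_mul_log (fun t => ?_)
    (tendsto_integral_relDens_mul_log hρ hρ₀ hW hS)
  simp_rw [hρ₀.integral_relDens_mul, (hρ _).integral_relDens_mul]
  exact tendsto_integral_of_tendsto_Wsq hW t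

theorem tendsto_integral_abs_dens_sub (hρ : ∀ i, memP2S (ρ i)) (hρ₀ : memP2S ρ₀)
    (hW : Tendsto (fun i => Wsq (ρ i) ρ₀) l (𝓝 0))
    (hS : Tendsto (fun i => entS (ρ i)) l (𝓝 (entS ρ₀))) :
    Tendsto (fun i => ∫ x, |dens (ρ i) x - dens ρ₀ x|) l (𝓝 0) := by
  have hmass : ∀ {μ : Measure (Eu d)}, memP2S μ → ∫ x, relDens μ x ∂(gaussianWeight d) = 1 :=
    fun {μ} hμ => by have := hμ.1; simpa using hμ.integral_relDens_mul 1
  have hlim := tendsto_integral_abs_comp_sub (Φ := fun _ s => s) (fun _ => continuous_id)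
    (tendstoInMeasure_relDens hρ hρ₀ hW hS) (fun i => (hρ i).integrable_relDens)
    hρ₀.integrable_relDens (fun i => relDens_nonneg (ρ i))
    (by simp only [hmass hρ₀, hmass (hρ _), tendsto_const_nhds])
  simpa only [integral_abs_sub_gaussianWeight, exp_mul_relDens] using hlim

lemma tendsto_integral_abs_dens_mul_sq_norm_sub (hρ : ∀ i, memP2S (ρ i)) (hρ₀ : memP2S ρ₀)
    (hW : Tendsto (fun i => Wsq (ρ i) ρ₀) l (𝓝 0))
    (hS : Tendsto (fun i => entS (ρ i)) l (𝓝 (entS ρ₀))) :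
    Tendsto (fun i => ∫ x, |dens (ρ i) x * ‖x‖ ^ 2 - dens ρ₀ x * ‖x‖ ^ 2|) l (𝓝 0) := by
  have hlim := tendsto_integral_abs_comp_sub (Φ := fun x s => s * ‖x‖ ^ 2) (fun _ => by fun_prop)
    (tendstoInMeasure_relDens hρ hρ₀ hW hS)
    (fun i => (hρ i).integrable_relDens_mul (hρ i).integrable_sq_norm)
    (hρ₀.integrable_relDens_mul hρ₀.integrable_sq_norm)
    (fun i x => mul_nonneg (relDens_nonneg (ρ i) x) (sq_nonneg _)) (by
      simp_rw [hρ₀.integral_relDens_mul, (hρ _).integral_relDens_mul]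
      exact tendsto_integral_sq_norm_of_tendsto_Wsq (fun i => (hρ i).memLp_id) hρ₀.memLp_id hW)
  simpa only [integral_abs_sub_gaussianWeight, ← mul_assoc, exp_mul_relDens] using hlim

theorem tendsto_integral_abs_dens_mul_log_sub (hρ : ∀ i, memP2S (ρ i)) (hρ₀ : memP2S ρ₀)
    (hW : Tendsto (fun i => Wsq (ρ i) ρ₀) l (𝓝 0))
    (hS : Tendsto (fun i => entS (ρ i)) l (𝓝 (entS ρ₀))) :
    Tendsto (fun i => ∫ x, |dens (ρ i) x * log (dens (ρ i) x) - dens ρ₀ x * log (dens ρ₀ x)|) l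
      (𝓝 0) := by
  have hrel := tendsto_integral_abs_comp_sub (Φ := fun _ s => s * log s)
    (fun _ => continuous_mul_log) (tendstoInMeasure_relDens hρ hρ₀ hW hS)
    (fun i => (hρ i).integrable_relDens_mul_log) hρ₀.integrable_relDens_mul_log
    (fun i x => neg_one_le_mul_log (relDens_nonneg (ρ i) x))
    (tendsto_integral_relDens_mul_log hρ hρ₀ hW hS)
  simp only [integral_abs_sub_gaussianWeight, exp_mul_relDens_mul_log] at hrel
  exact tendsto_integral_abs_sub_of_add (fun i => (hρ i).integrable_dens_mul_log)
    hρ₀.integrable_dens_mul_log (fun i => (hρ i).integrable_dens_mul (hρ i).integrable_sq_norm)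
    (hρ₀.integrable_dens_mul hρ₀.integrable_sq_norm) hrel
    (tendsto_integral_abs_dens_mul_sq_norm_sub hρ hρ₀ hW hS)

end GaussianReference

theorem stmt2_general {d : ℕ} {ι : Type*} {l : Filter ι} [l.IsCountablyGenerated]
    {ρ : ι → Measure (Eu d)} {ρlim : Measure (Eu d)} (hmem : ∀ i, memP2S (ρ i))
    (hmemlim : memP2S ρlim) (hW : Tendsto (fun i => Wsq (ρ i) ρlim) l (𝓝 0))
    (hS : Tendsto (fun i => entS (ρ i)) l (𝓝 (entS ρlim))) :
    (∀ i, ρ i ≪ volume) ∧ ρlim ≪ volume ∧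
      Tendsto (fun i => ∫ x, |dens (ρ i) x - dens ρlim x|) l (𝓝 0) ∧
      Tendsto (fun i => ∫ x,
          |dens (ρ i) x * Real.log (dens (ρ i) x) - dens ρlim x * Real.log (dens ρlim x)|)
        l (𝓝 0) :=
  ⟨fun i => (hmem i).absolutelyContinuous, hmemlim.absolutelyContinuous,
    tendsto_integral_abs_dens_sub hmem hmemlim hW hS,
    tendsto_integral_abs_dens_mul_log_sub hmem hmemlim hW hS⟩

/-- if `ρ^h → ρ` in Wasserstein distance and `S(ρ^h) → S(ρ)` in
`P₂^S(ℝ^d)`, then all measures are absolutely continuous and, along a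
subsequence, the densities and their entropy integrands converge strongly
in `L¹(ℝ^d)`. -/
theorem stmt2 (d : ℕ) (ρ : ℕ → Measure (Eu d)) (ρlim : Measure (Eu d))
    (hmem : ∀ n, memP2S (ρ n)) (hmemlim : memP2S ρlim)
    (hW : Tendsto (fun n => Wsq (ρ n) ρlim) atTop (𝓝 0))
    (hS : Tendsto (fun n => entS (ρ n)) atTop (𝓝 (entS ρlim))) :
    (∀ n, ρ n ≪ volume) ∧ ρlim ≪ volume ∧
    ∃ φ : ℕ → ℕ, StrictMono φ ∧
      Tendsto (fun n => ∫ x, |dens (ρ (φ n)) x - dens ρlim x|) atTop (𝓝 0) ∧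
      Tendsto (fun n => ∫ x,
          |dens (ρ (φ n)) x * Real.log (dens (ρ (φ n)) x)
            - dens ρlim x * Real.log (dens ρlim x)|) atTop (𝓝 0) := by
  obtain ⟨hac, haclim, hdens, hlog⟩ := stmt2_general hmem hmemlim hW hS
  exact ⟨hac, haclim, id, strictMono_id, hdens, hlog⟩

end
end

section
/- Let f₁, f₂ be nonnegative functions in L¹(ℝ^d) with f₁·log f₁ ∈ L¹(ℝ^d), f₂·log f₂ ∈ L¹(ℝ^d) and masses m₁ := ‖f₁‖_{L¹} > 0, m₂ := ‖f₂‖_{L¹} > 0. Then ∫ (f₁+f₂) log(f₁+f₂) dx ≤ ∫ f₁ log f₁ dx + ∫ f₂ log f₂ dx − m₁·log(m₁/(m₁+m₂)) − m₂·log(m₂/(m₁+m₂)). -/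
open MeasureTheory

/-!
For weights `t + u = 1`, convexity of `φ x = x log x` at `a + b = t (a / t) + u (b / u)` gives
`φ (a + b) ≤ φ a + φ b - a log t - b log u`. Integrating this with `a = f₁ x`, `b = f₂ x`
bounds the entropy of `f₁ + f₂`, and the mass fractions `t = m₁ / (m₁ + m₂)`,
`u = m₂ / (m₁ + m₂)` are the weights that make the bound smallest.
The entropy of `f₁ + f₂` is finite because `φ` is also superadditive on `[0, ∞)`, so
`φ (f₁ + f₂)` lies between two integrable functions.
-/

theorem mul_log_add_mul_log_le_add_mul_log_add {a b : ℝ} (ha : 0 ≤ a) (hb : 0 ≤ b) :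
    a * Real.log a + b * Real.log b ≤ (a + b) * Real.log (a + b) := by
  have mul_log_mono {x y : ℝ} (hx : 0 ≤ x) (hxy : x ≤ y) : x * Real.log x ≤ x * Real.log y := by
    rcases hx.eq_or_lt with rfl | hx
    · simp
    · gcongr
  calc a * Real.log a + b * Real.log b
      ≤ a * Real.log (a + b) + b * Real.log (a + b) :=
        add_le_add (mul_log_mono ha (le_add_of_nonneg_right hb))
          (mul_log_mono hb (le_add_of_nonneg_left ha))
    _ = (a + b) * Real.log (a + b) := (add_mul ..).symm

theorem mul_log_div_eq_sub (a : ℝ) {t : ℝ} (ht : t ≠ 0) :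
    a * Real.log (a / t) = a * Real.log a - a * Real.log t := by
  rcases eq_or_ne a 0 with rfl | ha
  · simp
  · rw [Real.log_div ha ht, mul_sub]

theorem add_mul_log_add_le_of_weights {a b t u : ℝ} (ha : 0 ≤ a) (hb : 0 ≤ b)
    (ht : 0 < t) (hu : 0 < u) (htu : t + u = 1) :
    (a + b) * Real.log (a + b) ≤
      a * Real.log a + b * Real.log b - a * Real.log t - b * Real.log u := by
  have hconv := Real.convexOn_mul_log.2 (Set.mem_Ici.2 (div_nonneg ha ht.le))
    (Set.mem_Ici.2 (div_nonneg hb hu.le)) ht.le hu.le htu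
  simp only [smul_eq_mul, ← mul_assoc, mul_div_cancel₀ _ ht.ne', mul_div_cancel₀ _ hu.ne',
    mul_log_div_eq_sub a ht.ne', mul_log_div_eq_sub b hu.ne'] at hconv
  linarith

section Entropy

variable {α : Type*} {mα : MeasurableSpace α} {μ : Measure α} {f₁ f₂ : α → ℝ}

theorem integrable_add_mul_log_add (hnn₁ : 0 ≤ᵐ[μ] f₁) (hnn₂ : 0 ≤ᵐ[μ] f₂)
    (hint₁ : Integrable f₁ μ) (hint₂ : Integrable f₂ μ)
    (hent₁ : Integrable (fun x => f₁ x * Real.log (f₁ x)) μ)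
    (hent₂ : Integrable (fun x => f₂ x * Real.log (f₂ x)) μ) :
    Integrable (fun x => (f₁ x + f₂ x) * Real.log (f₁ x + f₂ x)) μ := by
  have hent := hent₁.add hent₂
  have hmix := (hint₁.mul_const (Real.log (1 / 2))).add (hint₂.mul_const (Real.log (1 / 2)))
  refine integrable_of_le_of_le
    (Real.continuous_mul_log.comp_aestronglyMeasurable (hint₁.add hint₂).aestronglyMeasurable)
    ?lower ?upper hent (hent.sub hmix)
  case lower =>
    filter_upwards [hnn₁, hnn₂] with x h₁ h₂
    exact mul_log_add_mul_log_le_add_mul_log_add h₁ h₂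
  case upper =>
    filter_upwards [hnn₁, hnn₂] with x h₁ h₂
    exact (add_mul_log_add_le_of_weights h₁ h₂ one_half_pos one_half_pos (add_halves 1)).trans_eq
      (sub_sub ..)

theorem integral_add_mul_log_add_le_of_weights {t u : ℝ}
    (hnn₁ : 0 ≤ᵐ[μ] f₁) (hnn₂ : 0 ≤ᵐ[μ] f₂)
    (hint₁ : Integrable f₁ μ) (hint₂ : Integrable f₂ μ)
    (hent₁ : Integrable (fun x => f₁ x * Real.log (f₁ x)) μ)
    (hent₂ : Integrable (fun x => f₂ x * Real.log (f₂ x)) μ)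
    (ht : 0 < t) (hu : 0 < u) (htu : t + u = 1) :
    ∫ x, (f₁ x + f₂ x) * Real.log (f₁ x + f₂ x) ∂μ ≤
      (∫ x, f₁ x * Real.log (f₁ x) ∂μ) + (∫ x, f₂ x * Real.log (f₂ x) ∂μ)
        - (∫ x, f₁ x ∂μ) * Real.log t - (∫ x, f₂ x ∂μ) * Real.log u := by
  have hent := hent₁.fun_add hent₂
  have hmix₁ := hint₁.mul_const (Real.log t)
  have hmix₂ := hint₂.mul_const (Real.log u)
  have hent_sub_mix₁ : Integrable
      (fun x => f₁ x * Real.log (f₁ x) + f₂ x * Real.log (f₂ x) - f₁ x * Real.log t) μ :=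
    hent.sub hmix₁
  calc ∫ x, (f₁ x + f₂ x) * Real.log (f₁ x + f₂ x) ∂μ
      ≤ ∫ x, f₁ x * Real.log (f₁ x) + f₂ x * Real.log (f₂ x)
          - f₁ x * Real.log t - f₂ x * Real.log u ∂μ := by
        refine integral_mono_ae (integrable_add_mul_log_add hnn₁ hnn₂ hint₁ hint₂ hent₁ hent₂)
          (hent_sub_mix₁.sub hmix₂) ?_
        filter_upwards [hnn₁, hnn₂] with x h₁ h₂
        exact add_mul_log_add_le_of_weights h₁ h₂ ht hu htu
    _ = _ := by
        rw [integral_sub hent_sub_mix₁ hmix₂, integral_sub hent hmix₁,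
          integral_add hent₁ hent₂, integral_mul_const, integral_mul_const]

theorem stmt13_general (hnn₁ : 0 ≤ᵐ[μ] f₁) (hnn₂ : 0 ≤ᵐ[μ] f₂)
    (hint₁ : Integrable f₁ μ) (hint₂ : Integrable f₂ μ)
    (hent₁ : Integrable (fun x => f₁ x * Real.log (f₁ x)) μ)
    (hent₂ : Integrable (fun x => f₂ x * Real.log (f₂ x)) μ)
    {m₁ m₂ : ℝ} (hm₁ : m₁ = ∫ x, f₁ x ∂μ) (hm₂ : m₂ = ∫ x, f₂ x ∂μ)
    (hm₁pos : 0 < m₁) (hm₂pos : 0 < m₂) :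
    ∫ x, (f₁ x + f₂ x) * Real.log (f₁ x + f₂ x) ∂μ ≤
      (∫ x, f₁ x * Real.log (f₁ x) ∂μ) + (∫ x, f₂ x * Real.log (f₂ x) ∂μ)
        - m₁ * Real.log (m₁ / (m₁ + m₂)) - m₂ * Real.log (m₂ / (m₁ + m₂)) := by
  have hweights : m₁ / (m₁ + m₂) + m₂ / (m₁ + m₂) = 1 := by field_simp
  have hbound := integral_add_mul_log_add_le_of_weights hnn₁ hnn₂ hint₁ hint₂ hent₁ hent₂
    (by positivity) (by positivity) hweights
  rwa [← hm₁, ← hm₂] at hbound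

end Entropy

/-- for nonnegative `f₁, f₂ ∈ L¹(ℝ^d)` with integrable entropy
integrands and positive masses `m₁, m₂`, the entropy is subadditive up to mixing
terms:
`∫(f₁+f₂)log(f₁+f₂) ≤ ∫f₁ log f₁ + ∫f₂ log f₂ − m₁ log(m₁/(m₁+m₂)) − m₂ log(m₂/(m₁+m₂))`. -/
theorem stmt13 (d : ℕ) (f₁ f₂ : EuclideanSpace ℝ (Fin d) → ℝ)
    (hnn₁ : ∀ x, 0 ≤ f₁ x) (hnn₂ : ∀ x, 0 ≤ f₂ x)
    (hint₁ : Integrable f₁ volume) (hint₂ : Integrable f₂ volume)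
    (hent₁ : Integrable (fun x => f₁ x * Real.log (f₁ x)) volume)
    (hent₂ : Integrable (fun x => f₂ x * Real.log (f₂ x)) volume)
    (m₁ m₂ : ℝ) (hm₁ : m₁ = ∫ x, f₁ x) (hm₂ : m₂ = ∫ x, f₂ x)
    (hm₁pos : 0 < m₁) (hm₂pos : 0 < m₂) :
    ∫ x, (f₁ x + f₂ x) * Real.log (f₁ x + f₂ x) ≤
      (∫ x, f₁ x * Real.log (f₁ x)) + (∫ x, f₂ x * Real.log (f₂ x))
        - m₁ * Real.log (m₁ / (m₁ + m₂)) - m₂ * Real.log (m₂ / (m₁ + m₂)) := by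
  exact stmt13_general (.of_forall hnn₁) (.of_forall hnn₂) hint₁ hint₂ hent₁ hent₂ hm₁ hm₂
    hm₁pos hm₂pos
end

section
/- Let 0 < r < 1 and n ≥ 1 an integer. Then Σ_{k=1}^{n} [ r^k·log r + (r^{k−1}−r^k)·log(1−r) − (r^{k−1}−r^k)·log((r^{k−1}−r^k)/(1−r^k)) − (1−r^{k−1})·log((1−r^{k−1})/(1−r^k)) ] = r^n·log(r^n) + (1−r^n)·log(1−r^n), and this quantity is ≤ 0. -/
open Finset

/-
Let `h` be the binary entropy. A random variable with outcome probabilities `p r`, `p (1 - r)` and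
`1 - p` can be resolved in two orders: first split off the outcome of probability `1 - p`, or first
split off the one of probability `p r`. The grouping rule for entropy equates the two results,
`h(p) + p h(r) = h(p r) + (1 - p r) h((p - p r) / (1 - p r))`.
For `p = r ^ (k - 1)` this says that the `k`-th summand is `h(r ^ (k - 1)) - h(r ^ k)`, so the sum
telescopes to `h(1) - h(r ^ n) = -h(r ^ n)`, which is nonpositive.
-/

section BinaryEntropy

open Real

lemma mul_log_add_one_sub_mul_log_one_sub (p : ℝ) :
    p * log p + (1 - p) * log (1 - p) = -binEntropy p := by
  rw [binEntropy_eq_negMulLog_add_negMulLog_one_sub, negMulLog, negMulLog]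
  ring

lemma mul_binEntropy (s t : ℝ) :
    s * binEntropy t = negMulLog (s * t) + negMulLog (s * (1 - t)) - negMulLog s := by
  rw [binEntropy_eq_negMulLog_add_negMulLog_one_sub, negMulLog_mul, negMulLog_mul]
  ring

lemma mul_binEntropy_div {s : ℝ} (hs : s ≠ 0) (a : ℝ) :
    s * binEntropy (a / s) = -(a * log (a / s)) - (s - a) * log ((s - a) / s) := by
  have entropy := mul_log_add_one_sub_mul_log_one_sub (a / s)
  rw [one_sub_div hs] at entropy
  have ha : s * (a / s) = a := mul_div_cancel₀ a hs
  have hsa : s * ((s - a) / s) = s - a := mul_div_cancel₀ (s - a) hs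
  linear_combination s * entropy - log (a / s) * ha - log ((s - a) / s) * hsa

lemma binEntropy_add_mul_binEntropy {p r : ℝ} (hpr : p * r ≠ 1) :
    binEntropy p + p * binEntropy r =
      binEntropy (p * r) + (1 - p * r) * binEntropy ((p - p * r) / (1 - p * r)) := by
  have hs : 1 - p * r ≠ 0 := sub_ne_zero.mpr hpr.symm
  rw [mul_binEntropy p, mul_binEntropy (1 - p * r), mul_one_sub, one_sub_div hs,
    mul_div_cancel₀ _ hs, mul_div_cancel₀ _ hs, sub_sub_sub_cancel_right,
    binEntropy_eq_negMulLog_add_negMulLog_one_sub p,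
    binEntropy_eq_negMulLog_add_negMulLog_one_sub (p * r)]
  ring

lemma binEntropy_sub_binEntropy_mul {p r : ℝ} (hpr : p * r ≠ 1) :
    binEntropy p - binEntropy (p * r) =
      p * r * log r + (p - p * r) * log (1 - r)
        - (p - p * r) * log ((p - p * r) / (1 - p * r))
        - (1 - p) * log ((1 - p) / (1 - p * r)) := by
  have hs : 1 - p * r ≠ 0 := sub_ne_zero.mpr hpr.symm
  have grouping := binEntropy_add_mul_binEntropy hpr
  rw [mul_binEntropy_div hs, sub_sub_sub_cancel_right] at grouping
  linear_combination grouping - p * mul_log_add_one_sub_mul_log_one_sub r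

end BinaryEntropy

/-- the telescoping identity
`Σ_{k=1}^n [r^k log r + (r^{k−1}−r^k) log(1−r) − (r^{k−1}−r^k) log((r^{k−1}−r^k)/(1−r^k))
− (1−r^{k−1}) log((1−r^{k−1})/(1−r^k))] = r^n log(r^n) + (1−r^n) log(1−r^n) ≤ 0`
for `0 < r < 1`. -/
theorem stmt15 (r : ℝ) (hr0 : 0 < r) (hr1 : r < 1) (n : ℕ) (hn : 1 ≤ n) :
    (∑ k ∈ Finset.Icc 1 n,
        (r ^ k * Real.log r + (r ^ (k - 1) - r ^ k) * Real.log (1 - r)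
          - (r ^ (k - 1) - r ^ k) * Real.log ((r ^ (k - 1) - r ^ k) / (1 - r ^ k))
          - (1 - r ^ (k - 1)) * Real.log ((1 - r ^ (k - 1)) / (1 - r ^ k))))
      = r ^ n * Real.log (r ^ n) + (1 - r ^ n) * Real.log (1 - r ^ n) ∧
    r ^ n * Real.log (r ^ n) + (1 - r ^ n) * Real.log (1 - r ^ n) ≤ 0 := by
  rw [mul_log_add_one_sub_mul_log_one_sub]
  refine ⟨?_, neg_nonpos.mpr
    (Real.binEntropy_nonneg (pow_nonneg hr0.le n) (pow_le_one₀ hr0.le hr1.le))⟩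
  rw [← Finset.Ico_add_one_right_eq_Icc, Finset.sum_Ico_eq_sum_range, Nat.add_sub_cancel]
  calc
    _ = ∑ k ∈ range n, (Real.binEntropy (r ^ k) - Real.binEntropy (r ^ (k + 1))) := by
      refine sum_congr rfl fun k _ ↦ ?_
      have hpow : r ^ k * r ≠ 1 := pow_succ r k ▸ (pow_lt_one₀ hr0.le hr1 k.succ_ne_zero).ne
      rw [Nat.add_sub_cancel_left, add_comm 1 k, pow_succ, binEntropy_sub_binEntropy_mul hpow]
    _ = Real.binEntropy (r ^ 0) - Real.binEntropy (r ^ n) :=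
      sum_range_sub' (fun k ↦ Real.binEntropy (r ^ k)) n
    _ = -Real.binEntropy (r ^ n) := by rw [pow_zero, Real.binEntropy_one, zero_sub]
end

section
/- Let Ω be a separable metric space in which every Borel probability measure is Radon. Fix ρ⁰ ∈ P(Ω) and points x_i ∈ Ω (i = 1,…,n, n ≥ 1) such that the empirical measures L_n⁰ := (1/n)Σ_{i=1}^n δ_{x_i} converge narrowly to ρ⁰ as n → ∞. Let ζ : Ω → P(Ω), x ↦ ζ^x, be continuous with respect to the narrow topology, and for each n let Y₁,…,Y_n be independent Ω-valued random variables with Y_i distributed according to ζ^{x_i}. Define the pair empirical measure M_n := (1/n)Σ_{i=1}^n δ_{(x_i,Y_i)} ∈ P(Ω×Ω) and the measure p(dx dy) := ρ⁰(dx) ζ^x(dy). Then the sequence (M_n) satisfies the large-deviation principle in P(Ω×Ω) (with the narrow topology) with speed n and rate functional I(q) := H(q|p) if the first marginal of q equals ρ⁰, and I(q) := +∞ otherwise. -/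
open MeasureTheory Filter Topology Set
open scoped ENNReal NNReal Classical

noncomputable section

/-- A separable (pseudo)metric space is second countable. -/
instance (priority := 50) secondCountable_of_sep {Ω : Type*} [MetricSpace Ω]
    [TopologicalSpace.SeparableSpace Ω] : SecondCountableTopology Ω :=
  UniformSpace.secondCountable_of_separable Ω

/-- The measurable structure on the space of probability measures (as a subtype
of measures). -/
noncomputable instance probMeasurableSpace {Ω : Type*} [MeasurableSpace Ω] :
    MeasurableSpace (ProbabilityMeasure Ω) :=
  show MeasurableSpace {μ : Measure Ω // IsProbabilityMeasure μ} from inferInstance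

/-- Relative entropy `H(q|p) = ∫ log(dq/dp) dq ∈ [0,∞]` for probability
measures: `+∞` if `q` is not absolutely continuous w.r.t. `p` (or the integral
does not exist). -/
noncomputable def relEntNN {α : Type*} [MeasurableSpace α] (q p : Measure α) : ℝ≥0∞ :=
  if q ≪ p ∧ Integrable (fun x => Real.log ((q.rnDeriv p x).toReal)) q
  then ENNReal.ofReal (∫ x, Real.log ((q.rnDeriv p x).toReal) ∂q) else ⊤

/-- The large-deviation principle with speed `n` for the laws `μ n` of a
sequence of random variables with values in a topological space `X`, with rate
functional `J`: good rate functional, lower bound on open sets, upper bound on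
closed sets. -/
def IsLDP {X : Type*} [TopologicalSpace X] [MeasurableSpace X]
    (μ : ℕ → Measure X) (J : X → ℝ≥0∞) : Prop :=
  ((∃ x, J x ≠ ⊤) ∧ ∀ c : ℝ≥0∞, c ≠ ⊤ → IsCompact {x | J x ≤ c}) ∧
  (∀ U : Set X, IsOpen U →
    (-(((⨅ x ∈ U, J x) : ℝ≥0∞) : EReal)) ≤
      liminf (fun n : ℕ => (((n : ℝ)⁻¹ : ℝ) : EReal) * ENNReal.log (μ n U)) atTop) ∧
  (∀ C : Set X, IsClosed C →
    limsup (fun n : ℕ => (((n : ℝ)⁻¹ : ℝ) : EReal) * ENNReal.log (μ n C)) atTop ≤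
      (-(((⨅ x ∈ C, J x) : ℝ≥0∞) : EReal)))

/-!
Condition on the first coordinates. For a bounded continuous `F` the logarithmic moment generating
function of `n ∫ F dM_n` is `∑ᵢ Λ_F(xᵢ)` with `Λ_F(a) = log ∫ exp F(a, y) ζᵃ(dy)`, and `Λ_F` is
bounded and continuous, so after division by `n` it converges to `∫ Λ_F dρ⁰`. The rate functional is
the Legendre transform of this limit: the Donsker–Varadhan formula gives `H(q|p)`, and functions
of the first coordinate alone force the first marginal to be `ρ⁰`.

For the upper bound and the compactness of level sets, embed the space in the Hilbert cube, where
probability measures form a compact space. A measure on the compactification that satisfies all the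
dual inequalities has finite entropy relative to the image of `p`, hence lives on the original
space; this replaces exponential tightness and reduces the upper bound to finitely many Chernoff
bounds.

For the lower bound, tilt `ζ` by a bounded continuous `F`. By Chebyshev's inequality the tilted
system obeys the weak law of large numbers, and changing measure back costs `exp (-n H(q|p))` for
`q` the tilted joint law. A general `q = u p` is reached by truncating `u` fibrewise and then
approximating `log u` by bounded continuous functions, with convergence of the entropies.
-/

open ProbabilityTheory InformationTheory
open scoped BoundedContinuousFunction

section KullbackLeibler

theorem relEntNN_eq_klDiv {E : Type*} [MeasurableSpace E] (q p : Measure E)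
    [IsProbabilityMeasure q] [IsProbabilityMeasure p] : relEntNN q p = klDiv q p := by
  simp only [relEntNN, klDiv_def, llr_def, probReal_univ, add_sub_cancel_right]

theorem mul_le_klFun_add_exp_sub_one {g : ℝ} (hg : 0 ≤ g) (t : ℝ) :
    g * t ≤ klFun g + (Real.exp t - 1) := by
  suffices h : klFun g + (Real.exp t - 1) - g * t = Real.exp t * klFun (g / Real.exp t) by
    have := mul_nonneg (Real.exp_pos t).le (klFun_nonneg (div_nonneg hg (Real.exp_pos t).le))
    linarith
  rcases hg.eq_or_lt with rfl | hg
  · simp [klFun_zero]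
  · rw [klFun_apply, klFun_apply, Real.log_div hg.ne' (Real.exp_ne_zero t), Real.log_exp]
    field_simp
    ring

theorem klFun_le_klFun_add {t h : ℝ} (ht : 0 ≤ t) (hh : 0 ≤ h) (hth : t ≤ h + 1) :
    klFun t ≤ klFun h + h + 1 := by
  have hmax : klFun t ≤ max (klFun 0) (klFun (h + 1)) :=
    convexOn_klFun.le_max_of_mem_Icc (mem_Ici.2 le_rfl)
      (mem_Ici.2 (by positivity)) ⟨ht, hth⟩
  have hsucc : klFun (h + 1) ≤ klFun h + h := by
    rcases hh.eq_or_lt with rfl | hpos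
    · simp [klFun_zero, klFun_one]
    · have hlog : Real.log (h + 1) ≤ Real.log h + h⁻¹ := by
        have := Real.log_le_sub_one_of_pos (show 0 < (h + 1) / h by positivity)
        rw [Real.log_div (by positivity) hpos.ne'] at this
        have : (h + 1) / h = 1 + h⁻¹ := by field_simp
        linarith
      have hlog' : Real.log (h + 1) ≤ h := by
        simpa using Real.log_le_sub_one_of_pos (show 0 < h + 1 by positivity)
      have := mul_le_mul_of_nonneg_left hlog hh
      rw [mul_add, mul_inv_cancel₀ hpos.ne'] at this
      rw [klFun_apply, klFun_apply]
      linarith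
  have := klFun_nonneg hh
  rw [klFun_zero] at hmax
  exact hmax.trans (max_le (by linarith) (by linarith))

variable {E : Type*} [MeasurableSpace E]

theorem integral_le_toReal_klDiv_add {p q : Measure E} [IsFiniteMeasure p] [IsFiniteMeasure q]
    (hqp : klDiv q p ≠ ⊤) {F : E → ℝ} (hF : Integrable F q)
    (hexp : Integrable (fun e ↦ Real.exp (F e)) p) :
    ∫ e, F e ∂q ≤ (klDiv q p).toReal + ∫ e, (Real.exp (F e) - 1) ∂p := by
  obtain ⟨hac, hint⟩ := klDiv_ne_top_iff.1 hqp
  have hkl := (integrable_klFun_rnDeriv_iff hac).2 hint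
  have hexp' : Integrable (fun e ↦ Real.exp (F e) - 1) p := hexp.sub (integrable_const 1)
  rw [toReal_klDiv_eq_integral_klFun hac, ← integral_rnDeriv_smul hac,
    ← integral_add hkl hexp']
  exact integral_mono ((integrable_rnDeriv_smul_iff hac).2 hF) (hkl.add hexp') fun e ↦
    mul_le_klFun_add_exp_sub_one ENNReal.toReal_nonneg (F e)

theorem klDiv_withDensity_left (p : Measure E) [IsFiniteMeasure p] {u : E → ℝ≥0∞}
    (hu : Measurable u) [IsFiniteMeasure (p.withDensity u)] :
    klDiv (p.withDensity u) p = ∫⁻ e, ENNReal.ofReal (klFun (u e).toReal) ∂p := by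
  rw [klDiv_eq_lintegral_klFun_of_ac (withDensity_absolutelyContinuous p u)]
  refine lintegral_congr_ae ?_
  filter_upwards [Measure.rnDeriv_withDensity p hu] with e he
  rw [he]

theorem map_withDensity_comp {K : Type*} [MeasurableSpace K] (p : Measure E)
    {ι : E → K} (hι : Measurable ι) {f : K → ℝ≥0∞} (hf : Measurable f) :
    (p.withDensity (f ∘ ι)).map ι = (p.map ι).withDensity f := by
  ext s hs
  rw [Measure.map_apply hι hs, withDensity_apply _ (hι hs), withDensity_apply _ hs,
    setLIntegral_map hs hf hι]
  rfl

theorem exists_map_eq_klDiv_eq {K : Type*} [MeasurableSpace K] {p : Measure E}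
    [IsFiniteMeasure p] {ι : E → K} (hι : Measurable ι) {r : Measure K} [IsFiniteMeasure r]
    (hr : r ≪ p.map ι) :
    ∃ q : Measure E, q.map ι = r ∧ klDiv q p = klDiv r (p.map ι) := by
  have hf := Measure.measurable_rnDeriv r (p.map ι)
  have hmap : (p.withDensity (r.rnDeriv (p.map ι) ∘ ι)).map ι = r := by
    rw [map_withDensity_comp p hι hf, Measure.withDensity_rnDeriv_eq _ _ hr]
  have : IsFiniteMeasure (p.withDensity (r.rnDeriv (p.map ι) ∘ ι)) := by
    have : IsFiniteMeasure ((p.withDensity (r.rnDeriv (p.map ι) ∘ ι)).map ι) := by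
      rw [hmap]; infer_instance
    exact Measure.isFiniteMeasure_of_map hι.aemeasurable
  refine ⟨_, hmap, ?_⟩
  rw [klDiv_withDensity_left p (hf.comp hι), klDiv_eq_lintegral_klFun_of_ac hr,
    lintegral_map (by fun_prop) hι]
  rfl

end KullbackLeibler

section DonskerVaradhan

variable {E : Type*} [MeasurableSpace E]

theorem absolutelyContinuous_of_forall_integral_le {p q : Measure E} [IsFiniteMeasure q] {c : ℝ}
    (h : ∀ F : E → ℝ, Measurable F → (∃ M, ∀ e, |F e| ≤ M) →
      ∫ e, F e ∂q ≤ c + ∫ e, (Real.exp (F e) - 1) ∂p) : q ≪ p := by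
  refine Measure.AbsolutelyContinuous.mk fun A hA hpA ↦ ?_
  by_contra hne
  have hpos : 0 < q.real A := ENNReal.toReal_pos hne (measure_ne_top q A)
  have hle (t : ℝ) : t * q.real A ≤ c := by
    have hbdd : ∀ e, |A.indicator (fun _ ↦ t) e| ≤ |t| := fun e ↦ by
      by_cases he : e ∈ A <;> simp [he]
    have hzero : ∫ e, (Real.exp (A.indicator (fun _ ↦ t) e) - 1) ∂p = 0 := by
      refine integral_eq_zero_of_ae ?_
      filter_upwards [measure_eq_zero_iff_ae_notMem.1 hpA] with e he
      simp [he]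
    have := h _ (measurable_const.indicator hA) ⟨|t|, hbdd⟩
    rwa [hzero, integral_indicator_const t hA, smul_eq_mul, mul_comm, add_zero] at this
  have := hle ((c + 1) / q.real A)
  rw [div_mul_cancel₀ _ hpos.ne'] at this
  linarith

/-- The truncation of `g` to the interval `[e⁻ᴹ, eᴹ]`, whose logarithm is bounded by `M`. -/
def expClamp (M g : ℝ) : ℝ := max (Real.exp (-M)) (min g (Real.exp M))

theorem measurable_expClamp (M : ℝ) : Measurable (expClamp M) := by
  unfold expClamp
  fun_prop

theorem expClamp_pos (M g : ℝ) : 0 < expClamp M g := lt_max_of_lt_left (Real.exp_pos _)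

theorem abs_log_expClamp_le {M : ℝ} (hM : 0 ≤ M) (g : ℝ) : |Real.log (expClamp M g)| ≤ M := by
  have hM' : Real.exp (-M) ≤ Real.exp M := Real.exp_le_exp.2 (by linarith)
  rw [abs_le, Real.le_log_iff_exp_le (expClamp_pos M g), Real.log_le_iff_le_exp (expClamp_pos M g)]
  exact ⟨le_max_left _ _, max_le hM' (min_le_right _ _)⟩

theorem mul_log_expClamp_add_one_sub_nonneg {M : ℝ} (hM : 0 ≤ M) (g : ℝ) :
    0 ≤ g * Real.log (expClamp M g) + 1 - expClamp M g := by
  have hM' : Real.exp (-M) ≤ Real.exp M := Real.exp_le_exp.2 (by linarith)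
  have hcross : 0 ≤ (g - expClamp M g) * Real.log (expClamp M g) := by
    rcases le_total g (Real.exp (-M)) with hlow | hlow
    · rw [expClamp, max_eq_left ((min_le_left _ _).trans hlow), Real.log_exp]
      exact mul_nonneg_of_nonpos_of_nonpos (by linarith) (by linarith)
    rcases le_total (Real.exp M) g with hhigh | hhigh
    · rw [expClamp, min_eq_right hhigh, max_eq_right hM', Real.log_exp]
      exact mul_nonneg (by linarith) hM
    · simp [expClamp, min_eq_left hhigh, max_eq_right hlow]
  have := klFun_nonneg (expClamp_pos M g).le
  rw [klFun_apply] at this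
  linarith

theorem tendsto_mul_log_expClamp {g : ℝ} (hg : 0 ≤ g) :
    Tendsto (fun n : ℕ ↦ g * Real.log (expClamp n g) + 1 - expClamp n g) atTop
      (𝓝 (klFun g)) := by
  have hexp : Tendsto (fun n : ℕ ↦ Real.exp (-(n : ℝ))) atTop (𝓝 0) :=
    Real.tendsto_exp_neg_atTop_nhds_zero.comp tendsto_natCast_atTop_atTop
  have hclamp : Tendsto (fun n : ℕ ↦ expClamp n g) atTop (𝓝 g) := by
    have hmin : Tendsto (fun n : ℕ ↦ min g (Real.exp n)) atTop (𝓝 g) :=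
      tendsto_const_nhds.congr' <| by
        filter_upwards [(Real.tendsto_exp_atTop.comp
          tendsto_natCast_atTop_atTop).eventually_ge_atTop g] with n hn
        exact (min_eq_left hn).symm
    simpa [expClamp, max_eq_right hg] using hexp.max hmin
  rw [show klFun g = g * Real.log g + 1 - g from klFun_apply g]
  rcases hg.eq_or_lt with rfl | hpos
  · simpa using hclamp.const_sub 1
  · exact ((hclamp.log hpos.ne').const_mul g |>.add_const 1).sub hclamp

theorem lintegral_mul_log_expClamp_le {p q : Measure E} [IsFiniteMeasure p] [IsFiniteMeasure q]
    (hqp : q ≪ p) {c M : ℝ} (hM : 0 ≤ M)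
    (h : ∀ F : E → ℝ, Measurable F → (∃ M, ∀ e, |F e| ≤ M) →
      ∫ e, F e ∂q ≤ c + ∫ e, (Real.exp (F e) - 1) ∂p) :
    ∫⁻ e, ENNReal.ofReal ((q.rnDeriv p e).toReal * Real.log (expClamp M (q.rnDeriv p e).toReal) +
      1 - expClamp M (q.rnDeriv p e).toReal) ∂p ≤ ENNReal.ofReal c := by
  set g : E → ℝ := fun e ↦ (q.rnDeriv p e).toReal
  have hclamp : Measurable fun e ↦ expClamp M (g e) :=
    (measurable_expClamp M).comp (Measure.measurable_rnDeriv q p).ennreal_toReal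
  have hlog_le (e : E) : |Real.log (expClamp M (g e))| ≤ M := abs_log_expClamp_le hM _
  have hclamp_int : Integrable (fun e ↦ expClamp M (g e) - 1) p := by
    refine (Integrable.of_bound hclamp.aestronglyMeasurable (Real.exp M) (.of_forall fun e ↦ ?_)
      ).sub (integrable_const 1)
    rw [Real.norm_of_nonneg (expClamp_pos _ _).le,
      ← Real.log_le_iff_le_exp (expClamp_pos _ _)]
    exact (abs_le.1 (hlog_le e)).2
  have hprod_int : Integrable (fun e ↦ g e * Real.log (expClamp M (g e))) p :=
    Measure.integrable_toReal_rnDeriv.mul_bdd (c := M) hclamp.log.aestronglyMeasurable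
      (.of_forall hlog_le)
  have hint : Integrable (fun e ↦ g e * Real.log (expClamp M (g e)) - (expClamp M (g e) - 1)) p :=
    hprod_int.sub hclamp_int
  have hsplit (e : E) : g e * Real.log (expClamp M (g e)) + 1 - expClamp M (g e) =
      g e * Real.log (expClamp M (g e)) - (expClamp M (g e) - 1) := by ring
  have hF := h _ hclamp.log ⟨M, hlog_le⟩
  simp only [Real.exp_log (expClamp_pos _ _)] at hF
  rw [← integral_rnDeriv_smul hqp] at hF
  change ∫⁻ e, ENNReal.ofReal (g e * Real.log (expClamp M (g e)) + 1 - expClamp M (g e)) ∂p ≤ _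
  simp only [hsplit]
  rw [← ofReal_integral_eq_lintegral_ofReal hint (.of_forall fun e ↦
    (mul_log_expClamp_add_one_sub_nonneg hM (g e)).trans_eq (hsplit e)),
    integral_sub hprod_int hclamp_int]
  exact ENNReal.ofReal_le_ofReal (sub_le_iff_le_add.2 hF)

theorem klDiv_le_of_forall_measurable_integral_le {p q : Measure E} [IsFiniteMeasure p]
    [IsFiniteMeasure q] {c : ℝ}
    (h : ∀ F : E → ℝ, Measurable F → (∃ M, ∀ e, |F e| ≤ M) →
      ∫ e, F e ∂q ≤ c + ∫ e, (Real.exp (F e) - 1) ∂p) :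
    klDiv q p ≤ ENNReal.ofReal c := by
  have hac := absolutelyContinuous_of_forall_integral_le h
  set g : E → ℝ := fun e ↦ (q.rnDeriv p e).toReal
  have hg : Measurable g := (Measure.measurable_rnDeriv q p).ennreal_toReal
  have hclamp (n : ℕ) : Measurable fun e ↦ expClamp n (g e) := (measurable_expClamp n).comp hg
  rw [klDiv_eq_lintegral_klFun_of_ac hac]
  calc ∫⁻ e, ENNReal.ofReal (klFun (g e)) ∂p
      = ∫⁻ e, liminf (fun n : ℕ ↦ ENNReal.ofReal
          (g e * Real.log (expClamp n (g e)) + 1 - expClamp n (g e))) atTop ∂p :=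
        lintegral_congr fun e ↦ ((ENNReal.continuous_ofReal.tendsto _).comp
          (tendsto_mul_log_expClamp ENNReal.toReal_nonneg)).liminf_eq.symm
    _ ≤ liminf (fun n : ℕ ↦ ∫⁻ e, ENNReal.ofReal
          (g e * Real.log (expClamp n (g e)) + 1 - expClamp n (g e)) ∂p) atTop :=
        lintegral_liminf_le fun n ↦ (((hg.mul (hclamp n).log).add_const 1).sub
          (hclamp n)).ennreal_ofReal
    _ ≤ ENNReal.ofReal c := liminf_le_of_le (by isBoundedDefault) fun b hb ↦ by
        obtain ⟨n, hn⟩ := hb.exists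
        exact hn.trans (lintegral_mul_log_expClamp_le hac n.cast_nonneg h)

variable [TopologicalSpace E] [TopologicalSpace.PseudoMetrizableSpace E] [BorelSpace E]

theorem exists_seq_boundedContinuous_tendsto_ae_s16 (m : Measure E) [IsFiniteMeasure m] {F : E → ℝ}
    (hF : Measurable F) {M : ℝ} (hM : ∀ e, |F e| ≤ M) :
    ∃ f : ℕ → E →ᵇ ℝ, (∀ k e, |f k e| ≤ M) ∧
      ∀ᵐ e ∂m, Tendsto (fun k ↦ f k e) atTop (𝓝 (F e)) := by
  let _ := TopologicalSpace.pseudoMetrizableSpacePseudoMetric E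
  have hmem : MemLp F 1 m := .of_bound hF.aestronglyMeasurable M (.of_forall hM)
  choose g hg _ using fun k : ℕ ↦ hmem.exists_boundedContinuous_eLpNorm_sub_le ENNReal.one_ne_top
    (ε := ENNReal.ofReal (1 / ((k : ℝ) + 1))) (by simpa using k.cast_add_one_pos)
  have hlim : Tendsto (fun k : ℕ ↦ ENNReal.ofReal (1 / ((k : ℝ) + 1))) atTop (𝓝 0) := by
    simpa using ENNReal.tendsto_ofReal (tendsto_one_div_add_atTop_nhds_zero_nat (𝕜 := ℝ))
  have hmeas : TendstoInMeasure m (fun k ↦ (g k : E → ℝ)) atTop F :=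
    tendstoInMeasure_of_tendsto_eLpNorm one_ne_zero
      (fun k ↦ (g k).continuous.aestronglyMeasurable) hF.aestronglyMeasurable
      (tendsto_of_tendsto_of_tendsto_of_le_of_le tendsto_const_nhds hlim (fun _ ↦ zero_le)
        fun k ↦ by rw [eLpNorm_sub_comm]; exact hg k)
  obtain ⟨ns, _, hns⟩ := hmeas.exists_seq_tendsto_ae
  have hclamp (k : ℕ) (e : E) : |max (-M) (min (g (ns k) e) M)| ≤ M := by
    have hM0 := (abs_nonneg _).trans (hM e)
    exact abs_le.2 ⟨le_max_left _ _, max_le (by linarith) (min_le_right _ _)⟩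
  refine ⟨fun k ↦ .ofNormedAddCommGroup (fun e ↦ max (-M) (min (g (ns k) e) M)) (by fun_prop) M
    (hclamp k), hclamp, ?_⟩
  filter_upwards [hns] with e he
  have := (tendsto_const_nhds (x := -M)).max (he.min (tendsto_const_nhds (x := M)))
  obtain ⟨hlow, hhigh⟩ := abs_le.1 (hM e)
  rwa [min_eq_left hhigh, max_eq_right hlow] at this

theorem klDiv_le_of_forall_integral_le {p q : Measure E} [IsFiniteMeasure p] [IsFiniteMeasure q]
    {c : ℝ} (h : ∀ F : E →ᵇ ℝ, ∫ e, F e ∂q ≤ c + ∫ e, (Real.exp (F e) - 1) ∂p) :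
    klDiv q p ≤ ENNReal.ofReal c := by
  refine klDiv_le_of_forall_measurable_integral_le fun F hF ⟨M, hM⟩ ↦ ?_
  obtain ⟨f, hfM, hf⟩ := exists_seq_boundedContinuous_tendsto_ae_s16 (p + q) hF hM
  rw [ae_add_measure_iff] at hf
  have hq : Tendsto (fun k ↦ ∫ e, f k e ∂q) atTop (𝓝 (∫ e, F e ∂q)) :=
    tendsto_integral_of_dominated_convergence (fun _ ↦ M)
      (fun k ↦ (f k).continuous.aestronglyMeasurable) (integrable_const _)
      (fun k ↦ .of_forall (hfM k)) hf.2
  have hp : Tendsto (fun k ↦ ∫ e, (Real.exp (f k e) - 1) ∂p) atTop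
      (𝓝 (∫ e, (Real.exp (F e) - 1) ∂p)) := by
    refine tendsto_integral_of_dominated_convergence (fun _ ↦ Real.exp M + 1)
      (fun k ↦ (by fun_prop : Continuous fun e ↦ Real.exp (f k e) - 1).aestronglyMeasurable)
      (integrable_const _) (fun k ↦ .of_forall fun e ↦ ?_) ?_
    · have := Real.exp_le_exp.2 (le_of_abs_le (hfM k e))
      exact (norm_sub_le _ _).trans (by simpa using this)
    · filter_upwards [hf.1] with e he using ((Real.continuous_exp.tendsto _).comp he).sub_const 1
  exact le_of_tendsto_of_tendsto' hq (hp.const_add c) fun k ↦ h (f k)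

end DonskerVaradhan

section NarrowTopology

variable {E : Type*} [TopologicalSpace E] [MeasurableSpace E]

theorem isInducing_probabilityMeasure_map [BorelSpace E] [HasOuterApproxClosed E] {K : Type*}
    [TopologicalSpace K] [TopologicalSpace.PseudoMetrizableSpace K]
    [TopologicalSpace.SeparableSpace K] [MeasurableSpace K] [BorelSpace K]
    {ι : E → K} (hι : IsInducing ι) :
    IsInducing fun q : ProbabilityMeasure E ↦ q.map hι.continuous.measurable.aemeasurable := by
  set T := fun q : ProbabilityMeasure E ↦ q.map (f := ι) hι.continuous.measurable.aemeasurable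
  have hT (r : ProbabilityMeasure E) {G : Set K} (hG : IsOpen G) :
      (T r : Measure K) G = (r : Measure E) (ι ⁻¹' G) :=
    Measure.map_apply hι.continuous.measurable hG.measurableSet
  refine isInducing_iff_nhds.2 fun q ↦ le_antisymm
    (map_le_iff_le_comap.1 (ProbabilityMeasure.continuous_map hι.continuous).continuousAt) ?_
  refine tendsto_id'.1 (tendsto_of_forall_isOpen_le_liminf' fun G hG ↦ ?_)
  obtain ⟨G, hG', rfl⟩ := hι.isOpen_iff.1 hG
  have hle := ProbabilityMeasure.le_liminf_measure_open_of_tendsto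
    (tendsto_comap (f := T) (x := 𝓝 (T q))) hG'
  simpa only [hT _ hG', id] using hle

theorem measurable_integral_boundedContinuousFunction [OpensMeasurableSpace E] (F : E →ᵇ ℝ) :
    Measurable fun q : ProbabilityMeasure E ↦ ∫ e, F e ∂(q : Measure E) := by
  have hcoe : Measurable fun q : ProbabilityMeasure E ↦ (q : Measure E) := measurable_subtype_coe
  simp only [integral_eq_lintegral_pos_part_sub_lintegral_neg_part (F.integrable _)]
  exact (((Measure.measurable_lintegral (by fun_prop)).comp hcoe).ennreal_toReal).sub
    ((Measure.measurable_lintegral (by fun_prop)).comp hcoe).ennreal_toReal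

theorem tendsto_measure_preimage_compl_of_mem_nhds [OpensMeasurableSpace E] {Ω : ℕ → Type*}
    [∀ n, MeasurableSpace (Ω n)] {P : ∀ n, Measure (Ω n)} {Z : ∀ n, Ω n → ProbabilityMeasure E}
    {q : ProbabilityMeasure E}
    (h : ∀ F : E →ᵇ ℝ, ∀ δ > 0, Tendsto (fun n ↦ P n
      {ω | δ ≤ |∫ e, F e ∂(Z n ω : Measure E) - ∫ e, F e ∂(q : Measure E)|}) atTop (𝓝 0))
    {U : Set (ProbabilityMeasure E)} (hU : U ∈ 𝓝 q) :
    Tendsto (fun n ↦ P n (Z n ⁻¹' Uᶜ)) atTop (𝓝 0) := by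
  -- The sets whose complements have asymptotically negligible preimages form a filter.
  let 𝓖 : Filter (ProbabilityMeasure E) :=
    comk (fun s ↦ Tendsto (fun n ↦ P n (Z n ⁻¹' s)) atTop (𝓝 0)) (by simp)
      (fun t ht s hst ↦ tendsto_of_tendsto_of_tendsto_of_le_of_le tendsto_const_nhds ht
        (fun _ ↦ zero_le) fun _ ↦ measure_mono (preimage_mono hst))
      (fun s hs t ht ↦ tendsto_of_tendsto_of_tendsto_of_le_of_le tendsto_const_nhds
        (h := fun n ↦ P n (Z n ⁻¹' s) + P n (Z n ⁻¹' t))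
        (by simpa only [add_zero] using hs.add ht) (fun _ ↦ zero_le) fun _ ↦ measure_union_le _ _)
  suffices h𝓖 : 𝓖 ≤ 𝓝 q from h𝓖 hU
  refine tendsto_id'.1 (ProbabilityMeasure.tendsto_iff_forall_integral_tendsto.2 fun F ↦
    Metric.tendsto_nhds.2 fun δ hδ ↦ ?_)
  simpa [𝓖, Filter.Eventually, mem_comk, compl_ofPred, Real.dist_eq] using h F δ hδ

end NarrowTopology

section ContinuousKernel

variable {X Y : Type*} [TopologicalSpace X] [MeasurableSpace X] [BorelSpace X]
  [TopologicalSpace Y] [TopologicalSpace.PseudoMetrizableSpace Y] [MeasurableSpace Y] [BorelSpace Y]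

/-- The Markov kernel `a ↦ ζᵃ` given by a narrowly continuous family of probability measures. -/
def continuousKernel (ζ : C(X, ProbabilityMeasure Y)) : Kernel X Y where
  toFun a := ζ a
  measurable' := by
    refine Measurable.measure_of_isPiSystem_of_isProbabilityMeasure
      (borel_eq_generateFrom_isClosed (α := Y) ▸ BorelSpace.measurable_eq) isPiSystem_isClosed
      fun F hF ↦ ?_
    refine measurable_of_tendsto_metrizable
      (f := fun n a ↦ ∫⁻ y, IsClosed.apprSeq hF n y ∂(ζ a : Measure Y)) (fun n ↦ ?_) ?_
    · exact ((ProbabilityMeasure.continuous_lintegral_boundedContinuousFunction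
        (IsClosed.apprSeq hF n)).comp ζ.continuous).measurable
    · exact tendsto_pi_nhds.2 fun a ↦ HasOuterApproxClosed.tendsto_lintegral_apprSeq hF _

theorem continuousKernel_apply (ζ : C(X, ProbabilityMeasure Y)) (a : X) :
    continuousKernel ζ a = ζ a := rfl

instance (ζ : C(X, ProbabilityMeasure Y)) : IsMarkovKernel (continuousKernel ζ) :=
  ⟨fun a ↦ inferInstanceAs (IsProbabilityMeasure (ζ a : Measure Y))⟩

/-- The law `ρ(da) ζᵃ(dy)` of a pair whose first component has law `ρ` and whose second component
has conditional law `ζᵃ` given that the first is `a`. -/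
def jointLaw (ρ : ProbabilityMeasure X) (ζ : C(X, ProbabilityMeasure Y)) :
    ProbabilityMeasure (X × Y) :=
  ⟨(ρ : Measure X) ⊗ₘ continuousKernel ζ, inferInstance⟩

theorem toMeasure_jointLaw (ρ : ProbabilityMeasure X) (ζ : C(X, ProbabilityMeasure Y)) :
    (jointLaw ρ ζ : Measure (X × Y)) = (ρ : Measure X) ⊗ₘ continuousKernel ζ := rfl

theorem map_fst_jointLaw (ρ : ProbabilityMeasure X) (ζ : C(X, ProbabilityMeasure Y)) :
    (jointLaw ρ ζ : Measure (X × Y)).map Prod.fst = ρ :=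
  Measure.fst_compProd _ _

theorem bind_map_prodMk_eq_jointLaw (ρ : ProbabilityMeasure X) (ζ : C(X, ProbabilityMeasure Y)) :
    (ρ : Measure X).bind (fun a ↦ (ζ a : Measure Y).map (Prod.mk a)) = jointLaw ρ ζ := by
  rw [toMeasure_jointLaw, Measure.compProd_eq_comp_prod]
  congr 1
  funext a
  rw [Kernel.prod_apply, Kernel.id_apply, Measure.dirac_prod, continuousKernel_apply]

theorem integral_jointLaw (ρ : ProbabilityMeasure X) (ζ : C(X, ProbabilityMeasure Y))
    {f : X × Y → ℝ} (hf : Integrable f (jointLaw ρ ζ : Measure (X × Y))) :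
    ∫ e, f e ∂(jointLaw ρ ζ : Measure (X × Y)) =
      ∫ a, ∫ y, f (a, y) ∂(ζ a : Measure Y) ∂(ρ : Measure X) :=
  Measure.integral_compProd hf

theorem integrable_integral_section (ρ : ProbabilityMeasure X) (ζ : C(X, ProbabilityMeasure Y))
    {f : X × Y → ℝ} (hf : Integrable f (jointLaw ρ ζ : Measure (X × Y))) :
    Integrable (fun a ↦ ∫ y, f (a, y) ∂(ζ a : Measure Y)) (ρ : Measure X) :=
  Integrable.integral_compProd (κ := Kernel.const Unit (ρ : Measure X))
    (η := Kernel.prodMkLeft Unit (continuousKernel ζ)) (a := ()) hf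

variable [TopologicalSpace.PseudoMetrizableSpace X] [SecondCountableTopology X]
  [SecondCountableTopology Y]

theorem continuous_integral_section (ζ : C(X, ProbabilityMeasure Y)) (F : X × Y →ᵇ ℝ) :
    Continuous fun a ↦ ∫ y, F (a, y) ∂(ζ a : Measure Y) := by
  have hprod : Continuous fun a ↦ (diracProba a).prod (ζ a) :=
    ProbabilityMeasure.continuous_prod.comp (continuous_diracProba.prodMk ζ.continuous)
  refine ((ProbabilityMeasure.continuous_integral_boundedContinuousFunction F).comp
    hprod).congr fun a ↦ ?_
  rw [Function.comp_apply, ProbabilityMeasure.toMeasure_prod,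
    show ((diracProba a : ProbabilityMeasure X) : Measure X) = Measure.dirac a from rfl,
    Measure.dirac_prod, integral_map (by fun_prop) F.continuous.aestronglyMeasurable]

end ContinuousKernel

section LogMGF

theorem integrable_exp_boundedContinuousFunction {E : Type*} [TopologicalSpace E]
    [MeasurableSpace E] [OpensMeasurableSpace E] (m : Measure E) [IsFiniteMeasure m]
    (F : E →ᵇ ℝ) : Integrable (fun e ↦ Real.exp (F e)) m :=
  .of_bound (by fun_prop : Continuous fun e ↦ Real.exp (F e)).aestronglyMeasurable (Real.exp ‖F‖)
    (.of_forall fun e ↦ by simpa using le_of_abs_le (F.norm_coe_le_norm e))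

theorem abs_log_integral_exp_le {E : Type*} [MeasurableSpace E] {m : Measure E}
    [IsProbabilityMeasure m] {f : E → ℝ} {M : ℝ} (hf : Integrable (fun e ↦ Real.exp (f e)) m)
    (hM : ∀ e, |f e| ≤ M) : |Real.log (∫ e, Real.exp (f e) ∂m)| ≤ M := by
  have hpos : 0 < ∫ e, Real.exp (f e) ∂m := integral_exp_pos hf
  refine abs_le.2 ⟨(Real.le_log_iff_exp_le hpos).2 ?_, (Real.log_le_iff_le_exp hpos).2 ?_⟩
  · simpa using integral_mono (integrable_const (Real.exp (-M))) hf fun e ↦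
      Real.exp_le_exp.2 (abs_le.1 (hM e)).1
  · simpa using integral_mono hf (integrable_const (Real.exp M)) fun e ↦
      Real.exp_le_exp.2 (abs_le.1 (hM e)).2

variable {X Y : Type*} [TopologicalSpace X] [TopologicalSpace Y]

/-- The section `F (a, ·)` of a bounded continuous function on a product. -/
def sectionRight (F : X × Y →ᵇ ℝ) (a : X) : Y →ᵇ ℝ :=
  F.compContinuous ⟨Prod.mk a, by fun_prop⟩

theorem sectionRight_apply (F : X × Y →ᵇ ℝ) (a : X) (y : Y) : sectionRight F a y = F (a, y) := rfl

theorem abs_sectionRight_le (F : X × Y →ᵇ ℝ) (a : X) (y : Y) : |sectionRight F a y| ≤ ‖F‖ :=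
  F.norm_coe_le_norm (a, y)

variable [MeasurableSpace X] [BorelSpace X] [MeasurableSpace Y] [BorelSpace Y]
  [TopologicalSpace.PseudoMetrizableSpace X] [SecondCountableTopology X]
  [TopologicalSpace.PseudoMetrizableSpace Y] [SecondCountableTopology Y]

theorem continuous_integral_exp_section (ζ : C(X, ProbabilityMeasure Y)) (F : X × Y →ᵇ ℝ) :
    Continuous fun a ↦ ∫ y, Real.exp (F (a, y)) ∂(ζ a : Measure Y) :=
  continuous_integral_section ζ (.ofNormedAddCommGroup (fun e ↦ Real.exp (F e)) (by fun_prop)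
    (Real.exp ‖F‖) fun e ↦ by simpa using le_of_abs_le (F.norm_coe_le_norm e))

/-- The conditional logarithmic moment generating function `a ↦ log ∫ exp F(a, y) ζᵃ(dy)`. -/
def logMGF (ζ : C(X, ProbabilityMeasure Y)) (F : X × Y →ᵇ ℝ) : X →ᵇ ℝ :=
  .ofNormedAddCommGroup (fun a ↦ Real.log (∫ y, Real.exp (F (a, y)) ∂(ζ a : Measure Y)))
    ((continuous_integral_exp_section ζ F).log fun a ↦
      (integral_exp_pos (integrable_exp_boundedContinuousFunction _ (sectionRight F a))).ne') ‖F‖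
    fun a ↦ abs_log_integral_exp_le
      (integrable_exp_boundedContinuousFunction _ (sectionRight F a)) (abs_sectionRight_le F a)

theorem logMGF_apply (ζ : C(X, ProbabilityMeasure Y)) (F : X × Y →ᵇ ℝ) (a : X) :
    logMGF ζ F a = Real.log (∫ y, Real.exp (F (a, y)) ∂(ζ a : Measure Y)) := rfl

theorem exp_logMGF (ζ : C(X, ProbabilityMeasure Y)) (F : X × Y →ᵇ ℝ) (a : X) :
    Real.exp (logMGF ζ F a) = ∫ y, Real.exp (F (a, y)) ∂(ζ a : Measure Y) :=
  Real.exp_log (integral_exp_pos (integrable_exp_boundedContinuousFunction _ (sectionRight F a)))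

theorem abs_logMGF_le (ζ : C(X, ProbabilityMeasure Y)) {F : X × Y →ᵇ ℝ} {M : ℝ}
    (hF : ∀ e, |F e| ≤ M) (a : X) : |logMGF ζ F a| ≤ M :=
  abs_log_integral_exp_le (integrable_exp_boundedContinuousFunction _ (sectionRight F a))
    fun y ↦ hF (a, y)

theorem logMGF_comp_fst (ζ : C(X, ProbabilityMeasure Y)) (f : X →ᵇ ℝ) :
    logMGF ζ (f.compContinuous ⟨Prod.fst, continuous_fst⟩) = f := by
  ext a
  simp [logMGF_apply]

theorem integral_logMGF_le (ρ : ProbabilityMeasure X) (ζ : C(X, ProbabilityMeasure Y))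
    (F : X × Y →ᵇ ℝ) : ∫ a, logMGF ζ F a ∂(ρ : Measure X) ≤
      ∫ e, (Real.exp (F e) - 1) ∂(jointLaw ρ ζ : Measure (X × Y)) := by
  have hexp : Integrable (fun e ↦ Real.exp (F e) - 1) (jointLaw ρ ζ : Measure (X × Y)) :=
    (integrable_exp_boundedContinuousFunction _ F).sub (integrable_const 1)
  rw [integral_jointLaw ρ ζ hexp]
  refine integral_mono ((logMGF ζ F).integrable _) (integrable_integral_section ρ ζ hexp) fun a ↦ ?_
  have hF := integrable_exp_boundedContinuousFunction (ζ a : Measure Y) (sectionRight F a)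
  calc logMGF ζ F a ≤ (∫ y, Real.exp (F (a, y)) ∂(ζ a : Measure Y)) - 1 :=
        Real.log_le_sub_one_of_pos (integral_exp_pos hF)
    _ = ∫ y, (Real.exp (F (a, y)) - 1) ∂(ζ a : Measure Y) := by
        simpa [sectionRight_apply] using (integral_sub hF (integrable_const (1 : ℝ))).symm

/-- The logarithm `F(a, y) - log ∫ exp F(a, ·) dζᵃ` of the fibrewise normalised density
proportional to `exp F`. -/
def tiltLogDensity (ζ : C(X, ProbabilityMeasure Y)) (F : X × Y →ᵇ ℝ) : X × Y →ᵇ ℝ :=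
  F - (logMGF ζ F).compContinuous ⟨Prod.fst, continuous_fst⟩

theorem tiltLogDensity_apply (ζ : C(X, ProbabilityMeasure Y)) (F : X × Y →ᵇ ℝ) (e : X × Y) :
    tiltLogDensity ζ F e = F e - logMGF ζ F e.1 := rfl

theorem exp_tiltLogDensity (ζ : C(X, ProbabilityMeasure Y)) (F : X × Y →ᵇ ℝ) (a : X) (y : Y) :
    Real.exp (tiltLogDensity ζ F (a, y)) =
      Real.exp (F (a, y)) / ∫ y, Real.exp (F (a, y)) ∂(ζ a : Measure Y) := by
  rw [tiltLogDensity_apply, Real.exp_sub, exp_logMGF]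

theorem integral_exp_tiltLogDensity_section (ζ : C(X, ProbabilityMeasure Y)) (F : X × Y →ᵇ ℝ)
    (a : X) : ∫ y, Real.exp (tiltLogDensity ζ F (a, y)) ∂(ζ a : Measure Y) = 1 := by
  simp only [exp_tiltLogDensity]
  rw [integral_div, ← exp_logMGF, div_self (Real.exp_pos _).ne']

theorem integral_exp_tiltLogDensity (ρ : ProbabilityMeasure X) (ζ : C(X, ProbabilityMeasure Y))
    (F : X × Y →ᵇ ℝ) :
    ∫ e, Real.exp (tiltLogDensity ζ F e) ∂(jointLaw ρ ζ : Measure (X × Y)) = 1 := by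
  rw [integral_jointLaw ρ ζ (integrable_exp_boundedContinuousFunction _ _)]
  simp only [integral_exp_tiltLogDensity_section, integral_const,
    probReal_univ, smul_eq_mul, mul_one]

theorem integral_tiltLogDensity (ζ : C(X, ProbabilityMeasure Y)) (F : X × Y →ᵇ ℝ)
    (q : ProbabilityMeasure (X × Y)) : ∫ e, tiltLogDensity ζ F e ∂(q : Measure (X × Y)) =
      ∫ e, F e ∂(q : Measure (X × Y)) -
        ∫ a, logMGF ζ F a ∂((q : Measure (X × Y)).map Prod.fst) := by
  rw [integral_map measurable_fst.aemeasurable (logMGF ζ F).continuous.aestronglyMeasurable]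
  exact integral_sub (F.integrable _)
    (((logMGF ζ F).compContinuous ⟨Prod.fst, continuous_fst⟩).integrable _)

end LogMGF

section Tilt

variable {X Y : Type*} [TopologicalSpace X] [TopologicalSpace Y]
  [MeasurableSpace X] [BorelSpace X] [MeasurableSpace Y] [BorelSpace Y]
  [TopologicalSpace.PseudoMetrizableSpace X] [SecondCountableTopology X]
  [TopologicalSpace.PseudoMetrizableSpace Y] [SecondCountableTopology Y]

/-- The family `a ↦ ζᵃ` tilted exponentially by `F (a, ·)`, again narrowly continuous. -/
def tilt (ζ : C(X, ProbabilityMeasure Y)) (F : X × Y →ᵇ ℝ) : C(X, ProbabilityMeasure Y) where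
  toFun a := ⟨(ζ a : Measure Y).tilted fun y ↦ F (a, y), isProbabilityMeasure_tilted
    (integrable_exp_boundedContinuousFunction _ (sectionRight F a))⟩
  continuous_toFun := by
    refine continuous_iff_continuousAt.2 fun a ↦
      ProbabilityMeasure.tendsto_iff_forall_integral_tendsto.2 fun f ↦ ?_
    have hcont := continuous_integral_section ζ (.ofNormedAddCommGroup
      (fun e : X × Y ↦ Real.exp (tiltLogDensity ζ F e) * f e.2) (by fun_prop)
      (Real.exp ‖tiltLogDensity ζ F‖ * ‖f‖) fun e ↦ ?_)
    · simpa [integral_tilted, exp_tiltLogDensity] using hcont.tendsto a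
    · rw [norm_mul, Real.norm_eq_abs, Real.abs_exp]
      gcongr
      exacts [le_of_abs_le ((tiltLogDensity ζ F).norm_coe_le_norm e), f.norm_coe_le_norm e.2]

theorem tilt_apply (ζ : C(X, ProbabilityMeasure Y)) (F : X × Y →ᵇ ℝ) (a : X) :
    (tilt ζ F a : Measure Y) = (ζ a : Measure Y).tilted fun y ↦ F (a, y) := rfl

theorem jointLaw_tilt (ρ : ProbabilityMeasure X) (ζ : C(X, ProbabilityMeasure Y))
    (F : X × Y →ᵇ ℝ) : (jointLaw ρ (tilt ζ F) : Measure (X × Y)) =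
      (jointLaw ρ ζ : Measure (X × Y)).withDensity
        fun e ↦ ENNReal.ofReal (Real.exp (tiltLogDensity ζ F e)) := by
  have hmeas : Measurable (Function.uncurry fun a y ↦
      ENNReal.ofReal (Real.exp (tiltLogDensity ζ F (a, y)))) :=
    (by fun_prop : Measurable fun e ↦ ENNReal.ofReal (Real.exp (tiltLogDensity ζ F e)))
  have hker : continuousKernel (tilt ζ F) = (continuousKernel ζ).withDensity
      fun a y ↦ ENNReal.ofReal (Real.exp (tiltLogDensity ζ F (a, y))) := by
    ext1 a
    rw [Kernel.withDensity_apply _ hmeas, continuousKernel_apply, continuousKernel_apply,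
      tilt_apply]
    simp only [exp_tiltLogDensity, Measure.tilted]
  have : IsMarkovKernel ((continuousKernel ζ).withDensity
      fun a y ↦ ENNReal.ofReal (Real.exp (tiltLogDensity ζ F (a, y)))) :=
    hker ▸ inferInstance
  rw [toMeasure_jointLaw, hker, Measure.compProd_withDensity hmeas, toMeasure_jointLaw]

theorem klDiv_jointLaw_tilt (ρ : ProbabilityMeasure X) (ζ : C(X, ProbabilityMeasure Y))
    (F : X × Y →ᵇ ℝ) :
    klDiv (jointLaw ρ (tilt ζ F) : Measure (X × Y)) (jointLaw ρ ζ) = ENNReal.ofReal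
      (∫ e, F e ∂(jointLaw ρ (tilt ζ F) : Measure (X × Y)) -
        ∫ a, logMGF ζ F a ∂(ρ : Measure X)) := by
  set q := jointLaw ρ (tilt ζ F)
  set p := jointLaw ρ ζ
  have hqp : (q : Measure (X × Y)) = (p : Measure (X × Y)).tilted (tiltLogDensity ζ F) :=
    (jointLaw_tilt ..).trans (by
      simp only [Measure.tilted, p, integral_exp_tiltLogDensity, div_one])
  have hac : (q : Measure (X × Y)) ≪ p := hqp ▸ tilted_absolutelyContinuous _ _
  have hllr : llr q (p : Measure (X × Y)) =ᵐ[(q : Measure (X × Y))] tiltLogDensity ζ F := by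
    have hlog := log_rnDeriv_tilted_left_self (μ := (p : Measure (X × Y)))
      (integrable_exp_boundedContinuousFunction _ (tiltLogDensity ζ F))
    rw [← hqp, integral_exp_tiltLogDensity, Real.log_one] at hlog
    simpa only [sub_zero, llr_def] using hac.ae_eq hlog
  have hint : Integrable (llr q (p : Measure (X × Y))) q :=
    (integrable_congr hllr).2 ((tiltLogDensity ζ F).integrable _)
  rw [← ENNReal.ofReal_toReal (klDiv_ne_top hac hint), toReal_klDiv_of_measure_eq hac (by simp),
    integral_congr_ae hllr, integral_tiltLogDensity, map_fst_jointLaw]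

end Tilt

section Rate

variable {X Y : Type*} [TopologicalSpace X] [TopologicalSpace Y]
  [MeasurableSpace X] [BorelSpace X] [MeasurableSpace Y] [BorelSpace Y]
  [TopologicalSpace.PseudoMetrizableSpace Y]

/-- The rate functional of the quenched large-deviation principle: the relative entropy with
respect to `ρ(da) ζᵃ(dy)` on the laws with first marginal `ρ`, and `∞` elsewhere. -/
def quenchedRate (ρ : ProbabilityMeasure X)
    (ζ : C(X, ProbabilityMeasure Y)) (q : ProbabilityMeasure (X × Y)) : ℝ≥0∞ :=
  if (q : Measure (X × Y)).map Prod.fst = ρ then klDiv q (jointLaw ρ ζ : Measure (X × Y)) else ⊤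

theorem quenchedRate_of_map_fst_eq {ρ : ProbabilityMeasure X} {q : ProbabilityMeasure (X × Y)}
    (hq : (q : Measure (X × Y)).map Prod.fst = ρ) (ζ : C(X, ProbabilityMeasure Y)) :
    quenchedRate ρ ζ q = klDiv q (jointLaw ρ ζ : Measure (X × Y)) :=
  if_pos hq

theorem map_fst_eq_of_quenchedRate_ne_top {ρ : ProbabilityMeasure X}
    {ζ : C(X, ProbabilityMeasure Y)} {q : ProbabilityMeasure (X × Y)}
    (hq : quenchedRate ρ ζ q ≠ ⊤) : (q : Measure (X × Y)).map Prod.fst = ρ :=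
  of_not_not fun h ↦ hq (if_neg h)

theorem quenchedRate_jointLaw (ρ : ProbabilityMeasure X) (ζ : C(X, ProbabilityMeasure Y)) :
    quenchedRate ρ ζ (jointLaw ρ ζ) = 0 := by
  rw [quenchedRate_of_map_fst_eq (map_fst_jointLaw ρ ζ), klDiv_self]

variable [TopologicalSpace.PseudoMetrizableSpace X] [SecondCountableTopology X]
  [SecondCountableTopology Y] {ρ : ProbabilityMeasure X} {ζ : C(X, ProbabilityMeasure Y)} {c : ℝ}

theorem integral_le_add_of_quenchedRate_le {q : ProbabilityMeasure (X × Y)} (hc : 0 ≤ c)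
    (hq : quenchedRate ρ ζ q ≤ ENNReal.ofReal c) (F : X × Y →ᵇ ℝ) :
    ∫ e, F e ∂(q : Measure (X × Y)) ≤ c + ∫ a, logMGF ζ F a ∂(ρ : Measure X) := by
  have hne : quenchedRate ρ ζ q ≠ ⊤ := ne_top_of_le_ne_top ENNReal.ofReal_ne_top hq
  have hfst := map_fst_eq_of_quenchedRate_ne_top hne
  rw [quenchedRate_of_map_fst_eq hfst] at hq hne
  have hexp := integrable_exp_boundedContinuousFunction (jointLaw ρ ζ : Measure (X × Y))
    (tiltLogDensity ζ F)
  have hle := integral_le_toReal_klDiv_add hne ((tiltLogDensity ζ F).integrable _) hexp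
  rw [integral_sub hexp (integrable_const 1), integral_exp_tiltLogDensity,
    integral_tiltLogDensity, hfst] at hle
  have hc' := ENNReal.toReal_le_of_le_ofReal hc hq
  simp only [integral_const, probReal_univ, smul_eq_mul, mul_one, sub_self, add_zero] at hle
  linarith

theorem eq_of_forall_mul_le_add_mul {a b c : ℝ} (h : ∀ t : ℝ, t * a ≤ c + t * b) : a = b := by
  by_contra hne
  have hab : a - b ≠ 0 := sub_ne_zero.2 hne
  have ht := h ((c + 1) / (a - b))
  have hmul : (c + 1) / (a - b) * (a - b) = c + 1 := div_mul_cancel₀ _ hab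
  linarith

variable {K L : Type*} [TopologicalSpace K] [TopologicalSpace.PseudoMetrizableSpace K]
  [MeasurableSpace K] [BorelSpace K] [TopologicalSpace L] [MeasurableSpace L]
  {φ : C(X, K)} {ψ : C(Y, L)} {r : ProbabilityMeasure (K × L)}

theorem map_fst_eq_map_of_forall_integral_le
    (h : ∀ F : K × L →ᵇ ℝ, ∫ e, F e ∂(r : Measure (K × L)) ≤
      c + ∫ a, logMGF ζ (F.compContinuous (φ.prodMap ψ)) a ∂(ρ : Measure X)) :
    (r : Measure (K × L)).map Prod.fst = (ρ : Measure X).map φ := by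
  have : IsProbabilityMeasure ((r : Measure (K × L)).map Prod.fst) :=
    Measure.isProbabilityMeasure_map measurable_fst.aemeasurable
  have : IsProbabilityMeasure ((ρ : Measure X).map φ) :=
    Measure.isProbabilityMeasure_map φ.continuous.measurable.aemeasurable
  refine ext_of_forall_integral_eq_of_IsFiniteMeasure fun f ↦ ?_
  rw [integral_map measurable_fst.aemeasurable f.continuous.aestronglyMeasurable,
    integral_map φ.continuous.measurable.aemeasurable f.continuous.aestronglyMeasurable]
  refine eq_of_forall_mul_le_add_mul (c := c) fun t ↦ ?_
  have hlog : logMGF ζ (((t • f).compContinuous ⟨Prod.fst, continuous_fst⟩).compContinuous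
      (φ.prodMap ψ)) = (t • f).compContinuous φ :=
    logMGF_comp_fst ζ ((t • f).compContinuous φ)
  simpa [hlog, integral_const_mul] using h ((t • f).compContinuous ⟨Prod.fst, continuous_fst⟩)

variable [SecondCountableTopology K] [TopologicalSpace.PseudoMetrizableSpace L]
  [SecondCountableTopology L] [BorelSpace L]

theorem exists_map_eq_quenchedRate_le (hφ : IsInducing φ)
    (h : ∀ F : K × L →ᵇ ℝ, ∫ e, F e ∂(r : Measure (K × L)) ≤
      c + ∫ a, logMGF ζ (F.compContinuous (φ.prodMap ψ)) a ∂(ρ : Measure X)) :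
    ∃ q : ProbabilityMeasure (X × Y),
      q.map (φ.prodMap ψ).continuous.measurable.aemeasurable = r ∧
        quenchedRate ρ ζ q ≤ ENNReal.ofReal c := by
  have hι : Measurable (φ.prodMap ψ) := (φ.prodMap ψ).continuous.measurable
  set p := jointLaw ρ ζ
  have : IsProbabilityMeasure ((p : Measure (X × Y)).map (φ.prodMap ψ)) :=
    Measure.isProbabilityMeasure_map hι.aemeasurable
  have hkl : klDiv (r : Measure (K × L)) ((p : Measure (X × Y)).map (φ.prodMap ψ)) ≤
      ENNReal.ofReal c := klDiv_le_of_forall_integral_le fun F ↦ by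
    rw [integral_map hι.aemeasurable (by fun_prop : Continuous _).aestronglyMeasurable]
    grw [h F, integral_logMGF_le]
    rfl
  obtain ⟨q, hqr, hqp⟩ := exists_map_eq_klDiv_eq hι
    (klDiv_ne_top_iff.1 (ne_top_of_le_ne_top ENNReal.ofReal_ne_top hkl)).1
  obtain ⟨q, rfl⟩ : ∃ q' : ProbabilityMeasure (X × Y), (q' : Measure (X × Y)) = q :=
    have : IsProbabilityMeasure (q.map (φ.prodMap ψ)) := hqr ▸ inferInstance
    ⟨⟨q, Measure.isProbabilityMeasure_of_map (φ.prodMap ψ)⟩, rfl⟩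
  have hφq : ((q : Measure (X × Y)).map Prod.fst).map φ = (ρ : Measure X).map φ := by
    rw [← map_fst_eq_map_of_forall_integral_le h, ← hqr,
      Measure.map_map φ.continuous.measurable measurable_fst, Measure.map_map measurable_fst hι]
    rfl
  have hfst : (q : Measure (X × Y)).map Prod.fst = ρ := congrArg Subtype.val <|
    (isInducing_probabilityMeasure_map hφ).injective
      (a₁ := q.map measurable_fst.aemeasurable) (Subtype.ext hφq)
  exact ⟨q, Subtype.ext hqr, (quenchedRate_of_map_fst_eq hfst ζ).trans_le (hqp.trans_le hkl)⟩

end Rate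

section RateCompactness

variable {X Y : Type*}
  [TopologicalSpace X] [TopologicalSpace.MetrizableSpace X] [SecondCountableTopology X]
  [MeasurableSpace X] [BorelSpace X]
  [TopologicalSpace Y] [TopologicalSpace.MetrizableSpace Y] [SecondCountableTopology Y]
  [MeasurableSpace Y] [BorelSpace Y] {ρ : ProbabilityMeasure X} {ζ : C(X, ProbabilityMeasure Y)}

/-- The Hilbert cube `[0, 1]^ℕ`, in which the level sets of the rate functional are compactified. -/
abbrev HilbertCube := ℕ → unitInterval

theorem exists_isInducing_hilbertCube (X : Type*) [TopologicalSpace X]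
    [TopologicalSpace.MetrizableSpace X] [TopologicalSpace.SeparableSpace X] :
    ∃ φ : C(X, HilbertCube), IsInducing φ :=
  letI := TopologicalSpace.metrizableSpaceMetric X
  let ⟨φ, hφ⟩ := Metric.PiNatEmbed.exists_embedding_to_hilbert_cube (X := X)
  ⟨⟨φ, hφ.continuous⟩, hφ.isInducing⟩

theorem isCompact_quenchedRate_le {c : ℝ≥0∞} (hc : c ≠ ⊤) :
    IsCompact {q | quenchedRate ρ ζ q ≤ c} := by
  lift c to ℝ≥0 using hc
  obtain ⟨φ, hφ⟩ := exists_isInducing_hilbertCube X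
  obtain ⟨ψ, hψ⟩ := exists_isInducing_hilbertCube Y
  have hι : Continuous (φ.prodMap ψ) := (φ.prodMap ψ).continuous
  set T := fun q : ProbabilityMeasure (X × Y) ↦ q.map hι.measurable.aemeasurable
  have hT : IsInducing T := isInducing_probabilityMeasure_map (hφ.prodMap hψ)
  suffices himage : T '' {q | quenchedRate ρ ζ q ≤ c} =
      ⋂ F : HilbertCube × HilbertCube →ᵇ ℝ, {r : ProbabilityMeasure (HilbertCube × HilbertCube) |
        ∫ e, F e ∂(r : Measure (HilbertCube × HilbertCube)) ≤
          c + ∫ a, logMGF ζ (F.compContinuous (φ.prodMap ψ)) a ∂(ρ : Measure X)} by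
    rw [hT.isCompact_iff, himage]
    exact (isClosed_iInter fun F ↦ isClosed_le
      (ProbabilityMeasure.continuous_integral_boundedContinuousFunction F)
      continuous_const).isCompact
  refine Subset.antisymm (image_subset_iff.2 fun q hq ↦ mem_iInter.2 fun F ↦ ?_) fun r hr ↦ ?_
  · rw [mem_ofPred_eq, ProbabilityMeasure.toMeasure_map,
      integral_map hι.measurable.aemeasurable F.continuous.aestronglyMeasurable]
    exact integral_le_add_of_quenchedRate_le c.2 (by simpa using hq)
      (F.compContinuous (φ.prodMap ψ))
  · obtain ⟨q, hq, hle⟩ := exists_map_eq_quenchedRate_le hφ (mem_iInter.1 hr)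
    exact ⟨q, by simpa using hle, hq⟩

/-- The laws on which the exponential Chebyshev bound with test function `F` is better than
`exp (-n d)`. -/
def chernoffSet (ρ : ProbabilityMeasure X) (ζ : C(X, ProbabilityMeasure Y)) (d : ℝ)
    (F : X × Y →ᵇ ℝ) : Set (ProbabilityMeasure (X × Y)) :=
  {q | d + ∫ a, logMGF ζ F a ∂(ρ : Measure X) < ∫ e, F e ∂(q : Measure (X × Y))}

theorem exists_finset_subset_iUnion_chernoffSet {C : Set (ProbabilityMeasure (X × Y))}
    (hC : IsClosed C) {d : ℝ} (hd : ∀ q ∈ C, ENNReal.ofReal d < quenchedRate ρ ζ q) :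
    ∃ t : Finset (X × Y →ᵇ ℝ), C ⊆ ⋃ F ∈ t, chernoffSet ρ ζ d F := by
  obtain ⟨φ, hφ⟩ := exists_isInducing_hilbertCube X
  obtain ⟨ψ, hψ⟩ := exists_isInducing_hilbertCube Y
  have hι : Continuous (φ.prodMap ψ) := (φ.prodMap ψ).continuous
  set T := fun q : ProbabilityMeasure (X × Y) ↦ q.map hι.measurable.aemeasurable
  have hT : IsInducing T := isInducing_probabilityMeasure_map (hφ.prodMap hψ)
  obtain ⟨t, ht⟩ := isClosed_closure.isCompact.elim_finite_subcover (s := closure (T '' C))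
    (fun F : HilbertCube × HilbertCube →ᵇ ℝ ↦
      {r : ProbabilityMeasure (HilbertCube × HilbertCube) |
        d + ∫ a, logMGF ζ (F.compContinuous (φ.prodMap ψ)) a ∂(ρ : Measure X) <
          ∫ e, F e ∂(r : Measure (HilbertCube × HilbertCube))})
    (fun F ↦ isOpen_lt continuous_const
      (ProbabilityMeasure.continuous_integral_boundedContinuousFunction F)) fun r hr ↦ by
      by_contra hcover
      simp only [mem_iUnion, mem_ofPred_eq, not_exists, not_lt] at hcover
      obtain ⟨q, rfl, hle⟩ := exists_map_eq_quenchedRate_le hφ hcover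
      have hq : q ∈ closure C := hT.closure_eq_preimage_closure_image C ▸ hr
      exact (hd q (hC.closure_eq ▸ hq)).not_ge hle
  refine ⟨t.image fun F ↦ F.compContinuous (φ.prodMap ψ), fun q hq ↦ ?_⟩
  obtain ⟨F, hF, hqF⟩ := mem_iUnion₂.1 (ht (subset_closure (mem_image_of_mem T hq)))
  rw [mem_ofPred_eq, ProbabilityMeasure.toMeasure_map,
    integral_map hι.measurable.aemeasurable F.continuous.aestronglyMeasurable] at hqF
  exact mem_iUnion₂.2 ⟨_, Finset.mem_image_of_mem _ hF, hqF⟩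

end RateCompactness

section WeakLaw

theorem measure_pi_le_abs_sum_sub_le {ι : Type*} [Fintype ι] {E : ι → Type*}
    [∀ i, MeasurableSpace (E i)] (m : ∀ i, Measure (E i)) [∀ i, IsProbabilityMeasure (m i)]
    {f : ∀ i, E i → ℝ} (hf : ∀ i, Measurable (f i)) {M : ℝ} (hM : ∀ i z, |f i z| ≤ M) {c : ℝ}
    (hc : 0 < c) : Measure.pi m {y | c ≤ |∑ i, f i (y i) - ∑ i, ∫ z, f i z ∂m i|} ≤
      ENNReal.ofReal (Fintype.card ι * M ^ 2 / c ^ 2) := by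
  have hLp (i : ι) : MemLp (f i) 2 (m i) := .of_bound (hf i).aestronglyMeasurable M
    (.of_forall (hM i))
  have hLp' (i : ι) : MemLp (fun y : ∀ i, E i ↦ f i (y i)) 2 (Measure.pi m) :=
    (hLp i).comp_measurePreserving (measurePreserving_eval m i)
  have hmean : ∫ y, ∑ i, f i (y i) ∂Measure.pi m = ∑ i, ∫ z, f i z ∂m i := by
    rw [integral_finsetSum _ fun i _ ↦ (hLp' i).integrable one_le_two]
    exact Finset.sum_congr rfl fun i _ ↦ integral_comp_eval (hf i).aestronglyMeasurable
  have hvar : Var[∑ i, fun y : ∀ i, E i ↦ f i (y i); Measure.pi m] ≤ Fintype.card ι * M ^ 2 := by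
    rw [variance_sum_pi hLp, ← nsmul_eq_mul]
    refine Finset.sum_le_card_nsmul _ _ _ fun i _ ↦ ?_
    simpa using variance_le_sq_of_bounded (.of_forall fun z ↦ abs_le.1 (hM i z))
      (hf i).aemeasurable
  have hcheb := meas_ge_le_variance_div_sq (memLp_finsetSum' Finset.univ fun i _ ↦ hLp' i) hc
  simp only [Finset.sum_apply, hmean] at hcheb
  grw [hcheb, hvar]

theorem tendsto_ofReal_natCast_mul_div_sq (a b : ℝ) :
    Tendsto (fun n : ℕ ↦ ENNReal.ofReal (n * a / (n * b) ^ 2)) atTop (𝓝 0) := by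
  rw [← ENNReal.ofReal_zero]
  refine ENNReal.tendsto_ofReal ((tendsto_const_div_atTop_nhds_zero_nat (a / b ^ 2)).congr
    fun n ↦ ?_)
  rcases eq_or_ne n 0 with rfl | hn
  · simp
  · field_simp

theorem inv_two_le_measure_of_measure_compl_le {Ω : Type*} [MeasurableSpace Ω] {P : Measure Ω}
    [IsProbabilityMeasure P] {A : Set Ω} (h : P Aᶜ ≤ 2⁻¹) : 2⁻¹ ≤ P A := by
  rw [← ENNReal.one_sub_inv_two, tsub_le_iff_right, ← measure_univ (μ := P)]
  exact (measure_univ_le_add_compl _).trans (by gcongr)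

end WeakLaw

section Tilted

theorem integral_exp_sum_pi {ι : Type*} [Fintype ι] {E : ι → Type*} [∀ i, MeasurableSpace (E i)]
    (m : ∀ i, Measure (E i)) [∀ i, SigmaFinite (m i)] (f : ∀ i, E i → ℝ) :
    ∫ y, Real.exp (∑ i, f i (y i)) ∂Measure.pi m = ∏ i, ∫ z, Real.exp (f i z) ∂m i := by
  simp only [Real.exp_sum]
  exact integral_fintype_prod_eq_prod fun i z ↦ Real.exp (f i z)

theorem pi_tilted {ι : Type*} [Fintype ι] {E : ι → Type*} [∀ i, MeasurableSpace (E i)]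
    (m : ∀ i, Measure (E i)) [∀ i, SigmaFinite (m i)] (f : ∀ i, E i → ℝ) :
    Measure.pi (fun i ↦ (m i).tilted (f i)) =
      (Measure.pi m).tilted fun y ↦ ∑ i, f i (y i) := by
  refine Measure.pi_eq fun s hs ↦ ?_
  simp only [tilted_apply_eq_ofReal_integral' _ (hs _),
    tilted_apply_eq_ofReal_integral' _ (MeasurableSet.univ_pi hs), integral_exp_sum_pi]
  simp only [Measure.restrict_pi_pi, Real.exp_sum, ← Finset.prod_div_distrib]
  rw [integral_fintype_prod_eq_prod fun i z ↦ Real.exp (f i z) / ∫ z, Real.exp (f i z) ∂m i,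
    ENNReal.ofReal_prod_of_nonneg fun i _ ↦ by positivity]

theorem tilted_apply_le {E : Type*} [MeasurableSpace E] {m : Measure E} [SFinite m] {f : E → ℝ}
    {c : ℝ} {A : Set E} (hf : ∀ e ∈ A, f e ≤ c) :
    m.tilted f A ≤ ENNReal.ofReal (Real.exp c / ∫ e, Real.exp (f e) ∂m) * m A := by
  rw [tilted_apply]
  grw [setLIntegral_mono measurable_const fun e he ↦ ENNReal.ofReal_le_ofReal
    (div_le_div_of_nonneg_right (Real.exp_le_exp.2 (hf e he)) (by positivity))]
  simp

end Tilted

section QuenchedLaw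

variable {X Y ι : Type*} [TopologicalSpace X] [MeasurableSpace X] [TopologicalSpace Y]
  [MeasurableSpace Y] [Fintype ι]

/-- The law of independent variables `Yᵢ` with respective laws `ζ^{xᵢ}`. -/
abbrev quenchedLaw [OpensMeasurableSpace Y] (ζ : C(X, ProbabilityMeasure Y)) (x : ι → X) :
    Measure (ι → Y) :=
  Measure.pi fun i ↦ (ζ (x i) : Measure Y)

variable [BorelSpace X] [BorelSpace Y]
  [TopologicalSpace.PseudoMetrizableSpace X] [SecondCountableTopology X]
  [TopologicalSpace.PseudoMetrizableSpace Y] [SecondCountableTopology Y]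

theorem integral_exp_sum_quenchedLaw (ζ : C(X, ProbabilityMeasure Y)) (F : X × Y →ᵇ ℝ)
    (x : ι → X) : ∫ y, Real.exp (∑ i, F (x i, y i)) ∂quenchedLaw ζ x =
      Real.exp (∑ i, logMGF ζ F (x i)) := by
  rw [integral_exp_sum_pi _ fun i z ↦ F (x i, z), Real.exp_sum]
  simp only [exp_logMGF]

theorem quenchedLaw_tilt (ζ : C(X, ProbabilityMeasure Y)) (F : X × Y →ᵇ ℝ) (x : ι → X) :
    quenchedLaw (tilt ζ F) x = (quenchedLaw ζ x).tilted fun y ↦ ∑ i, F (x i, y i) :=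
  pi_tilted _ fun i z ↦ F (x i, z)

theorem quenchedLaw_le_sum_le (ζ : C(X, ProbabilityMeasure Y)) (F : X × Y →ᵇ ℝ) (x : ι → X)
    (a : ℝ) : quenchedLaw ζ x {y | a ≤ ∑ i, F (x i, y i)} ≤
      ENNReal.ofReal (Real.exp (∑ i, logMGF ζ F (x i) - a)) := by
  have hint : Integrable (fun y ↦ Real.exp (1 * ∑ i, F (x i, y i))) (quenchedLaw ζ x) := by
    refine .of_integral_ne_zero ?_
    simp only [one_mul, integral_exp_sum_quenchedLaw, ne_eq, Real.exp_ne_zero, not_false_eq_true]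
  rw [← ofReal_measureReal]
  refine ENNReal.ofReal_le_ofReal ((measure_ge_le_exp_mul_mgf a zero_le_one hint).trans_eq ?_)
  simp only [mgf, one_mul, integral_exp_sum_quenchedLaw, ← Real.exp_add]
  ring_nf

theorem quenchedLaw_tilt_le (ζ : C(X, ProbabilityMeasure Y)) (F : X × Y →ᵇ ℝ) (x : ι → X)
    {A : Set (ι → Y)} {c : ℝ}
    (hc : ∀ y ∈ A, ∑ i, F (x i, y i) ≤ ∑ i, logMGF ζ F (x i) + c) :
    quenchedLaw (tilt ζ F) x A ≤ ENNReal.ofReal (Real.exp c) * quenchedLaw ζ x A := by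
  rw [quenchedLaw_tilt]
  refine (tilted_apply_le hc).trans_eq ?_
  rw [integral_exp_sum_quenchedLaw, ← Real.exp_sub, add_sub_cancel_left]

theorem ofReal_exp_neg_le_quenchedLaw_of_half_le (ζ : C(X, ProbabilityMeasure Y))
    (F : X × Y →ᵇ ℝ) (x : ι → X) {A : Set (ι → Y)} {c d : ℝ}
    (hA : 2⁻¹ ≤ quenchedLaw (tilt ζ F) x A)
    (hc : ∀ y ∈ A, ∑ i, F (x i, y i) ≤ ∑ i, logMGF ζ F (x i) + c)
    (hd : 2 ≤ Real.exp (d - c)) : ENNReal.ofReal (Real.exp (-d)) ≤ quenchedLaw ζ x A := by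
  have hhalf : ENNReal.ofReal 2⁻¹ ≤ ENNReal.ofReal (Real.exp c) * quenchedLaw ζ x A := by
    rw [ENNReal.ofReal_inv_of_pos two_pos, ENNReal.ofReal_ofNat]
    exact hA.trans (quenchedLaw_tilt_le ζ F x hc)
  have hexp : Real.exp (-d) ≤ Real.exp (-c) * 2⁻¹ := by
    rw [show -d = -c + -(d - c) by ring, Real.exp_add, Real.exp_neg (d - c)]
    gcongr
  calc ENNReal.ofReal (Real.exp (-d))
      ≤ ENNReal.ofReal (Real.exp (-c)) * ENNReal.ofReal 2⁻¹ :=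
        (ENNReal.ofReal_le_ofReal hexp).trans_eq (ENNReal.ofReal_mul (Real.exp_nonneg _))
    _ ≤ ENNReal.ofReal (Real.exp (-c)) * (ENNReal.ofReal (Real.exp c) * quenchedLaw ζ x A) := by
        gcongr
    _ = quenchedLaw ζ x A := by
        rw [← mul_assoc, ← ENNReal.ofReal_mul (Real.exp_nonneg _), ← Real.exp_add,
          neg_add_cancel, Real.exp_zero, ENNReal.ofReal_one, one_mul]

end QuenchedLaw

section LargeDeviations

theorem coe_ennreal_lt_coe_iff {m : ℝ≥0∞} {d : ℝ} : (m : EReal) < d ↔ m < ENNReal.ofReal d := by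
  rw [← EReal.coe_ennreal_lt_coe_ennreal_iff, EReal.coe_ennreal_ofReal]
  rcases le_or_gt 0 d with hd | hd
  · rw [max_eq_left hd]
  · have h0 := EReal.coe_ennreal_nonneg m
    rw [max_eq_right hd.le]
    exact iff_of_false (h0.trans_lt' (EReal.coe_neg'.2 hd)).not_gt h0.not_gt

theorem inv_mul_log_ofReal_exp {n : ℕ} (hn : n ≠ 0) (d : ℝ) :
    (((n : ℝ)⁻¹ : ℝ) : EReal) * ENNReal.log (ENNReal.ofReal (Real.exp (-(n * d)))) =
      (-d : ℝ) := by
  rw [ENNReal.log_ofReal_of_pos (Real.exp_pos _), Real.log_exp, ← EReal.coe_mul, mul_neg,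
    inv_mul_cancel_left₀ (Nat.cast_ne_zero.2 hn)]

theorem monotone_inv_mul_log (n : ℕ) :
    Monotone fun m : ℝ≥0∞ ↦ (((n : ℝ)⁻¹ : ℝ) : EReal) * ENNReal.log m := fun _ _ h ↦
  mul_le_mul_of_nonneg_left (ENNReal.log_monotone h) (EReal.coe_nonneg.2 (by positivity))

theorem eventually_le_exp_natCast_mul {ε : ℝ} (hε : 0 < ε) (M : ℝ) :
    ∀ᶠ n : ℕ in atTop, M ≤ Real.exp (n * ε) :=
  (Real.tendsto_exp_atTop.comp
    (tendsto_natCast_atTop_atTop.atTop_mul_const hε)).eventually_ge_atTop M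

variable {S : Type*} [MeasurableSpace S] {μ : ℕ → Measure S}

theorem le_liminf_inv_mul_log {s : Set S} {d : ℝ}
    (h : ∀ᶠ n : ℕ in atTop, ENNReal.ofReal (Real.exp (-(n * d))) ≤ μ n s) :
    ((-d : ℝ) : EReal) ≤
      liminf (fun n : ℕ ↦ (((n : ℝ)⁻¹ : ℝ) : EReal) * ENNReal.log (μ n s)) atTop := by
  refine le_liminf_of_le (by isBoundedDefault) ?_
  filter_upwards [h, eventually_ne_atTop 0] with n hle hn
  exact (inv_mul_log_ofReal_exp hn d).symm.trans_le (monotone_inv_mul_log n hle)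

theorem limsup_inv_mul_log_le {s : Set S} {d : ℝ}
    (h : ∀ᶠ n : ℕ in atTop, μ n s ≤ ENNReal.ofReal (Real.exp (-(n * d)))) :
    limsup (fun n : ℕ ↦ (((n : ℝ)⁻¹ : ℝ) : EReal) * ENNReal.log (μ n s)) atTop ≤
      (-d : ℝ) := by
  refine limsup_le_of_le (by isBoundedDefault) ?_
  filter_upwards [h, eventually_ne_atTop 0] with n hle hn
  exact (monotone_inv_mul_log n hle).trans_eq (inv_mul_log_ofReal_exp hn d)

theorem eventually_measure_le_exp_of_subset_biUnion {ι : Type*} {t : Finset ι} {C : Set S}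
    {s : ι → Set S} (hC : C ⊆ ⋃ i ∈ t, s i) {d d' : ℝ} (hd : d < d')
    (h : ∀ i ∈ t, ∀ᶠ n : ℕ in atTop, μ n (s i) ≤ ENNReal.ofReal (Real.exp (-(n * d')))) :
    ∀ᶠ n : ℕ in atTop, μ n C ≤ ENNReal.ofReal (Real.exp (-(n * d))) := by
  filter_upwards [(eventually_all_finset t).2 h,
    eventually_le_exp_natCast_mul (sub_pos.2 hd) t.card] with n hn hcard
  calc μ n C ≤ ∑ i ∈ t, μ n (s i) := (measure_mono hC).trans (measure_biUnion_finset_le _ _)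
    _ ≤ t.card • ENNReal.ofReal (Real.exp (-(n * d'))) := Finset.sum_le_card_nsmul _ _ _ hn
    _ = ENNReal.ofReal (t.card * Real.exp (-(n * d'))) := by
        rw [nsmul_eq_mul, ENNReal.ofReal_mul (by positivity), ENNReal.ofReal_natCast]
    _ ≤ ENNReal.ofReal (Real.exp (n * (d' - d)) * Real.exp (-(n * d'))) := by gcongr
    _ = ENNReal.ofReal (Real.exp (-(n * d))) := by rw [← Real.exp_add]; ring_nf

variable [TopologicalSpace S]

/-- The large-deviation lower bound with cost `c` at the point `z`: neighbourhoods of `z` have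
`μ n`-mass at least `exp (-n (c + o(1)))`. -/
def LocalLowerBound (μ : ℕ → Measure S) (z : S) (c : ℝ≥0∞) : Prop :=
  ∀ U ∈ 𝓝 z, ∀ d : ℝ, c < ENNReal.ofReal d →
    ∀ᶠ n : ℕ in atTop, ENNReal.ofReal (Real.exp (-(n * d))) ≤ μ n U

theorem LocalLowerBound.of_tendsto {z : S} {c : ℝ≥0∞} {zs : ℕ → S} {cs : ℕ → ℝ≥0∞}
    (h : ∀ k, LocalLowerBound μ (zs k) (cs k)) (hz : Tendsto zs atTop (𝓝 z))
    (hc : Tendsto cs atTop (𝓝 c)) : LocalLowerBound μ z c := fun _ hU d hd ↦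
  let ⟨k, hkU, hkd⟩ :=
    ((hz.eventually (eventually_mem_nhds_iff.2 hU)).and (hc.eventually_lt_const hd)).exists
  h k _ hkU d hkd

theorem isLDP_of_localLowerBound {J : S → ℝ≥0∞} (hfin : ∃ z, J z ≠ ⊤)
    (hcomp : ∀ c : ℝ≥0∞, c ≠ ⊤ → IsCompact {z | J z ≤ c})
    (hlow : ∀ z, J z ≠ ⊤ → LocalLowerBound μ z (J z))
    (hmass : ∀ᶠ n in atTop, μ n univ ≤ 1)
    (hup : ∀ C, IsClosed C → ∀ d : ℝ, ENNReal.ofReal d < ⨅ z ∈ C, J z →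
      ∀ᶠ n : ℕ in atTop, μ n C ≤ ENNReal.ofReal (Real.exp (-(n * d)))) :
    IsLDP μ J := by
  refine ⟨⟨hfin, hcomp⟩, fun U hU ↦ EReal.ge_of_forall_gt_iff_ge.1 fun b hb ↦ ?_,
    fun C hC ↦ EReal.le_of_forall_lt_iff_le.1 fun b hb ↦ ?_⟩
  · rw [EReal.lt_neg_comm, ← EReal.coe_neg, coe_ennreal_lt_coe_iff] at hb
    obtain ⟨z, hzU, hz⟩ := (by simpa [iInf_lt_iff] using hb :
      ∃ z ∈ U, J z < ENNReal.ofReal (-b))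
    simpa using le_liminf_inv_mul_log (hlow z hz.ne_top U (hU.mem_nhds hzU) (-b) hz)
  · rw [← neg_neg b]
    refine limsup_inv_mul_log_le ?_
    rcases le_or_gt 0 b with hb0 | hb0
    · filter_upwards [hmass] with n hn
      refine (measure_mono (subset_univ C)).trans (hn.trans ?_)
      rw [ENNReal.one_le_ofReal, Real.one_le_exp_iff, mul_neg, neg_neg]
      positivity
    · refine hup C hC (-b) ?_
      rwa [← EReal.coe_ennreal_lt_coe_ennreal_iff, EReal.coe_ennreal_ofReal,
        max_eq_left (neg_nonneg.2 hb0.le), EReal.coe_neg, ← EReal.neg_lt_comm]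

end LargeDeviations

section EmpiricalMeasure

theorem integral_smul_sum_dirac {E ι : Type*} [TopologicalSpace E] [MeasurableSpace E]
    [OpensMeasurableSpace E] [Fintype ι] (F : E →ᵇ ℝ) (c : ℝ≥0∞) (z : ι → E) :
    ∫ e, F e ∂(c • ∑ i, Measure.dirac (z i)) = c.toReal * ∑ i, F (z i) := by
  rw [integral_smul_measure, integral_finsetSum_measure fun i _ ↦ F.integrable _]
  simp only [integral_dirac' _ _ F.continuous.stronglyMeasurable, smul_eq_mul]

theorem measurable_smul_sum_dirac {Ω E ι : Type*} [MeasurableSpace Ω] [MeasurableSpace E]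
    [Fintype ι] (c : ℝ≥0∞) {z : ι → Ω → E} (hz : ∀ i, Measurable (z i)) :
    Measurable fun ω ↦ c • ∑ i, Measure.dirac (z i ω) := by
  refine Measure.measurable_of_measurable_coe _ fun s hs ↦ ?_
  simp only [Measure.smul_apply, Measure.finsetSum_apply, smul_eq_mul, Measure.dirac_apply' _ hs]
  fun_prop

variable {X Y : Type*} [MeasurableSpace X] [MeasurableSpace Y]

/-- The array `x` is equidistributed with respect to `ρ`: the empirical measures
`n⁻¹ ∑ᵢ δ_{x n i}` converge narrowly to `ρ`. -/
def IsEquidistributed [TopologicalSpace X] (x : (n : ℕ) → Fin n → X) (ρ : ProbabilityMeasure X) :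
    Prop :=
  ∀ f : X →ᵇ ℝ, Tendsto (fun n : ℕ ↦ (n : ℝ)⁻¹ * ∑ i, f (x n i)) atTop
    (𝓝 (∫ a, f a ∂(ρ : Measure X)))

/-- The map `emp` sends `y` to the pair empirical measure `n⁻¹ ∑ᵢ δ_{(xᵢ, yᵢ)}`. This is a predicate
on `emp` because for `n = 0` the right-hand side is not a probability measure. -/
def IsPairEmpirical {n : ℕ} (x : Fin n → X) (emp : (Fin n → Y) → ProbabilityMeasure (X × Y)) :
    Prop :=
  ∀ y, (emp y : Measure (X × Y)) = (n : ℝ≥0∞)⁻¹ • ∑ i, Measure.dirac (x i, y i)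

variable {n : ℕ} {x : Fin n → X} {emp : (Fin n → Y) → ProbabilityMeasure (X × Y)}

theorem IsPairEmpirical.measurable (hemp : IsPairEmpirical x emp) : Measurable emp := by
  refine Measurable.subtype_mk (f := fun y ↦ (emp y : Measure (X × Y))) ?_
  simp only [hemp _]
  exact measurable_smul_sum_dirac _ fun i ↦ by fun_prop

theorem IsPairEmpirical.integral_eq [TopologicalSpace X] [TopologicalSpace Y]
    [OpensMeasurableSpace (X × Y)] (hemp : IsPairEmpirical x emp) (F : X × Y →ᵇ ℝ)
    (y : Fin n → Y) :
    ∫ e, F e ∂(emp y : Measure (X × Y)) = (n : ℝ)⁻¹ * ∑ i, F (x i, y i) := by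
  rw [hemp y, integral_smul_sum_dirac, ENNReal.toReal_inv, ENNReal.toReal_natCast]

end EmpiricalMeasure

section UpperBound

variable {X Y : Type*}
  [TopologicalSpace X] [TopologicalSpace.MetrizableSpace X] [SecondCountableTopology X]
  [MeasurableSpace X] [BorelSpace X]
  [TopologicalSpace Y] [TopologicalSpace.MetrizableSpace Y] [SecondCountableTopology Y]
  [MeasurableSpace Y] [BorelSpace Y] {ρ : ProbabilityMeasure X}
  {x : (n : ℕ) → Fin n → X} {emp : (n : ℕ) → (Fin n → Y) → ProbabilityMeasure (X × Y)}

theorem eventually_map_quenchedLaw_chernoffSet_le (hx : IsEquidistributed x ρ)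
    (hemp : ∀ n, 1 ≤ n → IsPairEmpirical (x n) (emp n)) (ζ : C(X, ProbabilityMeasure Y))
    {d d' : ℝ} (hd : d < d') (F : X × Y →ᵇ ℝ) :
    ∀ᶠ n : ℕ in atTop, (quenchedLaw ζ (x n)).map (emp n) (chernoffSet ρ ζ d' F) ≤
      ENNReal.ofReal (Real.exp (-(n * d))) := by
  set Λ := ∫ a, logMGF ζ F a ∂(ρ : Measure X)
  filter_upwards [(hx (logMGF ζ F)).eventually_le_const (lt_add_of_pos_right Λ (sub_pos.2 hd)),
    eventually_ge_atTop 1] with n hlog hn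
  have hn0 : (0 : ℝ) < n := Nat.cast_pos.2 hn
  have hmeas : MeasurableSet (chernoffSet ρ ζ d' F) :=
    measurableSet_lt measurable_const (measurable_integral_boundedContinuousFunction F)
  rw [Measure.map_apply (hemp n hn).measurable hmeas]
  refine (measure_mono fun y hy ↦ ?_).trans
    ((quenchedLaw_le_sum_le ζ F (x n) (n * (d' + Λ))).trans ?_)
  · rw [mem_preimage, chernoffSet, mem_ofPred_eq, (hemp n hn).integral_eq, lt_inv_mul_iff₀ hn0]
      at hy
    exact hy.le
  · rw [inv_mul_le_iff₀ hn0] at hlog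
    gcongr
    linarith

theorem eventually_map_quenchedLaw_le_of_isClosed (hx : IsEquidistributed x ρ)
    (hemp : ∀ n, 1 ≤ n → IsPairEmpirical (x n) (emp n)) (ζ : C(X, ProbabilityMeasure Y))
    {C : Set (ProbabilityMeasure (X × Y))} (hC : IsClosed C) {d : ℝ}
    (hd : ENNReal.ofReal d < ⨅ q ∈ C, quenchedRate ρ ζ q) :
    ∀ᶠ n : ℕ in atTop, (quenchedLaw ζ (x n)).map (emp n) C ≤
      ENNReal.ofReal (Real.exp (-(n * d))) := by
  obtain ⟨d', -, hdd', hd'⟩ := ENNReal.lt_iff_exists_real_btwn.1 hd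
  obtain ⟨t, ht⟩ := exists_finset_subset_iUnion_chernoffSet (ρ := ρ) (ζ := ζ) hC
    fun q hq ↦ hd'.trans_le (iInf₂_le q hq)
  obtain ⟨d'', hdd'', hd''⟩ := exists_between (ENNReal.ofReal_mono.reflect_lt hdd')
  exact eventually_measure_le_exp_of_subset_biUnion ht hdd'' fun F _ ↦
    eventually_map_quenchedLaw_chernoffSet_le hx hemp ζ hd'' F

end UpperBound

section TiltedLowerBound

variable {X Y : Type*}
  [TopologicalSpace X] [TopologicalSpace.PseudoMetrizableSpace X] [SecondCountableTopology X]
  [MeasurableSpace X] [BorelSpace X]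
  [TopologicalSpace Y] [TopologicalSpace.PseudoMetrizableSpace Y] [SecondCountableTopology Y]
  [MeasurableSpace Y] [BorelSpace Y] {ρ : ProbabilityMeasure X}
  {x : (n : ℕ) → Fin n → X} {emp : (n : ℕ) → (Fin n → Y) → ProbabilityMeasure (X × Y)}

theorem tendsto_quenchedLaw_le_abs_integral_sub (hx : IsEquidistributed x ρ)
    (hemp : ∀ n, 1 ≤ n → IsPairEmpirical (x n) (emp n)) (ζ : C(X, ProbabilityMeasure Y))
    (F : X × Y →ᵇ ℝ) {δ : ℝ} (hδ : 0 < δ) :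
    Tendsto (fun n ↦ quenchedLaw ζ (x n) {y | δ ≤ |∫ e, F e ∂(emp n y : Measure (X × Y)) -
      ∫ e, F e ∂(jointLaw ρ ζ : Measure (X × Y))|}) atTop (𝓝 0) := by
  let f : X →ᵇ ℝ := .ofNormedAddCommGroup (fun a ↦ ∫ z, F (a, z) ∂(ζ a : Measure Y))
    (continuous_integral_section ζ F) ‖F‖ fun a ↦ by
      simpa using norm_integral_le_of_norm_le_const (μ := (ζ a : Measure Y))
        (.of_forall fun z ↦ F.norm_coe_le_norm (a, z))
  have hmean : ∀ᶠ n : ℕ in atTop, |(n : ℝ)⁻¹ * ∑ i, f (x n i) -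
      ∫ e, F e ∂(jointLaw ρ ζ : Measure (X × Y))| < δ / 2 := by
    rw [integral_jointLaw ρ ζ (F.integrable _)]
    exact (hx f).eventually (Metric.ball_mem_nhds _ (half_pos hδ))
  have hbound : ∀ᶠ n : ℕ in atTop, quenchedLaw ζ (x n)
      {y | δ ≤ |∫ e, F e ∂(emp n y : Measure (X × Y)) -
        ∫ e, F e ∂(jointLaw ρ ζ : Measure (X × Y))|} ≤
      ENNReal.ofReal (n * ‖F‖ ^ 2 / (n * (δ / 2)) ^ 2) := by
    filter_upwards [hmean, eventually_ge_atTop 1] with n hmean hn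
    have hn0 : (0 : ℝ) < n := Nat.cast_pos.2 hn
    have hweak := measure_pi_le_abs_sum_sub_le (fun i ↦ (ζ (x n i) : Measure Y))
      (f := fun i z ↦ F (x n i, z)) (fun i ↦ by fun_prop) (fun i ↦ abs_sectionRight_le F (x n i))
      (c := n * (δ / 2)) (by positivity)
    rw [Fintype.card_fin] at hweak
    refine (measure_mono fun y hy ↦ ?_).trans hweak
    rw [mem_ofPred_eq, (hemp n hn).integral_eq] at hy
    calc n * (δ / 2) ≤ n * |(n : ℝ)⁻¹ * ∑ i, F (x n i, y i) - (n : ℝ)⁻¹ * ∑ i, f (x n i)| := by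
          gcongr
          linarith [abs_sub_le ((n : ℝ)⁻¹ * ∑ i, F (x n i, y i)) ((n : ℝ)⁻¹ * ∑ i, f (x n i))
            (∫ e, F e ∂(jointLaw ρ ζ : Measure (X × Y)))]
      _ = |∑ i, F (x n i, y i) - ∑ i, f (x n i)| := by
          rw [← mul_sub, abs_mul, abs_of_pos (inv_pos.2 hn0), mul_inv_cancel_left₀ hn0.ne']
  exact tendsto_of_tendsto_of_tendsto_of_le_of_le' tendsto_const_nhds
    (tendsto_ofReal_natCast_mul_div_sq _ _) (.of_forall fun _ ↦ zero_le) hbound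

theorem localLowerBound_jointLaw_tilt (hx : IsEquidistributed x ρ)
    (hemp : ∀ n, 1 ≤ n → IsPairEmpirical (x n) (emp n)) (ζ : C(X, ProbabilityMeasure Y))
    (F : X × Y →ᵇ ℝ) : LocalLowerBound (fun n ↦ (quenchedLaw ζ (x n)).map (emp n))
      (jointLaw ρ (tilt ζ F)) (klDiv (jointLaw ρ (tilt ζ F) : Measure (X × Y)) (jointLaw ρ ζ)) := by
  intro U hU d hd
  set q := jointLaw ρ (tilt ζ F)
  set Λ := ∫ a, logMGF ζ F a ∂(ρ : Measure X)
  rw [klDiv_jointLaw_tilt] at hd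
  obtain ⟨d₁, hd₁, hd⟩ := exists_between (ENNReal.ofReal_mono.reflect_lt hd)
  obtain ⟨d₂, hd₂, hd⟩ := exists_between hd
  set V := U ∩ {q' : ProbabilityMeasure (X × Y) | ∫ e, F e ∂(q' : Measure (X × Y)) < d₁ + Λ}
  have hV : V ∈ 𝓝 q := inter_mem hU <|
    (ProbabilityMeasure.continuous_integral_boundedContinuousFunction F).continuousAt.eventually_lt
      continuousAt_const (sub_lt_iff_lt_add.1 hd₁)
  have hlln := tendsto_measure_preimage_compl_of_mem_nhds
    (fun G δ ↦ tendsto_quenchedLaw_le_abs_integral_sub hx hemp (tilt ζ F) G) hV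
  filter_upwards [hlln.eventually_le_const (by simp : (0 : ℝ≥0∞) < 2⁻¹),
    eventually_le_exp_natCast_mul (sub_pos.2 hd) 2,
    (hx (logMGF ζ F)).eventually_const_lt (sub_lt_self Λ (sub_pos.2 hd₂)),
    eventually_ge_atTop 1] with n hcompl hexp hlog hn
  have hn0 : (0 : ℝ) < n := Nat.cast_pos.2 hn
  have hhalf : 2⁻¹ ≤ quenchedLaw (tilt ζ F) (x n) (emp n ⁻¹' V) :=
    inv_two_le_measure_of_measure_compl_le hcompl
  have hlower := ofReal_exp_neg_le_quenchedLaw_of_half_le ζ F (x n) hhalf (c := n * d₂)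
    (fun y hy ↦ by
      have hy₂ := hy.2
      rw [mem_ofPred_eq, (hemp n hn).integral_eq, inv_mul_lt_iff₀ hn0] at hy₂
      rw [lt_inv_mul_iff₀ hn0] at hlog
      linarith) (by rwa [← mul_sub])
  calc ENNReal.ofReal (Real.exp (-(n * d))) ≤ quenchedLaw ζ (x n) (emp n ⁻¹' V) := hlower
    _ ≤ (quenchedLaw ζ (x n)).map (emp n) U :=
        (measure_mono (preimage_mono inter_subset_left)).trans
          (Measure.le_map_apply (hemp n hn).measurable.aemeasurable U)

end TiltedLowerBound

section DensityLimit

variable {E : Type*} [MeasurableSpace E] {p : Measure E} [IsFiniteMeasure p]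
  {us : ℕ → E → ℝ≥0} {u h : E → ℝ≥0}

theorem tendsto_klDiv_withDensity [∀ k, IsFiniteMeasure (p.withDensity fun e ↦ us k e)]
    [IsFiniteMeasure (p.withDensity fun e ↦ u e)] (hus : ∀ k, Measurable (us k))
    (hu : Measurable u) (hle : ∀ k e, us k e ≤ h e + 1) (hh : ∫⁻ e, h e ∂p ≠ ⊤)
    (hkl : ∫⁻ e, ENNReal.ofReal (klFun (h e)) ∂p ≠ ⊤) (hm : Measurable h)
    (hlim : ∀ᵐ e ∂p, Tendsto (fun k ↦ us k e) atTop (𝓝 (u e))) :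
    Tendsto (fun k ↦ klDiv (p.withDensity fun e ↦ us k e) p) atTop
      (𝓝 (klDiv (p.withDensity fun e ↦ u e) p)) := by
  simp only [klDiv_withDensity_left p (hus _).coe_nnreal_ennreal,
    klDiv_withDensity_left p hu.coe_nnreal_ennreal, ENNReal.coe_toReal]
  refine tendsto_lintegral_of_dominated_convergence
    (fun e ↦ ENNReal.ofReal (klFun (h e)) + h e + 1) (fun k ↦ by fun_prop)
    (fun k ↦ .of_forall fun e ↦ ?_) ?_ ?_
  · calc ENNReal.ofReal (klFun (us k e)) ≤ ENNReal.ofReal (klFun (h e) + h e + 1) :=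
          ENNReal.ofReal_le_ofReal
            (klFun_le_klFun_add (us k e).coe_nonneg (h e).coe_nonneg (mod_cast hle k e))
      _ = ENNReal.ofReal (klFun (h e)) + h e + 1 := by
          rw [ENNReal.ofReal_add (add_nonneg (klFun_nonneg (h e).coe_nonneg) (h e).coe_nonneg)
            zero_le_one, ENNReal.ofReal_add (klFun_nonneg (h e).coe_nonneg) (h e).coe_nonneg,
            ENNReal.ofReal_coe_nnreal, ENNReal.ofReal_one]
  · rw [lintegral_add_right _ measurable_const, lintegral_add_right _ (by fun_prop), lintegral_one]
    finiteness
  · filter_upwards [hlim] with e he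
    exact ENNReal.tendsto_ofReal
      (((continuous_klFun.comp NNReal.continuous_coe).tendsto _).comp he)

theorem tendsto_of_toMeasure_eq_withDensity [TopologicalSpace E] [OpensMeasurableSpace E]
    {qs : ℕ → ProbabilityMeasure E} {q : ProbabilityMeasure E}
    (hqs : ∀ k, (qs k : Measure E) = p.withDensity fun e ↦ us k e)
    (hq : (q : Measure E) = p.withDensity fun e ↦ u e) (hus : ∀ k, Measurable (us k))
    (hu : Measurable u) (hle : ∀ k e, us k e ≤ h e + 1) (hh : ∫⁻ e, h e ∂p ≠ ⊤)
    (hlim : ∀ᵐ e ∂p, Tendsto (fun k ↦ us k e) atTop (𝓝 (u e))) : Tendsto qs atTop (𝓝 q) := by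
  refine ProbabilityMeasure.tendsto_iff_forall_lintegral_tendsto.2 fun F ↦ ?_
  have hF : Measurable fun e ↦ (F e : ℝ≥0∞) := by fun_prop
  simp only [hqs, hq, lintegral_withDensity_eq_lintegral_mul p (hus _).coe_nnreal_ennreal hF,
    lintegral_withDensity_eq_lintegral_mul p hu.coe_nnreal_ennreal hF, Pi.mul_apply]
  refine tendsto_lintegral_of_dominated_convergence (fun e ↦ (h e + 1) * nndist F 0)
    (fun k ↦ by fun_prop) (fun k ↦ .of_forall fun e ↦ ?_) ?_ ?_
  · beta_reduce
    exact mod_cast mul_le_mul' (hle k e) (BoundedContinuousFunction.NNReal.upper_bound F e)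
  · rw [lintegral_mul_const' _ _ ENNReal.coe_ne_top, lintegral_add_right _ measurable_const,
      lintegral_one]
    finiteness
  · filter_upwards [hlim] with e he
    exact mod_cast he.mul_const (F e)

theorem LocalLowerBound.of_tendsto_withDensity [TopologicalSpace E] [OpensMeasurableSpace E]
    [MeasurableSpace (ProbabilityMeasure E)]
    {μ : ℕ → Measure (ProbabilityMeasure E)} {qs : ℕ → ProbabilityMeasure E}
    {q : ProbabilityMeasure E} (hlow : ∀ k, LocalLowerBound μ (qs k) (klDiv (qs k : Measure E) p))
    (hqs : ∀ k, (qs k : Measure E) = p.withDensity fun e ↦ us k e)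
    (hq : (q : Measure E) = p.withDensity fun e ↦ u e) (hus : ∀ k, Measurable (us k))
    (hu : Measurable u) (hle : ∀ k e, us k e ≤ h e + 1) (hm : Measurable h)
    (hh : ∫⁻ e, h e ∂p ≠ ⊤) (hkl : ∫⁻ e, ENNReal.ofReal (klFun (h e)) ∂p ≠ ⊤)
    (hlim : ∀ᵐ e ∂p, Tendsto (fun k ↦ us k e) atTop (𝓝 (u e))) :
    LocalLowerBound μ q (klDiv (q : Measure E) p) := by
  have (k : ℕ) : IsFiniteMeasure (p.withDensity fun e ↦ us k e) :=
    hqs k ▸ inferInstanceAs (IsFiniteMeasure (qs k : Measure E))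
  have : IsFiniteMeasure (p.withDensity fun e ↦ u e) :=
    hq ▸ inferInstanceAs (IsFiniteMeasure (q : Measure E))
  refine .of_tendsto hlow (tendsto_of_toMeasure_eq_withDensity hqs hq hus hu hle hh hlim) ?_
  simpa only [hqs, hq] using tendsto_klDiv_withDensity hus hu hle hh hkl hm hlim

end DensityLimit

section TruncatedDensity

variable {E : Type*} [MeasurableSpace E]

/-- A probability density close to `u` but bounded above and away from `0`: `u` is truncated at
height `k`, the mass lost is restored uniformly, and the result is mixed with the density `1` in
proportion `1 / (k + 1)`. -/
def truncDensity (m : Measure E) (u : E → ℝ≥0) (k : ℕ) (e : E) : ℝ≥0 :=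
  (1 - (k + 1 : ℝ≥0)⁻¹) * (min (u e) k + (1 - (∫⁻ z, (min (u z) k : ℝ≥0) ∂m).toNNReal)) +
    (k + 1 : ℝ≥0)⁻¹

theorem inv_le_truncDensity (m : Measure E) (u : E → ℝ≥0) (k : ℕ) (e : E) :
    (k + 1 : ℝ≥0)⁻¹ ≤ truncDensity m u k e :=
  le_add_self

theorem truncDensity_le_min_add_one (m : Measure E) (u : E → ℝ≥0) (k : ℕ) (e : E) :
    truncDensity m u k e ≤ min (u e) k + 1 := by
  set ε := (k + 1 : ℝ≥0)⁻¹
  have hε : ε ≤ 1 := inv_le_one_of_one_le₀ le_add_self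
  calc truncDensity m u k e ≤ (1 - ε) * (min (u e) k + 1) + ε * (min (u e) k + 1) :=
        add_le_add (mul_le_mul_right (add_le_add_right tsub_le_self _) _)
          (le_mul_of_one_le_right' le_add_self)
    _ = min (u e) k + 1 := by rw [← add_mul, tsub_add_cancel_of_le hε, one_mul]

theorem abs_log_truncDensity_le (m : Measure E) (u : E → ℝ≥0) (k : ℕ) (e : E) :
    |Real.log (truncDensity m u k e)| ≤ Real.log (k + 1) := by
  have hk : (0 : ℝ) < k + 1 := by positivity
  have hlow : ((k : ℝ) + 1)⁻¹ ≤ truncDensity m u k e := mod_cast inv_le_truncDensity m u k e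
  have hupp : truncDensity m u k e ≤ k + 1 :=
    (truncDensity_le_min_add_one m u k e).trans (add_le_add_left (min_le_right _ _) 1)
  refine abs_le.2 ⟨?_, Real.log_le_log ((inv_pos.2 hk).trans_le hlow) (mod_cast hupp)⟩
  rw [← Real.log_inv]
  exact Real.log_le_log (inv_pos.2 hk) hlow

theorem lintegral_truncDensity {m : Measure E} [IsProbabilityMeasure m] {u : E → ℝ≥0}
    (hle : ∫⁻ e, u e ∂m ≤ 1) (k : ℕ) :
    ∫⁻ e, truncDensity m u k e ∂m = 1 := by
  set ε := (k + 1 : ℝ≥0)⁻¹ with hεk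
  have hε : ε ≤ 1 := inv_le_one_of_one_le₀ le_add_self
  have hmass : ∫⁻ e, (min (u e) k : ℝ≥0) ∂m ≤ 1 :=
    (lintegral_mono fun e ↦ ENNReal.coe_le_coe.2 (min_le_left _ _)).trans hle
  obtain ⟨c, hc⟩ : ∃ c : ℝ≥0, c = ∫⁻ e, (min (u e) k : ℝ≥0) ∂m :=
    ⟨_, ENNReal.coe_toNNReal (hmass.trans_lt ENNReal.one_lt_top).ne⟩
  have hc1 : c ≤ 1 := by rwa [← hc, ENNReal.coe_le_one_iff] at hmass
  calc ∫⁻ e, truncDensity m u k e ∂m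
      = ∫⁻ e, ((1 - ε : ℝ≥0) * ((min (u e) k : ℝ≥0) + (1 - c : ℝ≥0)) + ε : ℝ≥0∞) ∂m := by
        simp only [truncDensity, ← hc, ← hεk, ENNReal.toNNReal_coe, ENNReal.coe_add,
          ENNReal.coe_mul]
    _ = ((1 - ε) * (c + (1 - c)) + ε : ℝ≥0) := by
        rw [lintegral_add_right _ measurable_const, lintegral_const_mul' _ _ ENNReal.coe_ne_top,
          lintegral_add_right _ measurable_const, ← hc]
        simp
    _ = 1 := by
        rw [add_tsub_cancel_of_le hc1, mul_one, tsub_add_cancel_of_le hε, ENNReal.coe_one]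

theorem tendsto_truncDensity {m : Measure E} {u : E → ℝ≥0} (hu : Measurable u)
    (hone : ∫⁻ e, u e ∂m = 1) (e : E) :
    Tendsto (fun k ↦ truncDensity m u k e) atTop (𝓝 (u e)) := by
  have hmin (z : E) : Tendsto (fun k : ℕ ↦ min (u z) k) atTop (𝓝 (u z)) :=
    tendsto_const_nhds.congr' <| (eventually_ge_atTop ⌈u z⌉₊).mono fun k hk ↦
      (min_eq_left (Nat.ceil_le.1 hk)).symm
  have hmass : Tendsto (fun k : ℕ ↦ (∫⁻ z, (min (u z) k : ℝ≥0) ∂m).toNNReal) atTop (𝓝 1) := by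
    refine (ENNReal.tendsto_toNNReal ENNReal.one_ne_top).comp (hone ▸ ?_)
    exact lintegral_tendsto_of_tendsto_of_monotone (fun k ↦ by fun_prop)
      (.of_forall fun z k l hkl ↦ by dsimp only; gcongr)
      (.of_forall fun z ↦ ENNReal.tendsto_coe.2 (hmin z))
  have hε : Tendsto (fun k : ℕ ↦ (k + 1 : ℝ≥0)⁻¹) atTop (𝓝 0) := by
    simpa using tendsto_one_div_add_atTop_nhds_zero_nat (𝕜 := ℝ≥0)
  simpa [truncDensity] using ((tendsto_const_nhds (x := (1 : ℝ≥0))).sub hε).mul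
    ((hmin e).add ((tendsto_const_nhds (x := (1 : ℝ≥0))).sub hmass)) |>.add hε

end TruncatedDensity

section ConditionalDensity

variable {X Y : Type*} [TopologicalSpace X] [MeasurableSpace X] [BorelSpace X]
  [TopologicalSpace Y] [TopologicalSpace.PseudoMetrizableSpace Y] [MeasurableSpace Y] [BorelSpace Y]
  {ρ : ProbabilityMeasure X} {ζ : C(X, ProbabilityMeasure Y)} {u : X × Y → ℝ≥0}

theorem lintegral_jointLaw (ρ : ProbabilityMeasure X) (ζ : C(X, ProbabilityMeasure Y))
    {f : X × Y → ℝ≥0∞} (hf : Measurable f) : ∫⁻ e, f e ∂(jointLaw ρ ζ : Measure (X × Y)) =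
      ∫⁻ a, ∫⁻ y, f (a, y) ∂(ζ a : Measure Y) ∂(ρ : Measure X) :=
  Measure.lintegral_compProd hf

theorem ae_jointLaw_of_ae_fst (ζ : C(X, ProbabilityMeasure Y)) {P : X → Prop}
    (h : ∀ᵐ a ∂(ρ : Measure X), P a) : ∀ᵐ e ∂(jointLaw ρ ζ : Measure (X × Y)), P e.1 :=
  ae_of_ae_map measurable_fst.aemeasurable (by rwa [map_fst_jointLaw])

theorem measurable_truncDensity_section (hu : Measurable u) (k : ℕ) :
    Measurable fun e : X × Y ↦ truncDensity (ζ e.1 : Measure Y) (fun y ↦ u (e.1, y)) k e.2 := by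
  have hmin : Measurable fun e ↦ min (u e) k := hu.min measurable_const
  have hmass : Measurable fun a ↦ ∫⁻ y, (min (u (a, y)) k : ℝ≥0) ∂(ζ a : Measure Y) :=
    hmin.coe_nnreal_ennreal.lintegral_kernel_prod_right' (κ := continuousKernel ζ)
  have hfst : Measurable (Prod.fst : X × Y → X) := measurable_fst
  have hlost := (hmass.comp hfst).ennreal_toNNReal.const_sub 1
  exact ((hmin.add hlost).const_mul _).add_const _

theorem isProbabilityMeasure_withDensity_jointLaw (hu : Measurable u)
    (hone : ∀ᵐ a ∂(ρ : Measure X), ∫⁻ y, u (a, y) ∂(ζ a : Measure Y) = 1) :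
    IsProbabilityMeasure ((jointLaw ρ ζ : Measure (X × Y)).withDensity fun e ↦ u e) := by
  refine ⟨?_⟩
  rw [withDensity_apply _ .univ, setLIntegral_univ, lintegral_jointLaw ρ ζ hu.coe_nnreal_ennreal,
    lintegral_congr_ae hone, lintegral_one, measure_univ]

theorem ae_lintegral_section_eq_one_of_map_fst_eq (hu : Measurable u)
    (hfst : ((jointLaw ρ ζ : Measure (X × Y)).withDensity fun e ↦ u e).map Prod.fst = ρ) :
    ∀ᵐ a ∂(ρ : Measure X), ∫⁻ y, u (a, y) ∂(ζ a : Measure Y) = 1 := by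
  refine ae_eq_of_forall_setLIntegral_eq_of_sigmaFinite
    (hu.coe_nnreal_ennreal.lintegral_kernel_prod_right' (κ := continuousKernel ζ))
    measurable_const fun s hs _ ↦ ?_
  rw [setLIntegral_one]
  conv_rhs => rw [← hfst, Measure.map_apply measurable_fst hs,
    withDensity_apply _ (measurable_fst hs), ← prod_univ, toMeasure_jointLaw,
    Measure.setLIntegral_compProd hu.coe_nnreal_ennreal hs .univ]
  simp only [Measure.restrict_univ, continuousKernel_apply]

variable [TopologicalSpace.PseudoMetrizableSpace X] [SecondCountableTopology X]
  [SecondCountableTopology Y]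

theorem ae_tendsto_exp_tiltLogDensity {F : ℕ → X × Y →ᵇ ℝ} {L : X × Y → ℝ} {M : ℝ}
    (hM : ∀ k e, |F k e| ≤ M)
    (hF : ∀ᵐ e ∂(jointLaw ρ ζ : Measure (X × Y)), Tendsto (fun k ↦ F k e) atTop (𝓝 (L e)))
    (hone : ∀ᵐ a ∂(ρ : Measure X), ∫ y, Real.exp (L (a, y)) ∂(ζ a : Measure Y) = 1) :
    ∀ᵐ e ∂(jointLaw ρ ζ : Measure (X × Y)),
      Tendsto (fun k ↦ Real.exp (tiltLogDensity ζ (F k) e)) atTop (𝓝 (Real.exp (L e))) := by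
  have hnorm : ∀ᵐ a ∂(ρ : Measure X),
      Tendsto (fun k ↦ ∫ y, Real.exp (F k (a, y)) ∂(ζ a : Measure Y)) atTop (𝓝 1) := by
    filter_upwards [Measure.ae_ae_of_ae_compProd hF, hone] with a ha hone
    rw [← hone]
    refine tendsto_integral_of_dominated_convergence (fun _ ↦ Real.exp M) (fun k ↦ ?_)
      (integrable_const _) (fun k ↦ .of_forall fun y ↦ ?_) ?_
    · exact (integrable_exp_boundedContinuousFunction _ (sectionRight (F k) a)).aestronglyMeasurable
    · simpa using le_of_abs_le (hM k (a, y))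
    · exact ha.mono fun y hy ↦ hy.rexp
  filter_upwards [hF, ae_jointLaw_of_ae_fst ζ hnorm] with ⟨a, y⟩ hF hnorm
  simp only [exp_tiltLogDensity]
  simpa only [div_one, Pi.div_def] using hF.rexp.div hnorm one_ne_zero

end ConditionalDensity

section LowerBound

variable {X Y : Type*}
  [TopologicalSpace X] [TopologicalSpace.PseudoMetrizableSpace X] [SecondCountableTopology X]
  [MeasurableSpace X] [BorelSpace X]
  [TopologicalSpace Y] [TopologicalSpace.PseudoMetrizableSpace Y] [SecondCountableTopology Y]
  [MeasurableSpace Y] [BorelSpace Y] {ρ : ProbabilityMeasure X}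
  {x : (n : ℕ) → Fin n → X} {emp : (n : ℕ) → (Fin n → Y) → ProbabilityMeasure (X × Y)}

theorem localLowerBound_of_abs_log_le (hx : IsEquidistributed x ρ)
    (hemp : ∀ n, 1 ≤ n → IsPairEmpirical (x n) (emp n)) (ζ : C(X, ProbabilityMeasure Y))
    {u : X × Y → ℝ≥0} (hu : Measurable u) (hpos : ∀ e, 0 < u e) {M : ℝ}
    (hM : ∀ e, |Real.log (u e)| ≤ M)
    (hone : ∀ᵐ a ∂(ρ : Measure X), ∫⁻ y, u (a, y) ∂(ζ a : Measure Y) = 1)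
    {q : ProbabilityMeasure (X × Y)}
    (hq : (q : Measure (X × Y)) = (jointLaw ρ ζ : Measure (X × Y)).withDensity fun e ↦ u e) :
    LocalLowerBound (fun n ↦ (quenchedLaw ζ (x n)).map (emp n)) q
      (klDiv (q : Measure (X × Y)) (jointLaw ρ ζ)) := by
  have hexp (e : X × Y) : Real.exp (Real.log (u e)) = u e := Real.exp_log (mod_cast hpos e)
  obtain ⟨F, hFM, hF⟩ := exists_seq_boundedContinuous_tendsto_ae_s16
    (jointLaw ρ ζ : Measure (X × Y)) (F := fun e ↦ Real.log (u e)) (by fun_prop) hM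
  have hone' : ∀ᵐ a ∂(ρ : Measure X),
      ∫ y, Real.exp (Real.log (u (a, y))) ∂(ζ a : Measure Y) = 1 := by
    filter_upwards [hone] with a ha
    have hua : Measurable fun y ↦ u (a, y) := hu.comp measurable_prodMk_left
    simp only [hexp]
    rw [integral_eq_lintegral_of_nonneg_ae (.of_forall fun _ ↦ NNReal.coe_nonneg _)
      hua.coe_nnreal_real.aestronglyMeasurable]
    simp [ha]
  have hbound (k : ℕ) (e : X × Y) : tiltLogDensity ζ (F k) e ≤ 2 * M := by
    rw [tiltLogDensity_apply]
    linarith [(abs_le.1 (hFM k e)).2, (abs_le.1 (abs_logMGF_le ζ (hFM k) e.1)).1]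
  refine .of_tendsto_withDensity (fun k ↦ localLowerBound_jointLaw_tilt hx hemp ζ (F k))
    (us := fun k e ↦ (Real.exp (tiltLogDensity ζ (F k) e)).toNNReal)
    (h := fun _ ↦ (Real.exp (2 * M)).toNNReal) (fun k ↦ jointLaw_tilt ρ ζ (F k)) hq
    (fun k ↦ by fun_prop) hu (fun k e ↦ ?_) measurable_const (by simp) (by simp) ?_
  · exact (Real.toNNReal_mono (Real.exp_le_exp.2 (hbound k e))).trans le_self_add
  · filter_upwards [ae_tendsto_exp_tiltLogDensity hFM hF hone'] with e he
    simpa only [hexp, Real.toNNReal_coe] using tendsto_real_toNNReal he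

theorem localLowerBound_of_eq_withDensity (hx : IsEquidistributed x ρ)
    (hemp : ∀ n, 1 ≤ n → IsPairEmpirical (x n) (emp n)) {ζ : C(X, ProbabilityMeasure Y)}
    {u : X × Y → ℝ≥0} (hu : Measurable u) {q : ProbabilityMeasure (X × Y)}
    (hq : (q : Measure (X × Y)) = (jointLaw ρ ζ : Measure (X × Y)).withDensity fun e ↦ u e)
    (hfst : (q : Measure (X × Y)).map Prod.fst = ρ)
    (hfin : klDiv (q : Measure (X × Y)) (jointLaw ρ ζ) ≠ ⊤) :
    LocalLowerBound (fun n ↦ (quenchedLaw ζ (x n)).map (emp n)) q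
      (klDiv (q : Measure (X × Y)) (jointLaw ρ ζ)) := by
  set p : Measure (X × Y) := (jointLaw ρ ζ : Measure (X × Y))
  have hmass : ∫⁻ e, u e ∂p = 1 := by
    rw [← setLIntegral_univ, ← withDensity_apply _ .univ, ← hq, measure_univ]
  have hkl : ∫⁻ e, ENNReal.ofReal (klFun (u e)) ∂p ≠ ⊤ := by
    have : IsFiniteMeasure (p.withDensity fun e ↦ u e) :=
      hq ▸ inferInstanceAs (IsFiniteMeasure (q : Measure (X × Y)))
    rwa [hq, klDiv_withDensity_left p hu.coe_nnreal_ennreal] at hfin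
  have hone := ae_lintegral_section_eq_one_of_map_fst_eq hu (hq ▸ hfst)
  set us : ℕ → X × Y → ℝ≥0 :=
    fun k e ↦ truncDensity (ζ e.1 : Measure Y) (fun y ↦ u (e.1, y)) k e.2
  have hus (k : ℕ) : Measurable (us k) := measurable_truncDensity_section hu k
  have husone (k : ℕ) : ∀ᵐ a ∂(ρ : Measure X), ∫⁻ y, us k (a, y) ∂(ζ a : Measure Y) = 1 :=
    hone.mono fun a ha ↦ lintegral_truncDensity ha.le k
  refine .of_tendsto_withDensity (us := us) (h := u)
    (qs := fun k ↦ ⟨_, isProbabilityMeasure_withDensity_jointLaw (hus k) (husone k)⟩)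
    (fun k ↦ ?_) (fun k ↦ rfl) hq hus hu (fun k e ↦ ?_) hu (hmass ▸ ENNReal.one_ne_top) hkl ?_
  · exact localLowerBound_of_abs_log_le hx hemp ζ (hus k)
      (fun e ↦ (by positivity : (0 : ℝ≥0) < (k + 1 : ℝ≥0)⁻¹).trans_le (inv_le_truncDensity ..))
      (fun e ↦ abs_log_truncDensity_le ..) (husone k) rfl
  · exact (truncDensity_le_min_add_one ..).trans (add_le_add_left (min_le_left _ _) 1)
  · filter_upwards [ae_jointLaw_of_ae_fst ζ hone] with e he
    exact tendsto_truncDensity (hu.comp measurable_prodMk_left) he e.2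

theorem localLowerBound_quenchedRate (hx : IsEquidistributed x ρ)
    (hemp : ∀ n, 1 ≤ n → IsPairEmpirical (x n) (emp n)) {ζ : C(X, ProbabilityMeasure Y)}
    {q : ProbabilityMeasure (X × Y)} (hfin : quenchedRate ρ ζ q ≠ ⊤) :
    LocalLowerBound (fun n ↦ (quenchedLaw ζ (x n)).map (emp n)) q (quenchedRate ρ ζ q) := by
  have hfst := map_fst_eq_of_quenchedRate_ne_top hfin
  rw [quenchedRate_of_map_fst_eq hfst] at hfin ⊢
  set p : Measure (X × Y) := (jointLaw ρ ζ : Measure (X × Y))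
  refine localLowerBound_of_eq_withDensity hx hemp
    (u := fun e ↦ ((q : Measure (X × Y)).rnDeriv p e).toNNReal)
    (Measure.measurable_rnDeriv _ _).ennreal_toNNReal ?_ hfst hfin
  conv_lhs => rw [← Measure.withDensity_rnDeriv_eq _ _ (klDiv_ne_top_iff.1 hfin).1]
  exact withDensity_congr_ae <| (Measure.rnDeriv_lt_top (q : Measure (X × Y)) p).mono
    fun e he ↦ (ENNReal.coe_toNNReal he.ne).symm

end LowerBound

theorem stmt16_general {X Y : Type*}
    [TopologicalSpace X] [TopologicalSpace.MetrizableSpace X] [SecondCountableTopology X]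
    [MeasurableSpace X] [BorelSpace X]
    [TopologicalSpace Y] [TopologicalSpace.MetrizableSpace Y] [SecondCountableTopology Y]
    [MeasurableSpace Y] [BorelSpace Y]
    (ρ : ProbabilityMeasure X) (x : (n : ℕ) → Fin n → X)
    (hinit : ∀ f : X →ᵇ ℝ,
      Tendsto (fun n : ℕ ↦ ∫ a, f a ∂((n : ℝ≥0∞)⁻¹ • ∑ i : Fin n, Measure.dirac (x n i))) atTop
        (𝓝 (∫ a, f a ∂(ρ : Measure X))))
    (ζ : X → ProbabilityMeasure Y) (hζ : Continuous ζ)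
    (emp : (n : ℕ) → (Fin n → Y) → ProbabilityMeasure (X × Y))
    (hemp : ∀ n : ℕ, 1 ≤ n → ∀ y : Fin n → Y, (emp n y : Measure (X × Y)) =
      (n : ℝ≥0∞)⁻¹ • ∑ i : Fin n, Measure.dirac (x n i, y i))
    (μ : ℕ → Measure (ProbabilityMeasure (X × Y)))
    (hμ : ∀ n : ℕ, μ n = (Measure.pi fun i : Fin n ↦ (ζ (x n i) : Measure Y)).map (emp n))
    (p : Measure (X × Y))
    (hp : p = (ρ : Measure X).bind fun a ↦ (ζ a : Measure Y).map (Prod.mk a)) :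
    IsLDP μ fun q : ProbabilityMeasure (X × Y) ↦
      if (q : Measure (X × Y)).map Prod.fst = (ρ : Measure X)
      then relEntNN (q : Measure (X × Y)) p else ⊤ := by
  let ζ' : C(X, ProbabilityMeasure Y) := ⟨ζ, hζ⟩
  have hx : IsEquidistributed x ρ := fun f ↦ (hinit f).congr fun n ↦ by
    rw [integral_smul_sum_dirac, ENNReal.toReal_inv, ENNReal.toReal_natCast]
  have hμ' : μ = fun n ↦ (quenchedLaw ζ' (x n)).map (emp n) := funext hμ
  have hrate : (fun q : ProbabilityMeasure (X × Y) ↦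
      if (q : Measure (X × Y)).map Prod.fst = ρ then relEntNN (q : Measure (X × Y)) p else ⊤) =
      quenchedRate ρ ζ' := by
    funext q
    rw [hp.trans (bind_map_prodMk_eq_jointLaw ρ ζ'), relEntNN_eq_klDiv, quenchedRate]
  rw [hμ', hrate]
  refine isLDP_of_localLowerBound ⟨jointLaw ρ ζ', by simp [quenchedRate_jointLaw]⟩
    (fun c ↦ isCompact_quenchedRate_le) (fun q ↦ localLowerBound_quenchedRate hx hemp) ?_
    fun C hC d ↦ eventually_map_quenchedLaw_le_of_isClosed hx hemp ζ' hC
  filter_upwards [eventually_ge_atTop 1] with n hn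
  have := Measure.isProbabilityMeasure_map (μ := quenchedLaw ζ' (x n))
    (IsPairEmpirical.measurable (hemp n hn)).aemeasurable
  exact prob_le_one

/-- the quenched large-deviation principle for the pair empirical
measures `M_n = n⁻¹ Σ δ_{(x_i, Y_i)}` of independent particles with
deterministic initial positions `x_i` (whose empirical measures converge
narrowly to `ρ⁰`) and narrowly continuous transition kernel `ζ`, with rate
functional `I(q) = H(q|p)` if `π¹q = ρ⁰` and `+∞` otherwise, where
`p(dx dy) = ρ⁰(dx) ζ^x(dy)`. -/
theorem stmt16 (Ω : Type*) [MetricSpace Ω] [TopologicalSpace.SeparableSpace Ω]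
    [MeasurableSpace Ω] [BorelSpace Ω]
    -- every Borel probability measure on Ω is Radon (inner regular):
    (hRadon : ∀ μ : Measure Ω, IsProbabilityMeasure μ → μ.InnerRegular)
    (ρ0 : ProbabilityMeasure Ω)
    (x : (n : ℕ) → Fin n → Ω)
    -- narrow convergence of the initial empirical measures to ρ⁰:
    (hinit : ∀ f : BoundedContinuousFunction Ω ℝ,
      Tendsto (fun n : ℕ =>
          ∫ a, f a ∂((n : ℝ≥0∞)⁻¹ • ∑ i : Fin n, Measure.dirac (x n i)))
        atTop (𝓝 (∫ a, f a ∂(ρ0 : Measure Ω))))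
    (ζ : Ω → ProbabilityMeasure Ω) (hζ : Continuous ζ)
    -- the pair empirical measure map:
    (emp : (n : ℕ) → (Fin n → Ω) → ProbabilityMeasure (Ω × Ω))
    (hemp : ∀ n : ℕ, 1 ≤ n → ∀ y : Fin n → Ω,
      (emp n y : Measure (Ω × Ω)) =
        (n : ℝ≥0∞)⁻¹ • ∑ i : Fin n, Measure.dirac (x n i, y i))
    -- the law of M_n (the particles Y_i are independent with Y_i ~ ζ^{x_i}):
    (μ : ℕ → Measure (ProbabilityMeasure (Ω × Ω)))
    (hμ : ∀ n : ℕ, μ n =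
      (Measure.pi fun i : Fin n => (ζ (x n i) : Measure Ω)).map (emp n))
    -- the reference measure p(dx dy) = ρ⁰(dx) ζ^x(dy):
    (p : Measure (Ω × Ω))
    (hp : p = (ρ0 : Measure Ω).bind fun a => ((ζ a : Measure Ω)).map (Prod.mk a)) :
    IsLDP μ (fun q : ProbabilityMeasure (Ω × Ω) =>
      if (q : Measure (Ω × Ω)).map Prod.fst = (ρ0 : Measure Ω)
      then relEntNN (q : Measure (Ω × Ω)) p else ⊤) :=
  stmt16_general ρ0 x hinit ζ hζ emp hemp μ hμ p hp

end
end
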